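/- arXiv:1905.06291 — 8 statements merged into one kernel-verified Lean document; each statement's English description precedes it below -/
import Mathlib

section
/- Suppose f : ℝⁿ × ℝᵖ → ℝⁿ is continuously differentiable, ℓₓ-Lipschitz in x and ℓᵤ-Lipschitz in u, and admits a differentiable, ℓ-Lipschitz steady-state map h : ℝᵖ → ℝⁿ with f(h(u),u) = 0 for all u. Assume that for every initial condition x₀ ∈ ℝⁿ and every constant input û ∈ ℝᵖ there is a complete solution of ẋ = f(x,û) with x(0) = x₀, and that there exist K, τ > 0 such that every such solution satisfies ‖x(t) − h(û)‖ ≤ K‖x₀ − h(û)‖e^{−τt} for all t ≥ 0. Then there exist a differentiable function W : ℝⁿ × ℝᵖ → ℝ and constants α, β, γ, ζ > 0 such that for all (x,u): α‖x − h(u)‖² ≤ W(x,u) ≤ β‖x − h(u)‖², ⟨∇ₓW(x,u), f(x,u)⟩ ≤ −γ‖x − h(u)‖², and ‖∇ᵤW(x,u)‖ ≤ ζ‖x − h(u)‖. -/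
open Filter Metric Real
open scoped RealInnerProductSpace Topology NNReal



section Flow
variable {E : Type*} [NormedAddCommGroup E] [NormedSpace ℝ E]

/-- Lipschitz dependence of the flow on the initial condition. -/
lemma flow_lip {F : E → E} {L : ℝ≥0} (hL : LipschitzWith L F) {φ : ℝ → E → E}
    (hφ0 : ∀ z, φ 0 z = z)
    (hφ : ∀ z, ∀ t ≥ (0 : ℝ), HasDerivAt (fun s => φ s z) (F (φ t z)) t)
    {t : ℝ} (ht : 0 ≤ t) (z w : E) :
    ‖φ t z - φ t w‖ ≤ Real.exp (L * t) * ‖z - w‖ := by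
  have := dist_le_of_trajectories_ODE (v := fun _ => F) (K := L) (f := fun s => φ s z)
    (g := fun s => φ s w) (a := 0) (b := t) (δ := ‖z - w‖) (fun _ => hL)
    (fun s hs => (hφ z s hs.1).continuousAt.continuousWithinAt)
    (fun s hs => (hφ z s hs.1).hasDerivWithinAt)
    (fun s hs => (hφ w s hs.1).continuousAt.continuousWithinAt)
    (fun s hs => (hφ w s hs.1).hasDerivWithinAt)
    (by simp [hφ0, dist_eq_norm]) t ⟨ht, le_rfl⟩
  simpa [dist_eq_norm, mul_comm] using this

/-- Uniqueness along the flow. -/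
lemma flow_unique {F : E → E} {L : ℝ≥0} (hL : LipschitzWith L F) {c d : ℝ → E}
    (hc : ∀ t ≥ (0 : ℝ), HasDerivAt c (F (c t)) t)
    (hd : ∀ t ≥ (0 : ℝ), HasDerivAt d (F (d t)) t) (h0 : c 0 = d 0)
    {t : ℝ} (ht : 0 ≤ t) : c t = d t := by
  have := dist_le_of_trajectories_ODE (v := fun _ => F) (K := L) (f := c)
    (g := d) (a := 0) (b := t) (δ := 0) (fun _ => hL)
    (fun s hs => (hc s hs.1).continuousAt.continuousWithinAt)
    (fun s hs => (hc s hs.1).hasDerivWithinAt)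
    (fun s hs => (hd s hs.1).continuousAt.continuousWithinAt)
    (fun s hs => (hd s hs.1).hasDerivWithinAt)
    (by simp [h0]) t ⟨ht, le_rfl⟩
  simpa using this

lemma flow_semigroup {F : E → E} {L : ℝ≥0} (hL : LipschitzWith L F) {φ : ℝ → E → E}
    (hφ0 : ∀ z, φ 0 z = z)
    (hφ : ∀ z, ∀ t ≥ (0 : ℝ), HasDerivAt (fun s => φ s z) (F (φ t z)) t)
    {s t : ℝ} (hs : 0 ≤ s) (ht : 0 ≤ t) (z : E) : φ (t + s) z = φ t (φ s z) := by
  refine flow_unique hL (c := fun r => φ (r + s) z) (d := fun r => φ r (φ s z)) ?_ (hφ _) ?_ ht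
  · intro r hr
    exact (hφ z (r + s) (by positivity)).comp_add_const r s
  · simp [hφ0]

/-- Uniform first-order expansion along a compact set. -/
lemma unif_diff {F : E → E} (hF : ContDiff ℝ 1 F) {C : Set E} (hC : IsCompact C) {η : ℝ}
    (hη : 0 < η) : ∃ δ > 0, ∀ x ∈ C, ∀ y, ‖y - x‖ < δ →
      ‖F y - F x - fderiv ℝ F x (y - x)‖ ≤ η * ‖y - x‖ := by
  have hcont : Continuous (fderiv ℝ F) := hF.continuous_fderiv one_ne_zero
  have h1 := hC.uniformContinuousAt_of_continuousAt (fderiv ℝ F)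
    (fun a _ => hcont.continuousAt) (Metric.dist_mem_uniformity hη)
  obtain ⟨δ, hδ, h2⟩ := Metric.mem_uniformity_dist.1 h1
  refine ⟨δ, hδ, fun x hx y hy => ?_⟩
  refine (convex_ball x δ).norm_image_sub_le_of_norm_fderiv_le' (𝕜 := ℝ)
    (fun w _ => (hF.differentiable one_ne_zero) w) (fun w hw => ?_) (mem_ball_self hδ)
    (by simpa [dist_eq_norm] using hy)
  have := h2 (a := x) (b := w) (by rw [dist_comm]; exact hw) hx
  rw [← dist_eq_norm, dist_comm]
  exact le_of_lt this

lemma flow_diff_small [CompleteSpace E] {F : E → E} {L : ℝ≥0} (hLpos : 0 < L)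
    (hF : ContDiff ℝ 1 F) (hL : LipschitzWith L F) {φ : ℝ → E → E}
    (hφ0 : ∀ z, φ 0 z = z)
    (hφ : ∀ z, ∀ t ≥ (0 : ℝ), HasDerivAt (fun s => φ s z) (F (φ t z)) t)
    {T : ℝ} (hT : 0 ≤ T) (hTL : 2 * L * T ≤ 1) : Differentiable ℝ (φ T) := by
  intro z₀
  have hc : ContinuousOn (fun t => φ t z₀) (Set.Icc 0 T) :=
    fun s hs => (hφ z₀ s hs.1).continuousAt.continuousWithinAt
  have hDF : Continuous (fderiv ℝ F) := hF.continuous_fderiv one_ne_zero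
  have hDFn : ∀ x, ‖fderiv ℝ F x‖ ≤ L := fun x => norm_fderiv_le_of_lipschitz ℝ hL
  have hPL : IsPicardLindelof (fun t (Y : E →L[ℝ] E) => (fderiv ℝ F (φ t z₀)).comp Y)
      (tmin := 0) (tmax := T) ⟨0, le_rfl, hT⟩ (ContinuousLinearMap.id ℝ E) 1 0 (2 * L) L := by
    constructor
    · intro t ht
      refine (LipschitzWith.of_dist_le_mul fun Y Z => ?_).lipschitzOnWith
      rw [dist_eq_norm, dist_eq_norm, ← ContinuousLinearMap.comp_sub]
      refine (ContinuousLinearMap.opNorm_comp_le _ _).trans ?_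
      gcongr
      exact hDFn _
    · intro Y _
      exact (hDF.comp_continuousOn hc).clm_comp continuousOn_const
    · intro t _ Y hY
      have : ‖Y‖ ≤ 2 := by
        have h1 : ‖Y - ContinuousLinearMap.id ℝ E‖ ≤ 1 := by
          simpa [dist_eq_norm] using hY
        have h2 : ‖ContinuousLinearMap.id ℝ E‖ ≤ 1 := ContinuousLinearMap.norm_id_le
        have h3 := norm_le_norm_sub_add Y (ContinuousLinearMap.id ℝ E)
        linarith
      refine (ContinuousLinearMap.opNorm_comp_le _ _).trans ?_
      have := mul_le_mul (hDFn (φ t z₀)) this (norm_nonneg _) L.coe_nonneg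
      push_cast
      linarith
    · simp [hT]
      linarith
  obtain ⟨Y, hY0, hY⟩ := hPL.exists_eq_forall_mem_Icc_hasDerivWithinAt₀
  simp only at hY0
  refine HasFDerivAt.differentiableAt (f' := Y T) ?_
  rw [hasFDerivAt_iff_isLittleO, Asymptotics.isLittleO_iff]
  intro κ hκ
  have hLr : (0 : ℝ) < L := hLpos
  set M : ℝ := Real.exp (L * T) with hM
  have hMpos : 0 < M := Real.exp_pos _
  obtain ⟨η, hη, hηκ⟩ : ∃ η > 0, η * M / L * M ≤ κ := by
    refine ⟨κ * L / (M * M), by positivity, le_of_eq ?_⟩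
    field_simp
  obtain ⟨δ, hδ, hunif⟩ := unif_diff hF (isCompact_Icc.image_of_continuousOn hc) hη
  have hball : ball z₀ (δ / M) ∈ 𝓝 z₀ := ball_mem_nhds _ (by positivity)
  filter_upwards [hball] with z hz
  rw [mem_ball, dist_eq_norm, lt_div_iff₀ hMpos] at hz
  have hlip : ∀ t ∈ Set.Ico 0 T, ‖φ t z - φ t z₀‖ ≤ M * ‖z - z₀‖ := by
    intro t ht
    refine (flow_lip hL hφ0 hφ ht.1 z z₀).trans ?_
    rw [hM]; gcongr
    exact ht.2.le
  have key := norm_le_gronwallBound_of_norm_deriv_right_le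
    (f := fun t => φ t z - φ t z₀ - Y t (z - z₀))
    (f' := fun t => F (φ t z) - F (φ t z₀) - (fderiv ℝ F (φ t z₀)) (Y t (z - z₀)))
    (δ := 0) (K := L) (ε := η * (M * ‖z - z₀‖)) (a := 0) (b := T) ?_ ?_ ?_ ?_ T ⟨hT, le_rfl⟩
  · refine key.trans ?_
    rw [gronwallBound_of_K_ne_0 hLr.ne']
    simp only [zero_mul, zero_add, sub_zero]
    calc η * (M * ‖z - z₀‖) / L * (Real.exp (L * T) - 1)
        ≤ η * (M * ‖z - z₀‖) / L * M := by gcongr; linarith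
      _ = η * M / L * M * ‖z - z₀‖ := by ring
      _ ≤ _ := by gcongr
  · intro s hs
    exact (((hφ z s hs.1).continuousAt.continuousWithinAt).sub (hc s hs)).sub
      ((hY s hs).continuousWithinAt.clm_apply continuousWithinAt_const)
  · intro s hs
    have h1 : HasDerivWithinAt Y ((fderiv ℝ F (φ s z₀)).comp (Y s)) (Set.Ici s) s := by
      refine (hY s ⟨hs.1, hs.2.le⟩).mono_of_mem_nhdsWithin ?_
      refine mem_of_superset (Icc_mem_nhdsGE hs.2) (Set.Icc_subset_Icc_left hs.1)
    have h2 := h1.clm_apply (hasDerivWithinAt_const s (Set.Ici s) (z - z₀))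
    simp only [ContinuousLinearMap.comp_apply, map_zero, add_zero] at h2
    exact (((hφ z s hs.1).hasDerivWithinAt).sub ((hφ z₀ s hs.1).hasDerivWithinAt)).sub h2
  · simp [hφ0, hY0]
  · intro s hs
    have h1 := hunif (φ s z₀) ⟨s, ⟨hs.1, hs.2.le⟩, rfl⟩ (φ s z)
      ((hlip s hs).trans_lt (by linarith))
    have h2 : F (φ s z) - F (φ s z₀) - (fderiv ℝ F (φ s z₀)) (Y s (z - z₀))
      = (fderiv ℝ F (φ s z₀)) (φ s z - φ s z₀ - Y s (z - z₀)) +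
        (F (φ s z) - F (φ s z₀) - (fderiv ℝ F (φ s z₀)) (φ s z - φ s z₀)) := by
      simp only [map_sub]; abel
    rw [h2]
    refine (norm_add_le _ _).trans (add_le_add ?_ ?_)
    · exact (ContinuousLinearMap.le_opNorm _ _).trans (by gcongr; exact hDFn _)
    · exact h1.trans (by gcongr; exact hlip s hs)

lemma flow_diff [CompleteSpace E] {F : E → E} {L : ℝ≥0} (hLpos : 0 < L)
    (hF : ContDiff ℝ 1 F) (hL : LipschitzWith L F) {φ : ℝ → E → E}
    (hφ0 : ∀ z, φ 0 z = z)
    (hφ : ∀ z, ∀ t ≥ (0 : ℝ), HasDerivAt (fun s => φ s z) (F (φ t z)) t)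
    {T : ℝ} (hT : 0 ≤ T) : Differentiable ℝ (φ T) := by
  obtain ⟨k, hk⟩ := exists_nat_ge (2 * L * T)
  have hstep : Differentiable ℝ (φ (T / (k + 1))) := by
    refine flow_diff_small hLpos hF hL hφ0 hφ (by positivity) ?_
    rw [mul_div_assoc', div_le_one (by positivity)]
    linarith
  have hall : ∀ m : ℕ, Differentiable ℝ (φ (m * (T / (k + 1)))) := by
    intro m
    induction m with
    | zero =>
      have : φ ((0 : ℕ) * (T / (k + 1))) = id := by
        funext z; simp [hφ0]
      rw [this]; exact differentiable_id
    | succ m ih =>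
      have : φ ((m + 1 : ℕ) * (T / (k + 1))) = fun z => φ (m * (T / (k + 1))) (φ (T / (k + 1)) z) := by
        funext z
        rw [← flow_semigroup hL hφ0 hφ (by positivity) (by positivity)]
        push_cast; ring_nf
      rw [this]; exact ih.comp hstep
  have := hall (k + 1)
  have h2 : ((k + 1 : ℕ) : ℝ) * (T / (k + 1)) = T := by
    push_cast; field_simp
  rwa [h2] at this

end Flow

section Integral

lemma abs_sq_norm_sub_le {X : Type*} [NormedAddCommGroup X] (a b : X) :
    |‖a‖ ^ 2 - ‖b‖ ^ 2| ≤ ‖a - b‖ * (‖a‖ + ‖b‖) := by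
  have h : ‖a‖ ^ 2 - ‖b‖ ^ 2 = (‖a‖ - ‖b‖) * (‖a‖ + ‖b‖) := by ring
  rw [h, abs_mul, abs_of_nonneg (by positivity : 0 ≤ ‖a‖ + ‖b‖)]
  gcongr
  exact abs_norm_sub_norm_le a b

lemma int_diff {Z X : Type*} [NormedAddCommGroup Z] [NormedSpace ℝ Z] [FiniteDimensional ℝ Z]
    [NormedAddCommGroup X] [InnerProductSpace ℝ X] {a : ℝ → Z → X} {C : ℝ} (hC : 0 ≤ C)
    (hcont : Continuous (Function.uncurry a))
    (hlip : ∀ t z w, ‖a t z - a t w‖ ≤ C * ‖z - w‖)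
    (hdiff : ∀ t, Differentiable ℝ (a t)) (hbdd : ∀ z, ∃ B, ∀ t, ‖a t z‖ ≤ B) (T : ℝ) :
    Differentiable ℝ (fun z => ∫ t in (0 : ℝ)..T, ‖a t z‖ ^ 2) := by
  intro z₀
  borelize Z
  have : ProperSpace Z := FiniteDimensional.proper_real Z
  have hg : Continuous (Function.uncurry fun t z => ‖a t z‖ ^ 2) := hcont.norm.pow 2
  have hgt : ∀ z, Continuous (fun t => ‖a t z‖ ^ 2) := fun z =>
    hg.comp (continuous_id.prodMk continuous_const)
  have hgd : ∀ t, Differentiable ℝ (fun z => ‖a t z‖ ^ 2) := fun t => (hdiff t).norm_sq ℝ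
  obtain ⟨B, hB⟩ := hbdd z₀
  have hB0 : 0 ≤ B := (norm_nonneg _).trans (hB 0)
  refine (intervalIntegral.hasFDerivAt_integral_of_dominated_loc_of_lip (𝕜 := ℝ)
    (F := fun z t => ‖a t z‖ ^ 2) (F' := fun t => fderiv ℝ (fun z => ‖a t z‖ ^ 2) z₀)
    (bound := fun _ => C * (2 * (B + C))) (s := ball z₀ 1)
    (ball_mem_nhds _ one_pos) ?_ ?_ ?_ ?_ ?_ ?_).2.differentiableAt
  · exact Eventually.of_forall fun z => (hgt z).aestronglyMeasurable
  · exact (hgt z₀).intervalIntegrable _ _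
  · have := (measurable_fderiv_with_param ℝ hg).comp
      (measurable_id.prodMk (measurable_const (a := z₀)))
    exact this.aestronglyMeasurable
  · refine Eventually.of_forall fun t _ => ?_
    refine LipschitzOnWith.of_dist_le_mul fun z hz w hw => ?_
    rw [mem_ball, dist_eq_norm] at hz hw
    have hb : ∀ y, ‖y - z₀‖ < 1 → ‖a t y‖ ≤ B + C := by
      intro y hy
      have h1 := hlip t y z₀
      have h2 := norm_le_norm_sub_add (a t y) (a t z₀)
      have h3 := hB t
      have h4 : C * ‖y - z₀‖ ≤ C * 1 := by gcongr
      linarith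
    rw [Real.dist_eq, dist_eq_norm, Real.coe_nnabs,
      abs_of_nonneg (by positivity : 0 ≤ C * (2 * (B + C)))]
    refine (abs_sq_norm_sub_le _ _).trans ?_
    calc _ ≤ (C * ‖z - w‖) * ((B + C) + (B + C)) := by
          gcongr
          · exact hlip t z w
          · exact hb z hz
          · exact hb w hw
      _ = _ := by ring
  · exact intervalIntegrable_const
  · exact Eventually.of_forall fun t _ => (hgd t z₀).hasFDerivAt

end Integral

/-- Converse Lyapunov theorem for an exponentially stable plant `ẋ = f(x,u)`
with steady-state map `h`. -/
theorem stmt0 {n p : ℕ}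
    (f : EuclideanSpace ℝ (Fin n) → EuclideanSpace ℝ (Fin p) → EuclideanSpace ℝ (Fin n))
    (h : EuclideanSpace ℝ (Fin p) → EuclideanSpace ℝ (Fin n))
    (ℓx ℓu ℓ : ℝ≥0) (K τ : ℝ)
    (hℓx : 0 < ℓx) (hℓu : 0 < ℓu) (hℓ : 0 < ℓ) (hK : 0 < K) (hτ : 0 < τ)
    (hf_smooth : ContDiff ℝ 1 (Function.uncurry f))
    (hf_lipx : ∀ u, LipschitzWith ℓx (fun x => f x u))
    (hf_lipu : ∀ x, LipschitzWith ℓu (fun u => f x u))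
    (hh_diff : Differentiable ℝ h)
    (hh_lip : LipschitzWith ℓ h)
    (hsteady : ∀ u, f (h u) u = 0)
    (hexist : ∀ (x₀ : EuclideanSpace ℝ (Fin n)) (uh : EuclideanSpace ℝ (Fin p)),
      ∃ x : ℝ → EuclideanSpace ℝ (Fin n),
        x 0 = x₀ ∧ ∀ t ≥ (0 : ℝ), HasDerivAt x (f (x t) uh) t)
    (hdecay : ∀ (uh : EuclideanSpace ℝ (Fin p)) (x : ℝ → EuclideanSpace ℝ (Fin n)),
      (∀ t ≥ (0 : ℝ), HasDerivAt x (f (x t) uh) t) →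
      ∀ t ≥ (0 : ℝ), ‖x t - h uh‖ ≤ K * ‖x 0 - h uh‖ * Real.exp (-τ * t)) :
    ∃ (W : EuclideanSpace ℝ (Fin n) → EuclideanSpace ℝ (Fin p) → ℝ) (α β γ ζ : ℝ),
      0 < α ∧ 0 < β ∧ 0 < γ ∧ 0 < ζ ∧
      Differentiable ℝ (Function.uncurry W) ∧
      ∀ x u,
        α * ‖x - h u‖ ^ 2 ≤ W x u ∧
        W x u ≤ β * ‖x - h u‖ ^ 2 ∧
        ⟪gradient (fun y => W y u) x, f x u⟫ ≤ -γ * ‖x - h u‖ ^ 2 ∧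
        ‖gradient (fun v => W x v) u‖ ≤ ζ * ‖x - h u‖ := by
  classical
  choose φ hφ0 hφ using hexist
  set L : ℝ≥0 := ℓx + ℓu with hLdef
  have hLpos : 0 < L := by positivity
  -- augmented system
  let F : EuclideanSpace ℝ (Fin n) × EuclideanSpace ℝ (Fin p) →
    EuclideanSpace ℝ (Fin n) × EuclideanSpace ℝ (Fin p) := fun z => (f z.1 z.2, 0)
  let Φ : ℝ → EuclideanSpace ℝ (Fin n) × EuclideanSpace ℝ (Fin p) →
    EuclideanSpace ℝ (Fin n) × EuclideanSpace ℝ (Fin p) := fun t z => (φ z.1 z.2 t, z.2)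
  have hF : ContDiff ℝ 1 F := hf_smooth.prodMk contDiff_const
  have hFL : LipschitzWith L F := by
    refine LipschitzWith.of_dist_le_mul fun z w => ?_
    have h1 : dist (F z) (F w) = dist (f z.1 z.2) (f w.1 w.2) := by
      simp [F, Prod.dist_eq]
    rw [h1]
    have h2 := (hf_lipx z.2).dist_le_mul z.1 w.1
    have h3 := (hf_lipu w.1).dist_le_mul z.2 w.2
    have h4 : dist z.1 w.1 ≤ dist z w := le_max_left _ _
    have h5 : dist z.2 w.2 ≤ dist z w := le_max_right _ _
    have h6 := dist_triangle (f z.1 z.2) (f w.1 z.2) (f w.1 w.2)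
    have h7 : (ℓx : ℝ) * dist z.1 w.1 ≤ ℓx * dist z w := by gcongr
    have h8 : (ℓu : ℝ) * dist z.2 w.2 ≤ ℓu * dist z w := by gcongr
    rw [hLdef]; push_cast
    linarith
  have hΦ0 : ∀ z, Φ 0 z = z := fun z => by simp [Φ, hφ0]
  have hΦ : ∀ z, ∀ t ≥ (0 : ℝ), HasDerivAt (fun s => Φ s z) (F (Φ t z)) t := fun z t ht =>
    (hφ z.1 z.2 t ht).prodMk (hasDerivAt_const t z.2)
  have hsemi : ∀ x u s t, 0 ≤ s → 0 ≤ t → φ x u (t + s) = φ (φ x u s) u t := by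
    intro x u s t hs ht
    exact congrArg Prod.fst (flow_semigroup hFL hΦ0 hΦ hs ht (x, u))
  -- constants
  set t₁ : ℝ := 1 / (2 * ℓx * K) with ht₁
  have ht₁pos : 0 < t₁ := by positivity
  obtain ⟨T, hTt, hTK⟩ : ∃ T, t₁ ≤ T ∧ (K * Real.exp (-τ * T)) ^ 2 ≤ 1 / 2 := by
    have h1 : Tendsto (fun T : ℝ => (K * Real.exp (-τ * T)) ^ 2) atTop (𝓝 ((K * 0) ^ 2)) := by
      refine (Tendsto.const_mul K ?_).pow 2
      refine Real.tendsto_exp_atBot.comp ?_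
      exact tendsto_id.const_mul_atTop_of_neg (by linarith)
    have h2 := h1.eventually (ge_mem_nhds (by norm_num : (K * 0) ^ 2 < (1 / 2 : ℝ)))
    obtain ⟨T, hT1, hT2⟩ := ((eventually_ge_atTop t₁).and h2).exists
    exact ⟨T, hT1, hT2⟩
  have hTpos : 0 < T := ht₁pos.trans_le hTt
  set M : ℝ := Real.exp (L * T) with hM
  have hMpos : 0 < M := Real.exp_pos _
  set C : ℝ := M + ℓ with hC
  have hCpos : 0 < C := by positivity
  -- clamped time
  let cl : ℝ → ℝ := fun t => max 0 (min t T)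
  have hcl0 : ∀ t, 0 ≤ cl t := fun t => le_max_left _ _
  have hclT : ∀ t, cl t ≤ T := fun t => max_le hTpos.le (min_le_right _ _)
  have hcl : ∀ t ∈ Set.Icc 0 T, cl t = t := fun t ht => by
    simp [cl, ht.1, ht.2]
  have hclc : Continuous cl := by fun_prop
  let a : ℝ → EuclideanSpace ℝ (Fin n) × EuclideanSpace ℝ (Fin p) → EuclideanSpace ℝ (Fin n) :=
    fun t z => φ z.1 z.2 (cl t) - h z.2
  have hφc : ∀ x u t, 0 ≤ t → ContinuousAt (φ x u) t := fun x u t ht => (hφ x u t ht).continuousAt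
  have hac : ∀ z, Continuous (fun t => a t z) := by
    intro z
    refine Continuous.sub ?_ continuous_const
    rw [continuous_iff_continuousAt]
    intro t
    exact ContinuousAt.comp (f := cl) (hφc z.1 z.2 (cl t) (hcl0 t)) hclc.continuousAt
  have hadiff : ∀ t, Differentiable ℝ (a t) := by
    intro t
    have h1 : Differentiable ℝ (Φ (cl t)) := flow_diff hLpos hF hFL hΦ0 hΦ (hcl0 t)
    exact h1.fst.sub (hh_diff.comp differentiable_snd)
  have halip : ∀ t z w, ‖a t z - a t w‖ ≤ C * ‖z - w‖ := by
    intro t z w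
    have h1 := flow_lip hFL hΦ0 hΦ (hcl0 t) z w
    have h2 : Real.exp (L * cl t) ≤ M := by
      rw [hM]; gcongr; exact hclT t
    have h3 : ‖φ z.1 z.2 (cl t) - φ w.1 w.2 (cl t)‖ ≤ ‖Φ (cl t) z - Φ (cl t) w‖ :=
      norm_fst_le (Φ (cl t) z - Φ (cl t) w)
    have h4 : ‖h z.2 - h w.2‖ ≤ ℓ * ‖z - w‖ := by
      have h5 := hh_lip.dist_le_mul z.2 w.2
      rw [dist_eq_norm, dist_eq_norm] at h5
      refine h5.trans ?_
      gcongr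
      exact norm_snd_le (z - w)
    have h6 : a t z - a t w = (φ z.1 z.2 (cl t) - φ w.1 w.2 (cl t)) - (h z.2 - h w.2) := by
      simp only [a]; abel
    have h7 : Real.exp (L * cl t) * ‖z - w‖ ≤ M * ‖z - w‖ := by gcongr
    rw [h6, hC, add_mul]
    refine (norm_sub_le _ _).trans ?_
    linarith
  have hajc : Continuous (Function.uncurry a) := by
    refine continuous_prod_of_continuous_lipschitzWith' _ ⟨C, hCpos.le⟩ (fun t => ?_) hac
    refine LipschitzWith.of_dist_le_mul fun z w => ?_
    rw [dist_eq_norm, dist_eq_norm]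
    exact halip t z w
  have hdec : ∀ x u t, 0 ≤ t → ‖φ x u t - h u‖ ≤ K * ‖x - h u‖ * Real.exp (-τ * t) := by
    intro x u t ht
    have := hdecay u (φ x u) (hφ x u) t ht
    rwa [hφ0] at this
  have hdec' : ∀ x u t, 0 ≤ t → ‖φ x u t - h u‖ ≤ K * ‖x - h u‖ := by
    intro x u t ht
    refine (hdec x u t ht).trans (mul_le_of_le_one_right (by positivity) ?_)
    exact Real.exp_le_one_iff.2 (by nlinarith)
  have hab : ∀ z t, ‖a t z‖ ≤ K * ‖z.1 - h z.2‖ := fun z t => hdec' z.1 z.2 _ (hcl0 t)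
  have hWd := int_diff hCpos.le hajc halip hadiff (fun z => ⟨_, hab z⟩) T
  have hgc : ∀ z, Continuous (fun t => ‖a t z‖ ^ 2) := fun z => (hac z).norm.pow 2
  have hgi : ∀ z s t, IntervalIntegrable (fun t => ‖a t z‖ ^ 2) MeasureTheory.volume s t :=
    fun z s t => (hgc z).intervalIntegrable _ _
  refine ⟨fun x u => ∫ t in (0 : ℝ)..T, ‖a t (x, u)‖ ^ 2, t₁ / 4, T * K ^ 2, 1 / 2,
    T * C * (2 * K), by positivity, by positivity, by positivity, by positivity, hWd, ?_⟩
  intro x u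
  refine ⟨?_, ?_, ?_, ?_⟩
  · -- lower bound
    have hlow : ∀ t ∈ Set.Icc 0 t₁, (‖x - h u‖ / 2) ^ 2 ≤ ‖a t (x, u)‖ ^ 2 := by
      intro t ht
      have h1 := norm_image_sub_le_of_norm_deriv_le_segment' (f := φ x u)
        (f' := fun t => f (φ x u t) u) (a := 0) (b := t₁) (C := ℓx * (K * ‖x - h u‖))
        (fun s hs => (hφ x u s hs.1).hasDerivWithinAt) (fun s hs => by
          have h2 := (hf_lipx u).dist_le_mul (φ x u s) (h u)
          simp only [hsteady, dist_eq_norm, sub_zero] at h2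
          refine h2.trans ?_
          gcongr
          exact hdec' x u s hs.1) t ht
      rw [hφ0, sub_zero] at h1
      have h3 : ℓx * (K * ‖x - h u‖) * t ≤ ℓx * (K * ‖x - h u‖) * t₁ := by
        gcongr; exact ht.2
      have h4 : ℓx * (K * ‖x - h u‖) * t₁ = ‖x - h u‖ / 2 := by
        have : (ℓx : ℝ) ≠ 0 := by positivity
        rw [ht₁]; field_simp
      have h5 : ‖x - h u‖ ≤ ‖φ x u t - x‖ + ‖φ x u t - h u‖ := by
        rw [norm_sub_rev (φ x u t) x]
        exact norm_sub_le_norm_sub_add_norm_sub _ _ _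
      have h6 : a t (x, u) = φ x u t - h u := by
        simp only [a]; rw [hcl t ⟨ht.1, ht.2.trans hTt⟩]
      rw [h6]
      gcongr
      linarith
    have h1 := intervalIntegral.integral_add_adjacent_intervals (hgi (x, u) 0 t₁) (hgi (x, u) t₁ T)
    have h2 : 0 ≤ ∫ t in t₁..T, ‖a t (x, u)‖ ^ 2 :=
      intervalIntegral.integral_nonneg hTt fun t _ => by positivity
    have h3 := intervalIntegral.integral_mono_on ht₁pos.le intervalIntegrable_const
      (hgi (x, u) 0 t₁) hlow
    simp only [intervalIntegral.integral_const, smul_eq_mul, sub_zero] at h3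
    show _ ≤ ∫ t in (0 : ℝ)..T, ‖a t (x, u)‖ ^ 2
    rw [← h1]
    nlinarith
  · have h3 := intervalIntegral.integral_mono_on hTpos.le (hgi (x, u) 0 T)
      (intervalIntegrable_const (c := (K * ‖x - h u‖) ^ 2)) (fun t _ => by
        have := hab (x, u) t
        gcongr)
    simp only [intervalIntegral.integral_const, smul_eq_mul, sub_zero] at h3
    refine h3.trans (le_of_eq (by ring))
  · -- decrease
    have hd : DifferentiableAt ℝ (fun y => ∫ t in (0 : ℝ)..T, ‖a t (y, u)‖ ^ 2) x :=
      DifferentiableAt.comp (g := fun z => ∫ t in (0 : ℝ)..T, ‖a t z‖ ^ 2)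
        (f := fun y => (y, u)) x (hWd (x, u)) (differentiableAt_id.prodMk (differentiableAt_const u))
    have hinner : ⟪gradient (fun y => ∫ t in (0 : ℝ)..T, ‖a t (y, u)‖ ^ 2) x, f x u⟫ =
        fderiv ℝ (fun y => ∫ t in (0 : ℝ)..T, ‖a t (y, u)‖ ^ 2) x (f x u) := by
      rw [gradient, InnerProductSpace.toDual_symm_apply]
    rw [hinner]
    have h0 := hφ x u 0 le_rfl
    rw [hφ0] at h0
    have hchain : HasDerivAt (fun s => ∫ t in (0 : ℝ)..T, ‖a t (φ x u s, u)‖ ^ 2)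
        (fderiv ℝ (fun y => ∫ t in (0 : ℝ)..T, ‖a t (y, u)‖ ^ 2) x (f x u)) 0 :=
      hd.hasFDerivAt.comp_hasDerivAt_of_eq 0 h0 (hφ0 x u).symm
    -- the trajectory cost
    let q : ℝ → ℝ := fun r => ‖φ x u (max r 0) - h u‖ ^ 2
    have hq : Continuous q := by
      refine (Continuous.sub ?_ continuous_const).norm.pow 2
      rw [continuous_iff_continuousAt]
      intro t
      exact ContinuousAt.comp (f := fun r => max r 0) (hφc x u (max t 0) (le_max_right _ _))
        (by fun_prop)
    have hq2 : HasDerivAt (fun s => (∫ r in (0 : ℝ)..(T + s), q r) - ∫ r in (0 : ℝ)..s, q r)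
        (q T - q 0) 0 := by
      have h1 : HasDerivAt (fun s => ∫ r in (0 : ℝ)..s, q r) (q (T + 0)) (T + 0) :=
        (hq.integral_hasStrictDerivAt 0 (T + 0)).hasDerivAt
      have h2 := (hq.integral_hasStrictDerivAt 0 0).hasDerivAt
      have h3 := (h1.comp_const_add T 0).sub h2
      rw [add_zero] at h3
      exact h3
    have heq : ∀ s ∈ Set.Ici (0 : ℝ), (∫ t in (0 : ℝ)..T, ‖a t (φ x u s, u)‖ ^ 2) =
        (∫ r in (0 : ℝ)..(T + s), q r) - ∫ r in (0 : ℝ)..s, q r := by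
      intro s hs
      rw [intervalIntegral.integral_interval_sub_left (hq.intervalIntegrable _ _)
        (hq.intervalIntegrable _ _)]
      have h1 := intervalIntegral.integral_comp_add_right (a := 0) (b := T) q s
      rw [zero_add] at h1
      rw [← h1]
      refine intervalIntegral.integral_congr fun t ht => ?_
      rw [Set.uIcc_of_le hTpos.le] at ht
      have hs' : 0 ≤ s := hs
      simp only [a, q]
      rw [hcl t ht, max_eq_left (add_nonneg ht.1 hs'), hsemi x u s t hs' ht.1]
    have hq3 := (hq2.hasDerivWithinAt (s := Set.Ici 0)).congr heq (heq 0 Set.self_mem_Ici)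
    have huniq := (uniqueDiffWithinAt_Ici (0 : ℝ)).eq_deriv _ hchain.hasDerivWithinAt hq3
    rw [huniq]
    have e0 : q 0 = ‖x - h u‖ ^ 2 := by simp [q, hφ0]
    have eT : q T ≤ 1 / 2 * ‖x - h u‖ ^ 2 := by
      simp only [q]
      rw [max_eq_left hTpos.le]
      calc ‖φ x u T - h u‖ ^ 2 ≤ (K * ‖x - h u‖ * Real.exp (-τ * T)) ^ 2 := by
            gcongr; exact hdec x u T hTpos.le
        _ = (K * Real.exp (-τ * T)) ^ 2 * ‖x - h u‖ ^ 2 := by ring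
        _ ≤ _ := by gcongr
    linarith
  · -- sensitivity with respect to the input
    have hd : DifferentiableAt ℝ (fun v => ∫ t in (0 : ℝ)..T, ‖a t (x, v)‖ ^ 2) u :=
      (hWd (x, u)).comp u ((differentiableAt_const x).prodMk differentiableAt_id)
    have hn : ‖gradient (fun v => ∫ t in (0 : ℝ)..T, ‖a t (x, v)‖ ^ 2) u‖ =
        ‖fderiv ℝ (fun v => ∫ t in (0 : ℝ)..T, ‖a t (x, v)‖ ^ 2) u‖ := by
      rw [gradient, LinearIsometryEquiv.norm_map]
    rw [hn]
    refine le_of_forall_pos_le_add fun ε hε => ?_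
    refine hd.hasFDerivAt.le_of_lip' (by positivity) ?_
    have hball : ball u (ε / (T * C * C)) ∈ 𝓝 u := ball_mem_nhds _ (by positivity)
    filter_upwards [hball] with v hv
    rw [mem_ball, dist_eq_norm, lt_div_iff₀ (by positivity)] at hv
    rw [← intervalIntegral.integral_sub (hgi _ _ _) (hgi _ _ _)]
    have h1 := intervalIntegral.norm_integral_le_of_norm_le_const (a := 0) (b := T)
      (f := fun t => ‖a t (x, v)‖ ^ 2 - ‖a t (x, u)‖ ^ 2)
      (C := C * ‖v - u‖ * (2 * (K * ‖x - h u‖) + C * ‖v - u‖)) (fun t _ => by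
        have e1 : ‖a t (x, v) - a t (x, u)‖ ≤ C * ‖v - u‖ := by
          refine (halip t (x, v) (x, u)).trans (le_of_eq ?_)
          simp [Prod.norm_def]
        have e2 := hab (x, u) t
        have e3 := norm_le_norm_sub_add (a t (x, v)) (a t (x, u))
        simp only at e2
        rw [Real.norm_eq_abs]
        refine (abs_sq_norm_sub_le _ _).trans ?_
        exact mul_le_mul e1 (by linarith) (by positivity) (by positivity))
    refine h1.trans ?_
    rw [sub_zero, abs_of_pos hTpos]
    calc C * ‖v - u‖ * (2 * (K * ‖x - h u‖) + C * ‖v - u‖) * T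
        = (T * C * (2 * K) * ‖x - h u‖ + ‖v - u‖ * (T * C * C)) * ‖v - u‖ := by ring
      _ ≤ _ := by gcongr
end

section
/- Let Φ̃ : ℝᵖ → ℝ be continuously differentiable with locally Lipschitz gradient and compact sublevel sets, and let Q be a locally Lipschitz map assigning to each u ∈ ℝᵖ a symmetric positive definite linear map Q(u) : ℝᵖ → ℝᵖ. Then for every complete solution u : [0,∞) → ℝᵖ of the gradient flow u̇ = −Q(u)∇Φ̃(u), the function t ↦ Φ̃(u(t)) is nonincreasing, the trajectory remains in the sublevel set {w : Φ̃(w) ≤ Φ̃(u(0))}, and dist(u(t), {w ∈ ℝᵖ : ∇Φ̃(w) = 0}) → 0 as t → ∞. -/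
open Filter Metric Real
open scoped RealInnerProductSpace Topology

/-- Convergence of variable-metric gradient flows `u̇ = -Q(u)∇Φ̃(u)`. -/
theorem stmt1 {p : ℕ}
    (Φ : EuclideanSpace ℝ (Fin p) → ℝ)
    (hΦ : ContDiff ℝ 1 Φ)
    (hgrad_lip : LocallyLipschitz (gradient Φ))
    (hlevel : ∀ c : ℝ, IsCompact {w : EuclideanSpace ℝ (Fin p) | Φ w ≤ c})
    (Q : EuclideanSpace ℝ (Fin p) → EuclideanSpace ℝ (Fin p) →L[ℝ] EuclideanSpace ℝ (Fin p))
    (hQ_lip : LocallyLipschitz Q)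
    (hQ_symm : ∀ u v w, ⟪Q u v, w⟫ = ⟪v, Q u w⟫)
    (hQ_pos : ∀ u v, v ≠ 0 → 0 < ⟪Q u v, v⟫)
    (u : ℝ → EuclideanSpace ℝ (Fin p))
    (hsol : ∀ t ≥ (0 : ℝ), HasDerivAt u (-(Q (u t) (gradient Φ (u t)))) t) :
    (∀ s t : ℝ, 0 ≤ s → s ≤ t → Φ (u t) ≤ Φ (u s)) ∧
    (∀ t ≥ (0 : ℝ), Φ (u t) ≤ Φ (u 0)) ∧
    Tendsto (fun t => Metric.infDist (u t) {w | gradient Φ w = 0}) atTop (nhds 0) := by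
  set ψ : EuclideanSpace ℝ (Fin p) → ℝ := fun w => ⟪Q w (gradient Φ w), gradient Φ w⟫ with hψ
  have hgc : Continuous (gradient Φ) := hgrad_lip.continuous
  have hQc : Continuous Q := hQ_lip.continuous
  have hvc : Continuous (fun w => Q w (gradient Φ w)) := hQc.clm_apply hgc
  have hψc : Continuous ψ := hvc.inner hgc
  have hψ0 : ∀ w, 0 ≤ ψ w := by
    intro w
    by_cases h : gradient Φ w = 0
    · simp [hψ, h]
    · exact (hQ_pos w _ h).le
  have hder : ∀ t ≥ (0 : ℝ), HasDerivAt (fun s => Φ (u s)) (-ψ (u t)) t := by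
    intro t ht
    have h1 : HasGradientAt Φ (gradient Φ (u t)) (u t) :=
      ((hΦ.differentiable one_ne_zero) (u t)).hasGradientAt
    have h2 := h1.hasFDerivAt.comp_hasDerivAt t (hsol t ht)
    rw [InnerProductSpace.toDual_apply_apply, inner_neg_right, real_inner_comm] at h2
    exact h2
  have key : ∀ (m a b : ℝ), 0 ≤ a → a ≤ b → (∀ s ∈ Set.Icc a b, m ≤ ψ (u s)) →
      Φ (u b) ≤ Φ (u a) - m * (b - a) := by
    intro m a b ha hab hm
    have hd : ∀ s ∈ Set.Icc a b,
        HasDerivAt (fun s => Φ (u s) + m * s) (-ψ (u s) + m * 1) s := fun s hs =>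
      (hder s (ha.trans hs.1)).add ((hasDerivAt_id s).const_mul m)
    have hanti : AntitoneOn (fun s => Φ (u s) + m * s) (Set.Icc a b) := by
      apply antitoneOn_of_hasDerivWithinAt_nonpos (f' := fun s => -ψ (u s) + m * 1)
        (convex_Icc a b)
      · exact fun s hs => (hd s hs).continuousAt.continuousWithinAt
      · exact fun s hs => (hd s (interior_subset hs)).hasDerivWithinAt
      · intro s hs
        have := hm s (interior_subset hs)
        linarith
    have := hanti (Set.left_mem_Icc.2 hab) (Set.right_mem_Icc.2 hab) hab
    simp only at this
    linarith
  have hmono : ∀ s t : ℝ, 0 ≤ s → s ≤ t → Φ (u t) ≤ Φ (u s) := by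
    intro s t hs hst
    have := key 0 s t hs hst (fun r _ => hψ0 _)
    linarith
  have hK : ∀ t ≥ (0 : ℝ), Φ (u t) ≤ Φ (u 0) := fun t ht => hmono 0 t le_rfl ht
  refine ⟨hmono, hK, ?_⟩
  obtain ⟨M, hM⟩ := (hlevel (Φ (u 0))).exists_bound_of_continuousOn hvc.continuousOn
  obtain ⟨B, hB⟩ := (hlevel (Φ (u 0))).exists_bound_of_continuousOn hΦ.continuous.continuousOn
  have hM0 : 0 ≤ M := (norm_nonneg _).trans (hM (u 0) (le_refl (Φ (u 0))))
  have hlip : ∀ a b : ℝ, 0 ≤ a → a ≤ b → ‖u b - u a‖ ≤ M * (b - a) := by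
    intro a b ha hab
    have := (convex_Ici (0 : ℝ)).norm_image_sub_le_of_norm_hasDerivWithin_le
      (f := u) (C := M) (fun t ht => (hsol t ht).hasDerivWithinAt)
      (fun t ht => by rw [norm_neg]; exact hM _ (hK t ht)) (x := a) (y := b) ha (ha.trans hab)
    rwa [Real.norm_of_nonneg (sub_nonneg.2 hab)] at this
  -- convergence of the energy
  have hant : Antitone (fun t : ℝ => Φ (u (max t 0))) := fun s t hst =>
    hmono _ _ (le_max_right _ _) (max_le_max_right 0 hst)
  have hbdd : BddBelow (Set.range (fun t : ℝ => Φ (u (max t 0)))) := by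
    refine ⟨-B, ?_⟩
    rintro _ ⟨t, rfl⟩
    exact (abs_le.1 (hB _ (hK (max t 0) (le_max_right _ _)))).1
  have hlim := tendsto_atTop_ciInf hant hbdd
  set S : Set (EuclideanSpace ℝ (Fin p)) := {w | gradient Φ w = 0} with hS
  rw [Metric.tendsto_atTop]
  intro ε hε
  have hA : IsCompact ({w | Φ w ≤ Φ (u 0)} ∩ {w | ε / 2 ≤ infDist w S}) :=
    (hlevel _).inter_right (isClosed_le continuous_const (continuous_infDist_pt S))
  obtain ⟨m, hm0, hm⟩ := hA.exists_forall_le' (f := ψ) hψc.continuousOn (a := 0) (by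
    rintro w ⟨-, hw⟩
    apply hQ_pos
    intro h0
    have : infDist w S = 0 := infDist_zero_of_mem h0
    simp only [Set.mem_ofPred_eq] at hw
    linarith)
  have hδ : 0 < ε / (2 * (M + 1)) := by positivity
  set δ := ε / (2 * (M + 1)) with hδdef
  have hMδ : M * δ ≤ ε / 2 := by
    have : (M + 1) * δ = ε / 2 := by rw [hδdef]; field_simp
    nlinarith
  have hdiff := hlim.sub (hlim.comp (tendsto_atTop_add_const_right atTop δ tendsto_id))
  rw [sub_self] at hdiff
  obtain ⟨N, hN⟩ := eventually_atTop.1 (hdiff.eventually_lt_const (mul_pos hm0 hδ))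
  refine ⟨max N 0, fun t ht => ?_⟩
  have ht0 : 0 ≤ t := (le_max_right _ _).trans ht
  have h1 := hN t ((le_max_left _ _).trans ht)
  simp only [Function.comp, id, max_eq_left ht0, max_eq_left (add_nonneg ht0 hδ.le)] at h1
  rw [Real.dist_0_eq_abs, abs_of_nonneg infDist_nonneg]
  by_contra! hcon
  have h2 := key m t (t + δ) ht0 (by linarith) (fun s hs => by
    apply hm
    have hs0 := ht0.trans hs.1
    refine ⟨hK s hs0, ?_⟩
    have h3 : infDist (u t) S ≤ infDist (u s) S + dist (u t) (u s) := infDist_le_infDist_add_dist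
    have h4 := hlip t s ht0 hs.1
    rw [dist_comm, dist_eq_norm] at h3
    have h5 : M * (s - t) ≤ M * δ := mul_le_mul_of_nonneg_left (by linarith [hs.2]) hM0
    simp only [Set.mem_ofPred_eq]
    linarith)
  have h6 : t + δ - t = δ := by ring
  rw [h6] at h2
  linarith
end

section
/- Let f : ℝⁿ × ℝᵖ → ℝⁿ be continuously differentiable with differentiable ℓ-Lipschitz steady-state map h (f(h(u),u) = 0 for all u), and suppose W : ℝⁿ × ℝᵖ → ℝ is a differentiable Lyapunov function with constants α, β, γ, ζ > 0 satisfying α‖x−h(u)‖² ≤ W(x,u) ≤ β‖x−h(u)‖², ⟨∇ₓW(x,u), f(x,u)⟩ ≤ −γ‖x−h(u)‖², and ‖∇ᵤW(x,u)‖ ≤ ζ‖x−h(u)‖ for all (x,u). Let Φ : ℝⁿ × ℝᵖ → ℝ be continuously differentiable such that u ↦ Φ(h(u),u) has compact sublevel sets and there is L > 0 with ‖H(u)ᵀ(∇Φ(x',u) − ∇Φ(x,u))‖ ≤ L‖x' − x‖ for all x, x', u. Let Q be a locally Lipschitz metric of symmetric positive definite maps Q(u) with sup_u ‖Q(u)‖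 < γ/(ζL). Then every complete solution (x,u) : [0,∞) → ℝⁿ × ℝᵖ of ẋ = f(x,u), u̇ = −Q(u)H(u)ᵀ∇Φ(x,u) converges to the set of critical points, i.e. dist((x(t),u(t)), {(x,u) : x = h(u) and H(u)ᵀ∇Φ(x,u) = 0}) → 0 as t → ∞. -/
open Filter Metric Real
open scoped RealInnerProductSpace Topology NNReal

set_option maxHeartbeats 2000000 in
lemma aux_inj {E : Type*} [NormedAddCommGroup E] [InnerProductSpace ℝ E] [FiniteDimensional ℝ E]
    (f : E → E) (x0 : E) (A : E →L[ℝ] E) (hf0 : f x0 = 0) (hA : HasFDerivAt f A x0)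
    (W : E → ℝ) (hW : Differentiable ℝ W) (β γ : ℝ) (hβ : 0 < β) (hγ : 0 < γ)
    (hW0 : ∀ y, 0 ≤ W y) (hWub : ∀ y, W y ≤ β * ‖y - x0‖ ^ 2)
    (hdec : ∀ y, fderiv ℝ W y (f y) ≤ -γ * ‖y - x0‖ ^ 2) :
    Function.Injective A := by
  rw [injective_iff_map_eq_zero]
  intro v0 hv0
  by_contra hne
  obtain ⟨v, hv, hv1⟩ : ∃ v, A v = 0 ∧ ‖v‖ = 1 := by
    refine ⟨‖v0‖⁻¹ • v0, by simp [hv0], ?_⟩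
    rw [norm_smul, norm_inv, norm_norm, inv_mul_cancel₀ (norm_ne_zero_iff.mpr hne)]
  set a : ℝ := ‖A‖ + 2 with ha
  have ha0 : 0 < a := by positivity
  set k : ℝ := γ / (32 * a) with hk
  have hk0 : 0 < k := by positivity
  set δ : ℝ := exp (-(β / (2 * k))) / 2 with hδ
  have hδ0 : 0 < δ := by positivity
  have hδlog : 4 * δ ^ 2 * exp (β / k) = 1 := by
    have : (exp (-(β / (2 * k)))) ^ 2 = exp (-(β / k)) := by
      rw [← Real.exp_nat_mul]; congr 1; push_cast; field_simp
    rw [hδ, div_pow, this, Real.exp_neg]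
    have := (Real.exp_pos (β / k)).ne'
    field_simp; norm_num
  have hlit := hA.isLittleO.def hδ0
  rw [Metric.eventually_nhds_iff] at hlit
  obtain ⟨r, hr, hlit⟩ := hlit
  set s : ℝ := r / 2 with hs
  have hs0 : 0 < s := by positivity
  set y0 : E := x0 + s • v with hy0
  have hnsv : ‖s • v‖ = s := by rw [norm_smul, hv1, Real.norm_of_nonneg hs0.le, mul_one]
  have hc0 : ∀ y : E, 0 < δ ^ 2 * s ^ 2 + ‖y - y0‖ ^ 2 := fun y => by positivity
  set J : E → ℝ := fun y => W y + k * s ^ 2 * Real.log (δ ^ 2 * s ^ 2 + ‖y - y0‖ ^ 2) with hJ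
  have hJc : Continuous J := by
    refine hW.continuous.add (continuous_const.mul (Continuous.log ?_ fun y => (hc0 y).ne'))
    fun_prop
  obtain ⟨y, hyB, hymin⟩ := (isCompact_closedBall y0 (s / 2)).exists_isMinOn
    ⟨y0, mem_closedBall_self (by positivity)⟩ hJc.continuousOn
  have hyle : ‖y - y0‖ ≤ s / 2 := by simpa [dist_eq_norm] using hyB
  have hyx : y - x0 = (y - y0) + s • v := by rw [hy0]; abel
  have hup : ‖y - x0‖ ≤ 3 / 2 * s := by
    rw [hyx]; refine (norm_add_le _ _).trans ?_; rw [hnsv]; linarith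
  have hlow : s / 2 ≤ ‖y - x0‖ := by
    have : ‖s • v‖ ≤ ‖y - x0‖ + ‖y - y0‖ := by
      have : s • v = (y - x0) - (y - y0) := by rw [hyx]; abel
      rw [this]; exact norm_sub_le _ _
    rw [hnsv] at this; linarith
  rcases hyle.lt_or_eq with hlt | heq
  · have hloc : IsLocalMin J y := by
      refine hymin.isLocalMin (closedBall_mem_nhds_of_mem ?_)
      simpa [dist_eq_norm] using hlt
    have hd : HasFDerivAt J (fderiv ℝ W y + (k * s ^ 2) • ((δ ^ 2 * s ^ 2 + ‖y - y0‖ ^ 2)⁻¹ •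
        (2 • (innerSL ℝ (y - y0)).comp (ContinuousLinearMap.id ℝ E)))) y := by
      have h1 : HasFDerivAt (fun z => ‖z - y0‖ ^ 2) _ y :=
        ((hasFDerivAt_id y).sub_const y0).norm_sq
      exact (hW y).hasFDerivAt.add (((h1.const_add (δ ^ 2 * s ^ 2)).log (hc0 y).ne').const_mul _)
    have hz := congrArg (fun T : E →L[ℝ] ℝ => T (f y)) (hloc.hasFDerivAt_eq_zero hd)
    simp at hz
    have hfy : ‖f y‖ ≤ a * (‖y - y0‖ + δ * s) := by
      have h1 := hlit (y := y) (by rw [dist_eq_norm]; linarith)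
      rw [hf0, sub_zero] at h1
      have h2 : A (y - x0) = A (y - y0) := by rw [hyx, map_add, map_smul, hv]; simp
      have h3 : ‖A (y - y0)‖ ≤ ‖A‖ * ‖y - y0‖ := A.le_opNorm _
      have h4 : ‖f y‖ ≤ ‖f y - A (y - x0)‖ + ‖A (y - x0)‖ := by
        simpa using norm_add_le (f y - A (y - x0)) (A (y - x0))
      rw [h2] at h4 h1
      have h5 : δ * ‖y - x0‖ ≤ δ * (3 / 2 * s) := by gcongr
      have : 0 ≤ ‖A‖ * (δ * s) := by positivity
      have := mul_pos hδ0 hs0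
      have := norm_nonneg (y - y0)
      rw [ha]; nlinarith
    have hin : ⟪y - y0, f y⟫ ≤ 2 * a * (δ ^ 2 * s ^ 2 + ‖y - y0‖ ^ 2) := by
      refine (real_inner_le_norm _ _).trans ?_
      have h1 : ‖y - y0‖ * ‖f y‖ ≤ ‖y - y0‖ * (a * (‖y - y0‖ + δ * s)) := by gcongr
      refine h1.trans ?_
      have : ‖y - y0‖ * (‖y - y0‖ + δ * s) ≤ 2 * (δ ^ 2 * s ^ 2 + ‖y - y0‖ ^ 2) := by
        nlinarith [sq_nonneg (‖y - y0‖ - δ * s), sq_nonneg (δ * s), sq_nonneg ‖y - y0‖]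
      nlinarith
    have hin2 : (δ ^ 2 * s ^ 2 + ‖y - y0‖ ^ 2)⁻¹ * ⟪y - y0, f y⟫ ≤ 2 * a := by
      rw [inv_mul_le_iff₀ (hc0 y)]; linarith
    have hdy := hdec y
    have hks : 0 < k * s ^ 2 := by positivity
    have hka : k * a = γ / 32 := by rw [hk]; field_simp
    have h6 : (k * s ^ 2) * ((δ ^ 2 * s ^ 2 + ‖y - y0‖ ^ 2)⁻¹ * ⟪y - y0, f y⟫) ≤
      (k * s ^ 2) * (2 * a) := by gcongr
    have h7 : (k * s ^ 2) * (2 * a) = γ * s ^ 2 / 16 := by linear_combination 2 * s ^ 2 * hka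
    have h8 : (s / 2) ^ 2 ≤ ‖y - x0‖ ^ 2 := by gcongr
    have h9 : γ * (s / 2) ^ 2 ≤ γ * ‖y - x0‖ ^ 2 := by gcongr
    have : 0 < γ * s ^ 2 := by positivity
    have h10 : fderiv ℝ W y (f y) + 2 * ((k * s ^ 2) *
      ((δ ^ 2 * s ^ 2 + ‖y - y0‖ ^ 2)⁻¹ * ⟪y - y0, f y⟫)) = 0 := by
      rw [← hz, inner_sub_left]; ring
    nlinarith
  · have h1 : J y ≤ J y0 := hymin (mem_closedBall_self (by positivity))
    simp only [hJ, heq, sub_self, norm_zero] at h1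
    have h2 := hW0 y
    have h3 : W y0 ≤ β * s ^ 2 := by
      have := hWub y0
      rwa [hy0, add_sub_cancel_left, hnsv] at this
    have h4 : Real.log (δ ^ 2 * s ^ 2 + 0 ^ 2) + β / k < Real.log (δ ^ 2 * s ^ 2 + (s / 2) ^ 2) := by
      rw [← Real.log_exp (β / k), ← Real.log_mul (by positivity) (by positivity)]
      apply Real.log_lt_log (by positivity)
      have h7 : 0 < δ ^ 2 * s ^ 2 := by positivity
      have h8 : (δ ^ 2 * s ^ 2 + 0 ^ 2) * rexp (β / k) = (s / 2) ^ 2 := by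
        linear_combination s ^ 2 / 4 * hδlog
      rw [h8]
      linarith
    have h5 : k * s ^ 2 * (Real.log (δ ^ 2 * s ^ 2 + 0 ^ 2) + β / k) <
      k * s ^ 2 * Real.log (δ ^ 2 * s ^ 2 + (s / 2) ^ 2) := by gcongr
    have h6 : k * s ^ 2 * (β / k) = β * s ^ 2 := by field_simp
    rw [mul_add, h6] at h5
    clear_value J y0 s δ k a
    linarith

lemma aux_cont {E F : Type*} [NormedAddCommGroup E] [NormedSpace ℝ E] [FiniteDimensional ℝ E]
    [NormedAddCommGroup F] [NormedSpace ℝ F]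
    (f : E → F → E) (h : F → E) (hf : ContDiff ℝ 1 (Function.uncurry f))
    (hh : Differentiable ℝ h) (hs : ∀ u, f (h u) u = 0)
    (hinj : ∀ u, Function.Injective
      ((fderiv ℝ (Function.uncurry f) (h u, u)).comp (ContinuousLinearMap.inl ℝ E F))) :
    Continuous (fderiv ℝ h) := by
  set G : F → (E × F →L[ℝ] E) := fun u => fderiv ℝ (Function.uncurry f) (h u, u) with hG
  have hGc : Continuous G := (hf.continuous_fderiv one_ne_zero).comp (hh.continuous.prodMk continuous_id)
  set A : F → (E →L[ℝ] E) := fun u => (G u).comp (ContinuousLinearMap.inl ℝ E F) with hA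
  have hAc : Continuous A := hGc.clm_comp continuous_const
  have hB : Continuous fun u => (G u).comp (ContinuousLinearMap.inr ℝ E F) :=
    hGc.clm_comp continuous_const
  have hEq : ∀ u, ∃ e : E ≃L[ℝ] E, (e : E →L[ℝ] E) = A u := fun u =>
    ⟨(LinearEquiv.ofInjectiveEndo (A u : E →ₗ[ℝ] E) (hinj u)).toContinuousLinearEquiv, by
      ext v; rfl⟩
  have hrel : ∀ u, (A u).comp (fderiv ℝ h u) = -(G u).comp (ContinuousLinearMap.inr ℝ E F) := by
    intro u
    have h1 : HasFDerivAt (fun u => Function.uncurry f (h u, u)) ((G u).comp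
        ((fderiv ℝ h u).prod (ContinuousLinearMap.id ℝ F))) u :=
      HasFDerivAt.comp (f := fun u => (h u, u)) u
        ((hf.differentiable one_ne_zero) (h u, u)).hasFDerivAt
        ((hh u).hasFDerivAt.prodMk (hasFDerivAt_id u))
    have h2 : (fun u => Function.uncurry f (h u, u)) = fun _ => 0 := funext hs
    rw [h2] at h1
    have h3 := h1.unique (hasFDerivAt_const (0 : E) u)
    ext v
    have h4 := congrArg (fun T : F →L[ℝ] E => T v) h3
    simp only [ContinuousLinearMap.comp_apply, ContinuousLinearMap.prod_apply,
      ContinuousLinearMap.id_apply, zero_apply] at h4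
    have h5 : ((fderiv ℝ h u) v, v) = ((fderiv ℝ h u) v, (0:F)) + ((0:E), v) := by simp
    rw [h5, map_add] at h4
    simpa [hA, eq_neg_iff_add_eq_zero] using h4
  have hform : fderiv ℝ h = fun u => (ContinuousLinearMap.inverse (A u)).comp
      (-(G u).comp (ContinuousLinearMap.inr ℝ E F)) := by
    funext u
    obtain ⟨e, he⟩ := hEq u
    rw [← hrel u, ← he, ContinuousLinearMap.inverse_equiv]
    ext v; simp
  rw [hform]
  refine Continuous.clm_comp ?_ hB.neg
  rw [continuous_iff_continuousAt]
  intro u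
  obtain ⟨e, he⟩ := hEq u
  have h1 : ContinuousAt ContinuousLinearMap.inverse (A u) := by
    rw [← he]; exact (contDiffAt_map_inverse (𝕜 := ℝ) (n := 0) e).continuousAt
  exact h1.comp hAc.continuousAt

lemma aux_conv {Z : Type*} [PseudoMetricSpace Z] (z : ℝ → Z) (K : Set Z) (hK : IsCompact K)
    (hz : ∀ t ≥ (0 : ℝ), z t ∈ K) (M : ℝ)
    (hM : ∀ s ≥ (0 : ℝ), ∀ t ≥ (0 : ℝ), dist (z s) (z t) ≤ M * |s - t|)
    (D : Z → ℝ) (hD : Continuous D) (hD0 : ∀ y, 0 ≤ D y)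
    (Ψ Ψ' : ℝ → ℝ) (hΨ : ∀ t ≥ (0 : ℝ), HasDerivAt Ψ (Ψ' t) t)
    (hΨ' : ∀ t ≥ (0 : ℝ), Ψ' t ≤ -D (z t)) (m : ℝ) (hm : ∀ t ≥ (0 : ℝ), m ≤ Ψ t) :
    Tendsto (fun t => infDist (z t) {y | D y = 0}) atTop (𝓝 0) := by
  -- decrease over an interval
  have hdrop : ∀ t ≥ (0 : ℝ), ∀ τ ≥ (0 : ℝ), ∀ η : ℝ, (∀ s ∈ Set.Icc t (t + τ), η ≤ D (z s)) →
      Ψ (t + τ) ≤ Ψ t - η * τ := by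
    intro t ht τ hτ η hη
    have h1 := (convex_Icc t (t + τ)).image_sub_le_mul_sub_of_deriv_le (f := Ψ) (C := -η)
      (fun s hs => (hΨ s (ht.trans hs.1)).continuousAt.continuousWithinAt)
      (fun s hs => (hΨ s (ht.trans (interior_subset hs).1)).differentiableAt.differentiableWithinAt)
      (fun s hs => by
        have hs := interior_subset hs
        rw [(hΨ s (ht.trans hs.1)).deriv]
        linarith [hΨ' s (ht.trans hs.1), hη s hs])
      t (by simp [hτ]) (t + τ) (by simp [hτ]) (by linarith)
    nlinarith
  have hDz : ∀ η > 0, ∀ᶠ t in atTop, D (z t) < η := by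
    intro η hη
    obtain ⟨ρ, hρ, huc⟩ := Metric.uniformContinuousOn_iff.mp
      (hK.uniformContinuousOn_of_continuous hD.continuousOn) (η / 2) (by positivity)
    set τ : ℝ := ρ / (2 * (|M| + 1)) with hτ
    have hτ0 : 0 < τ := by positivity
    have hMτ : |M| * τ < ρ := by
      rw [hτ, mul_div_assoc', div_lt_iff₀ (by positivity)]
      nlinarith [abs_nonneg M]
    by_contra hcon
    rw [eventually_atTop] at hcon
    push Not at hcon
    -- iterate drops
    have hit : ∀ N : ℕ, ∃ t ≥ (0 : ℝ), Ψ t ≤ Ψ 0 - N * (η / 2 * τ) := by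
      intro N
      induction N with
      | zero => exact ⟨0, le_rfl, by simp⟩
      | succ N ih =>
        obtain ⟨t, ht, hle⟩ := ih
        obtain ⟨t', htt, hDt⟩ := hcon t
        have ht' : 0 ≤ t' := le_trans ht htt
        refine ⟨t' + τ, by positivity, ?_⟩
        have h1 : Ψ t' ≤ Ψ t := by
          have := hdrop t ht (t' - t) (by linarith) 0 (fun s _ => hD0 _)
          simpa using this
        have h2 := hdrop t' ht' τ hτ0.le (η / 2) (fun s hs => by
          have hs0 : 0 ≤ s := ht'.trans hs.1
          have h3 : dist (z s) (z t') < ρ := by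
            refine (hM s hs0 t' ht').trans_lt (lt_of_le_of_lt ?_ hMτ)
            rw [abs_of_nonneg (by linarith [hs.1])]
            have : s - t' ≤ τ := by linarith [hs.2]
            have : 0 ≤ s - t' := by linarith [hs.1]
            calc M * (s - t') ≤ |M| * (s - t') := by gcongr; exact le_abs_self M
              _ ≤ |M| * τ := by gcongr
          have h4 := huc _ (hz s hs0) _ (hz t' ht') h3
          rw [Real.dist_eq, abs_lt] at h4
          linarith [h4.1])
        push_cast
        linarith
    obtain ⟨N, hN⟩ := exists_nat_gt ((Ψ 0 - m) / (η / 2 * τ))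
    obtain ⟨t, ht, hle⟩ := hit N
    rw [div_lt_iff₀ (by positivity)] at hN
    linarith [hm t ht]
  rw [Metric.tendsto_atTop']
  intro ε hε
  set S : Set Z := K ∩ {y | ε ≤ infDist y {y | D y = 0}} with hS
  have hSc : IsCompact S := hK.inter_right (isClosed_le continuous_const (continuous_infDist_pt _))
  have hpos : ∃ η > 0, ∀ y ∈ S, η ≤ D y := by
    rcases S.eq_empty_or_nonempty with he | hne
    · exact ⟨1, one_pos, by simp [he]⟩
    · obtain ⟨y, hy, hmin⟩ := hSc.exists_isMinOn hne hD.continuousOn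
      refine ⟨D y, lt_of_le_of_ne (hD0 y) ?_, fun w hw => hmin hw⟩
      intro h0
      have : infDist y {y | D y = 0} = 0 := infDist_zero_of_mem h0.symm
      have h2 : ε ≤ infDist y {y | D y = 0} := hy.2
      linarith
  obtain ⟨η, hη, hSη⟩ := hpos
  obtain ⟨T, hT⟩ := eventually_atTop.mp (hDz η hη)
  refine ⟨max T 0, fun t ht => ?_⟩
  rw [Real.dist_eq, sub_zero, abs_of_nonneg infDist_nonneg]
  by_contra hge
  have h1 := hSη (z t) ⟨hz t ((le_max_right _ _).trans ht.le), not_lt.mp hge⟩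
  linarith [hT t ((le_max_left _ _).trans ht.le)]

lemma aux_grad {E : Type*} [NormedAddCommGroup E] [InnerProductSpace ℝ E] [CompleteSpace E]
    (φ : E → ℝ) (x v : E) : ⟪gradient φ x, v⟫ = fderiv ℝ φ x v := by
  unfold gradient; exact InnerProductSpace.toDual_symm_apply

lemma aux_part1 {E F G : Type*} [NormedAddCommGroup E] [NormedSpace ℝ E]
    [NormedAddCommGroup F] [NormedSpace ℝ F] [NormedAddCommGroup G] [NormedSpace ℝ G]
    (φ : E → F → G) (x : E) (u : F) (hd : DifferentiableAt ℝ (Function.uncurry φ) (x, u)) :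
    HasFDerivAt (fun y => φ y u)
      ((fderiv ℝ (Function.uncurry φ) (x, u)).comp (ContinuousLinearMap.inl ℝ E F)) x :=
  HasFDerivAt.comp (g := Function.uncurry φ) (f := fun y => (y, u)) x hd.hasFDerivAt
    (hasFDerivAt_prodMk_left x u)

lemma aux_part2 {E F G : Type*} [NormedAddCommGroup E] [NormedSpace ℝ E]
    [NormedAddCommGroup F] [NormedSpace ℝ F] [NormedAddCommGroup G] [NormedSpace ℝ G]
    (φ : E → F → G) (x : E) (u : F) (hd : DifferentiableAt ℝ (Function.uncurry φ) (x, u)) :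
    HasFDerivAt (fun v => φ x v)
      ((fderiv ℝ (Function.uncurry φ) (x, u)).comp (ContinuousLinearMap.inr ℝ E F)) u :=
  HasFDerivAt.comp (g := Function.uncurry φ) (f := fun v => (x, v)) u hd.hasFDerivAt
    (hasFDerivAt_prodMk_right x u)

lemma aux_split {E F : Type*} [NormedAddCommGroup E] [InnerProductSpace ℝ E] [CompleteSpace E]
    [NormedAddCommGroup F] [InnerProductSpace ℝ F] [CompleteSpace F]
    (φ : E → F → ℝ) (x : E) (u : F) (hd : DifferentiableAt ℝ (Function.uncurry φ) (x, u))
    (a : E) (b : F) : fderiv ℝ (Function.uncurry φ) (x, u) (a, b) =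
      ⟪gradient (fun y => φ y u) x, a⟫ + ⟪gradient (fun v => φ x v) u, b⟫ := by
  rw [aux_grad, aux_grad, (aux_part1 φ x u hd).fderiv, (aux_part2 φ x u hd).fderiv]
  simp [← map_add]

lemma aux_Q {F : Type*} [NormedAddCommGroup F] [InnerProductSpace ℝ F]
    (Q : F →L[ℝ] F) (hs : ∀ v w, ⟪Q v, w⟫ = ⟪v, Q w⟫) (hp : ∀ v, 0 ≤ ⟪Q v, v⟫)
    (q : ℝ) (hq : 0 < q) (hQ : ‖Q‖ ≤ q) (g : F) : ‖Q g‖ ^ 2 ≤ q * ⟪Q g, g⟫ := by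
  have h1 := hp (g - q⁻¹ • Q g)
  have h2 : ⟪Q (Q g), Q g⟫ ≤ q * ‖Q g‖ ^ 2 := by
    refine (real_inner_le_norm _ _).trans ?_
    have : ‖Q (Q g)‖ ≤ q * ‖Q g‖ := (Q.le_opNorm _).trans (by gcongr)
    nlinarith [norm_nonneg (Q g)]
  have h3 : ⟪Q (Q g), g⟫ = ‖Q g‖ ^ 2 := by rw [hs, real_inner_self_eq_norm_sq]
  simp only [map_sub, map_smul, inner_sub_left, inner_sub_right, inner_smul_left,
    inner_smul_right, real_inner_self_eq_norm_sq, h3, conj_trivial] at h1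
  have h4 : q⁻¹ * (q⁻¹ * ⟪Q (Q g), Q g⟫) ≤ q⁻¹ * (q⁻¹ * (q * ‖Q g‖ ^ 2)) := by gcongr
  have h5 : q⁻¹ * (q⁻¹ * (q * ‖Q g‖ ^ 2)) = q⁻¹ * ‖Q g‖ ^ 2 := by field_simp
  have h6 : q⁻¹ * ‖Q g‖ ^ 2 ≤ ⟪Q g, g⟫ := by linarith
  rwa [inv_mul_le_iff₀ hq] at h6

lemma aux_core {E F : Type*} [NormedAddCommGroup E] [InnerProductSpace ℝ E]
    [FiniteDimensional ℝ E] [CompleteSpace E]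
    [NormedAddCommGroup F] [InnerProductSpace ℝ F] [FiniteDimensional ℝ F] [CompleteSpace F]
    (f : E → F → E) (h : F → E) (W Φ : E → F → ℝ) (Q : F → F →L[ℝ] F)
    (α β γ ζ L : ℝ)
    (hα : 0 < α) (hβ : 0 < β) (hγ : 0 < γ) (hζ : 0 < ζ) (hL : 0 < L)
    (hf_smooth : ContDiff ℝ 1 (Function.uncurry f))
    (hh_diff : Differentiable ℝ h)
    (hsteady : ∀ u, f (h u) u = 0)
    (hW_diff : Differentiable ℝ (Function.uncurry W))
    (hW_lb : ∀ x u, α * ‖x - h u‖ ^ 2 ≤ W x u)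
    (hW_ub : ∀ x u, W x u ≤ β * ‖x - h u‖ ^ 2)
    (hW_decay : ∀ x u, ⟪gradient (fun y => W y u) x, f x u⟫ ≤ -γ * ‖x - h u‖ ^ 2)
    (hW_gradu : ∀ x u, ‖gradient (fun v => W x v) u‖ ≤ ζ * ‖x - h u‖)
    (hΦ_smooth : ContDiff ℝ 1 (Function.uncurry Φ))
    (hlevel : ∀ c : ℝ, IsCompact {u : F | Φ (h u) u ≤ c})
    (g : E → F → F)
    (hg : ∀ x u, g x u = ContinuousLinearMap.adjoint (fderiv ℝ h u)
      (gradient (fun y => Φ y u) x) + gradient (fun v => Φ x v) u)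
    (hLbound : ∀ x x' u, ‖g x' u - g x u‖ ≤ L * ‖x' - x‖)
    (hQ_cont : Continuous Q)
    (hQ_symm : ∀ u v w, ⟪Q u v, w⟫ = ⟪v, Q u w⟫)
    (hQ_pos : ∀ u v, v ≠ 0 → 0 < ⟪Q u v, v⟫)
    (hQ_bound : ∃ q : ℝ, (∀ u, ‖Q u‖ ≤ q) ∧ q < γ / (ζ * L))
    (x : ℝ → E) (u : ℝ → F)
    (hsolx : ∀ t ≥ (0 : ℝ), HasDerivAt x (f (x t) (u t)) t)
    (hsolu : ∀ t ≥ (0 : ℝ), HasDerivAt u (-(Q (u t) (g (x t) (u t)))) t) :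
    Tendsto (fun t => Metric.infDist (x t, u t) {q : E × F | q.1 = h q.2 ∧ g q.1 q.2 = 0})
      atTop (𝓝 0) := by
  have hΦd := hΦ_smooth.differentiable one_ne_zero
  have hΦc := hΦ_smooth.continuous_fderiv one_ne_zero
  -- `h` is continuously differentiable
  have hDh : Continuous (fderiv ℝ h) := by
    refine aux_cont f h hf_smooth hh_diff hsteady fun u => ?_
    refine aux_inj (fun y => f y u) (h u) _ (hsteady u)
      (aux_part1 f (h u) u (hf_smooth.differentiable one_ne_zero _)) (fun y => W y u)
      (fun y => (aux_part1 W y u (hW_diff _)).differentiableAt) β γ hβ hγ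
      (fun y => le_trans (by positivity) (hW_lb y u)) (fun y => hW_ub y u) (fun y => ?_)
    rw [← aux_grad]; exact hW_decay y u
  -- continuity of `g`
  have hgc : Continuous fun z : E × F => g z.1 z.2 := by
    simp only [hg]
    refine Continuous.add (Continuous.clm_apply ?_ ?_) ?_
    · exact ContinuousLinearMap.adjoint.continuous.comp (hDh.comp continuous_snd)
    · have : (fun z : E × F => gradient (fun y => Φ y z.2) z.1) = fun z =>
          (InnerProductSpace.toDual ℝ E).symm ((fderiv ℝ (Function.uncurry Φ) z).comp
            (ContinuousLinearMap.inl ℝ E F)) := by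
        funext z
        unfold gradient
        rw [(aux_part1 Φ z.1 z.2 (hΦd _)).fderiv]
      rw [this]
      exact (InnerProductSpace.toDual ℝ E).symm.continuous.comp (hΦc.clm_comp continuous_const)
    · have : (fun z : E × F => gradient (fun y => Φ z.1 y) z.2) = fun z =>
          (InnerProductSpace.toDual ℝ F).symm ((fderiv ℝ (Function.uncurry Φ) z).comp
            (ContinuousLinearMap.inr ℝ E F)) := by
        funext z
        unfold gradient
        rw [(aux_part2 Φ z.1 z.2 (hΦd _)).fderiv]
      rw [this]
      exact (InnerProductSpace.toDual ℝ F).symm.continuous.comp (hΦc.clm_comp continuous_const)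
  have hQ0 : ∀ u v, 0 ≤ ⟪Q u v, v⟫ := by
    intro u v
    by_cases hv : v = 0
    · simp [hv]
    · exact (hQ_pos u v hv).le
  -- constants
  obtain ⟨q0, hq0, hq0lt⟩ := hQ_bound
  have hq0nn : 0 ≤ q0 := (norm_nonneg _).trans (hq0 0)
  obtain ⟨q, hq0q, hqκ⟩ := exists_between hq0lt
  obtain ⟨r, hqr, hrκ⟩ := exists_between hqκ
  have hqpos : 0 < q := by linarith
  have hrpos : 0 < r := by linarith
  set κ : ℝ := γ / (ζ * L) with hκ
  set c : ℝ := L / ζ with hc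
  have hcpos : 0 < c := by positivity
  have hcζ : c * ζ = L := by rw [hc]; field_simp
  have hcγ : c * γ = L ^ 2 * κ := by rw [hc, hκ]; field_simp
  set a1 : ℝ := 1 - q / r with ha1
  have ha1pos : 0 < a1 := by
    have : q / r < 1 := (div_lt_one hrpos).mpr hqr
    linarith
  set a2 : ℝ := L ^ 2 * (κ - r) with ha2
  have ha2pos : 0 < a2 := mul_pos (by positivity) (by linarith)
  set D : E × F → ℝ := fun z => a1 * ⟪Q z.2 (g z.1 z.2), g z.1 z.2⟫ + a2 * ‖z.1 - h z.2‖ ^ 2 with hD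
  have hhc := hh_diff.continuous
  have hQg : Continuous fun z : E × F => Q z.2 (g z.1 z.2) :=
    (hQ_cont.comp continuous_snd).clm_apply hgc
  have hDc : Continuous D := by
    refine (continuous_const.mul (hQg.inner hgc)).add (continuous_const.mul ?_)
    exact ((continuous_fst.sub (hhc.comp continuous_snd)).norm).pow 2
  have hDnn : ∀ z, 0 ≤ D z := fun z =>
    add_nonneg (mul_nonneg ha1pos.le (hQ0 _ _)) (by positivity)
  have hset : {q : E × F | q.1 = h q.2 ∧ g q.1 q.2 = 0} = {z | D z = 0} := by
    ext z
    simp only [Set.mem_ofPred_eq]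
    constructor
    · rintro ⟨h1, h2⟩
      simp [hD, h1, h1 ▸ h2]
    · intro h0
      have h1 := mul_nonneg ha1pos.le (hQ0 z.2 (g z.1 z.2))
      have h2 : 0 ≤ a2 * ‖z.1 - h z.2‖ ^ 2 := by positivity
      have h0' : a1 * ⟪Q z.2 (g z.1 z.2), g z.1 z.2⟫ + a2 * ‖z.1 - h z.2‖ ^ 2 = 0 := h0
      constructor
      · have h3 : a2 * ‖z.1 - h z.2‖ ^ 2 = 0 := by linarith
        have h4 : z.1 - h z.2 = 0 := by simpa [ha2pos.ne'] using h3
        exact sub_eq_zero.mp h4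
      · by_contra hne
        have := mul_pos ha1pos (hQ_pos z.2 _ hne)
        linarith
  rw [hset]
  -- Lyapunov function
  set Ψ : ℝ → ℝ := fun t => Φ (h (u t)) (u t) + c * W (x t) (u t) with hΨ
  set Ψ' : ℝ → ℝ := fun t => ⟪g (h (u t)) (u t), -(Q (u t) (g (x t) (u t)))⟫ +
    c * (⟪gradient (fun y => W y (u t)) (x t), f (x t) (u t)⟫ +
      ⟪gradient (fun v => W (x t) v) (u t), -(Q (u t) (g (x t) (u t)))⟫) with hΨ'
  have hΨd : ∀ t ≥ (0 : ℝ), HasDerivAt Ψ (Ψ' t) t := by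
    intro t ht
    have hu := hsolu t ht
    have hx := hsolx t ht
    have hhu := (hh_diff (u t)).hasFDerivAt.comp_hasDerivAt t hu
    have h1 := HasFDerivAt.comp_hasDerivAt (f := fun t => (h (u t), u t)) t
      (hΦd (h (u t), u t)).hasFDerivAt (hhu.prodMk hu)
    have h2 := HasFDerivAt.comp_hasDerivAt (f := fun t => (x t, u t)) t
      (hW_diff (x t, u t)).hasFDerivAt (hx.prodMk hu)
    rw [aux_split Φ _ _ (hΦd _)] at h1
    rw [aux_split W _ _ (hW_diff _)] at h2
    have h3 := h1.add (h2.const_mul c)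
    refine HasDerivAt.congr_deriv (f := Ψ) h3 ?_
    simp only [hΨ', hg (h (u t)) (u t), inner_add_left, ContinuousLinearMap.adjoint_inner_left]
  have hΨle : ∀ t ≥ (0 : ℝ), Ψ' t ≤ -D (x t, u t) := by
    intro t ht
    simp only [hΨ', hD]
    set X := x t
    set U := u t
    set G := g X U with hG
    set w := Q U G with hw
    have hqw : ‖w‖ ^ 2 ≤ q * ⟪w, G⟫ :=
      aux_Q (Q U) (hQ_symm U) (hQ0 U) q hqpos ((hq0 U).trans hq0q.le) G
    have h1 : ⟪g (h U) U, -w⟫ ≤ -⟪w, G⟫ + L * ‖X - h U‖ * ‖w‖ := by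
      have e1 : ⟪g (h U) U, -w⟫ = ⟪G - g (h U) U, w⟫ - ⟪w, G⟫ := by
        rw [inner_neg_right, inner_sub_left, real_inner_comm w G]; ring
      have e2 : ⟪G - g (h U) U, w⟫ ≤ L * ‖X - h U‖ * ‖w‖ :=
        (real_inner_le_norm _ _).trans (by gcongr; exact hLbound _ _ _)
      linarith
    have h2 : ⟪gradient (fun v => W X v) U, -w⟫ ≤ ζ * ‖X - h U‖ * ‖w‖ := by
      refine (real_inner_le_norm _ _).trans ?_
      rw [norm_neg]; gcongr; exact hW_gradu X U
    have h3 := hW_decay X U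
    set e := ‖X - h U‖
    have h4 : c * (⟪gradient (fun y => W y U) X, f X U⟫ + ⟪gradient (fun v => W X v) U, -w⟫) ≤
        c * (-γ * e ^ 2 + ζ * e * ‖w‖) := by gcongr
    have h5 : c * (-γ * e ^ 2 + ζ * e * ‖w‖) = - (L ^ 2 * κ) * e ^ 2 + L * e * ‖w‖ := by
      linear_combination (-e ^ 2) * hcγ + e * ‖w‖ * hcζ
    have h6 : 2 * (L * e * ‖w‖) ≤ L ^ 2 * r * e ^ 2 + ‖w‖ ^ 2 / r := by
      have : L ^ 2 * r * e ^ 2 + ‖w‖ ^ 2 / r - 2 * (L * e * ‖w‖) = (L * r * e - ‖w‖) ^ 2 / r := by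
        field_simp; ring
      have : 0 ≤ (L * r * e - ‖w‖) ^ 2 / r := by positivity
      linarith
    have h7 : ‖w‖ ^ 2 / r ≤ q / r * ⟪w, G⟫ := by
      rw [div_mul_eq_mul_div]; gcongr
    rw [ha1, ha2]
    linarith
  have hΨanti : ∀ t ≥ (0 : ℝ), Ψ t ≤ Ψ 0 := by
    intro t ht
    have h1 := (convex_Icc 0 t).image_sub_le_mul_sub_of_deriv_le (f := Ψ) (C := 0)
      (fun s hs => (hΨd s hs.1).continuousAt.continuousWithinAt)
      (fun s hs => (hΨd s (interior_subset hs).1).differentiableAt.differentiableWithinAt)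
      (fun s hs => by
        have hs := interior_subset hs
        rw [(hΨd s hs.1).deriv]
        linarith [hΨle s hs.1, hDnn (x s, u s)])
      0 (by simpa using ht) t (by simpa using ht) ht
    linarith
  have hWnn : ∀ y v, 0 ≤ W y v := fun y v => le_trans (by positivity) (hW_lb y v)
  have hcW : ∀ t, 0 ≤ c * W (x t) (u t) := fun t => mul_nonneg hcpos.le (hWnn _ _)
  -- compactness
  set S : Set F := {v : F | Φ (h v) v ≤ Ψ 0} with hS
  have hSc : IsCompact S := hlevel _
  have huS : ∀ t ≥ (0 : ℝ), u t ∈ S := by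
    intro t ht
    have h1 : Φ (h (u t)) (u t) + c * W (x t) (u t) ≤ Ψ 0 := hΨanti t ht
    have := hcW t
    change Φ (h (u t)) (u t) ≤ Ψ 0
    linarith
  have hφc : Continuous fun v => Φ (h v) v :=
    hΦ_smooth.continuous.comp (hhc.prodMk continuous_id)
  obtain ⟨v0, hv0, hv0min⟩ := hSc.exists_isMinOn ⟨u 0, huS 0 le_rfl⟩ hφc.continuousOn
  set m : ℝ := Φ (h v0) v0 with hm
  have hmle : ∀ t ≥ (0 : ℝ), m ≤ Φ (h (u t)) (u t) := fun t ht => hv0min (huS t ht)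
  set R : ℝ := (Ψ 0 - m) / c / α with hR
  have heR : ∀ t ≥ (0 : ℝ), ‖x t - h (u t)‖ ^ 2 ≤ R := by
    intro t ht
    have h1 : Φ (h (u t)) (u t) + c * W (x t) (u t) ≤ Ψ 0 := hΨanti t ht
    have h2 := hmle t ht
    rw [hR, le_div_iff₀ hα, le_div_iff₀ hcpos]
    have h3 := mul_le_mul_of_nonneg_left (hW_lb (x t) (u t)) hcpos.le
    linarith
  set K : Set (E × F) :=
    (fun y : E × F => (h y.2 + y.1, y.2)) '' (closedBall (0 : E) (R + 1) ×ˢ S) with hK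
  have hKc : IsCompact K := by
    refine ((isCompact_closedBall _ _).prod hSc).image ?_
    exact ((hhc.comp continuous_snd).add continuous_fst).prodMk continuous_snd
  have hzK : ∀ t ≥ (0 : ℝ), (x t, u t) ∈ K := by
    intro t ht
    refine ⟨(x t - h (u t), u t), ⟨?_, huS t ht⟩, by simp⟩
    rw [mem_closedBall_zero_iff]
    nlinarith [heR t ht, sq_nonneg (‖x t - h (u t)‖ - 1)]
  -- velocity bound
  set V : E × F → E × F := fun z => (f z.1 z.2, -(Q z.2 (g z.1 z.2))) with hV
  have hVc : Continuous V := hf_smooth.continuous.prodMk hQg.neg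
  obtain ⟨M, hM⟩ := hKc.exists_bound_of_continuousOn hVc.continuousOn
  have hLip : ∀ s ≥ (0 : ℝ), ∀ t ≥ (0 : ℝ),
      dist ((x s, u s) : E × F) (x t, u t) ≤ M * |s - t| := by
    intro s hs t ht
    have := (convex_Ici (0 : ℝ)).norm_image_sub_le_of_norm_hasDerivWithin_le
      (f := fun t => ((x t, u t) : E × F)) (f' := fun t => V (x t, u t)) (C := M)
      (fun t ht => ((hsolx t ht).prodMk (hsolu t ht)).hasDerivWithinAt)
      (fun t ht => hM _ (hzK t ht)) (x := t) (y := s) ht hs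
    rwa [← dist_eq_norm, Real.norm_eq_abs] at this
  exact aux_conv (fun t => (x t, u t)) K hKc hzK M hLip D hDc hDnn Ψ Ψ' hΨd hΨle m
    (fun t ht => (hmle t ht).trans (by
      change Φ (h (u t)) (u t) ≤ Φ (h (u t)) (u t) + c * W (x t) (u t)
      linarith [hcW t]))

/-- Main gradient-feedback stability theorem: under the timescale-separation
bound `sup_u ‖Q(u)‖ < γ/(ζL)`, every complete solution of the interconnection
`ẋ = f(x,u)`, `u̇ = -Q(u)H(u)ᵀ∇Φ(x,u)` converges to the set of critical points
of `min {Φ(x,u) : x = h(u)}`. -/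
theorem stmt3 {n p : ℕ}
    (f : EuclideanSpace ℝ (Fin n) → EuclideanSpace ℝ (Fin p) → EuclideanSpace ℝ (Fin n))
    (h : EuclideanSpace ℝ (Fin p) → EuclideanSpace ℝ (Fin n))
    (W : EuclideanSpace ℝ (Fin n) → EuclideanSpace ℝ (Fin p) → ℝ)
    (Φ : EuclideanSpace ℝ (Fin n) → EuclideanSpace ℝ (Fin p) → ℝ)
    (Q : EuclideanSpace ℝ (Fin p) → EuclideanSpace ℝ (Fin p) →L[ℝ] EuclideanSpace ℝ (Fin p))
    (ℓ : ℝ≥0) (α β γ ζ L : ℝ)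
    (hα : 0 < α) (hβ : 0 < β) (hγ : 0 < γ) (hζ : 0 < ζ) (hL : 0 < L)
    -- plant
    (hf_smooth : ContDiff ℝ 1 (Function.uncurry f))
    (hh_diff : Differentiable ℝ h)
    (hh_lip : LipschitzWith ℓ h)
    (hsteady : ∀ u, f (h u) u = 0)
    -- Lyapunov function for the plant
    (hW_diff : Differentiable ℝ (Function.uncurry W))
    (hW_lb : ∀ x u, α * ‖x - h u‖ ^ 2 ≤ W x u)
    (hW_ub : ∀ x u, W x u ≤ β * ‖x - h u‖ ^ 2)
    (hW_decay : ∀ x u, ⟪gradient (fun y => W y u) x, f x u⟫ ≤ -γ * ‖x - h u‖ ^ 2)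
    (hW_gradu : ∀ x u, ‖gradient (fun v => W x v) u‖ ≤ ζ * ‖x - h u‖)
    -- objective
    (hΦ_smooth : ContDiff ℝ 1 (Function.uncurry Φ))
    (hlevel : ∀ c : ℝ, IsCompact {u : EuclideanSpace ℝ (Fin p) | Φ (h u) u ≤ c})
    (hLbound : ∀ x x' u,
      ‖(ContinuousLinearMap.adjoint (fderiv ℝ h u)
            (gradient (fun y => Φ y u) x' - gradient (fun y => Φ y u) x) +
          (gradient (fun v => Φ x' v) u - gradient (fun v => Φ x v) u))‖ ≤ L * ‖x' - x‖)
    -- metric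
    (hQ_lip : LocallyLipschitz Q)
    (hQ_symm : ∀ u v w, ⟪Q u v, w⟫ = ⟪v, Q u w⟫)
    (hQ_pos : ∀ u v, v ≠ 0 → 0 < ⟪Q u v, v⟫)
    (hQ_bound : ∃ q : ℝ, (∀ u, ‖Q u‖ ≤ q) ∧ q < γ / (ζ * L))
    -- a complete solution of the interconnection
    (x : ℝ → EuclideanSpace ℝ (Fin n)) (u : ℝ → EuclideanSpace ℝ (Fin p))
    (hsolx : ∀ t ≥ (0 : ℝ), HasDerivAt x (f (x t) (u t)) t)
    (hsolu : ∀ t ≥ (0 : ℝ), HasDerivAt u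
      (-(Q (u t) (ContinuousLinearMap.adjoint (fderiv ℝ h (u t))
          (gradient (fun y => Φ y (u t)) (x t)) +
        gradient (fun v => Φ (x t) v) (u t)))) t) :
    Tendsto (fun t => Metric.infDist (x t, u t)
      {q : EuclideanSpace ℝ (Fin n) × EuclideanSpace ℝ (Fin p) |
        q.1 = h q.2 ∧
        ContinuousLinearMap.adjoint (fderiv ℝ h q.2) (gradient (fun y => Φ y q.2) q.1) +
          gradient (fun v => Φ q.1 v) q.2 = 0})
      atTop (nhds 0) := by
  refine aux_core f h W Φ Q α β γ ζ L hα hβ hγ hζ hL hf_smooth hh_diff hsteady hW_diff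
    hW_lb hW_ub hW_decay hW_gradu hΦ_smooth hlevel
    (fun x u => ContinuousLinearMap.adjoint (fderiv ℝ h u)
      (gradient (fun y => Φ y u) x) + gradient (fun v => Φ x v) u) (fun _ _ => rfl)
    (fun x x' u => ?_) hQ_lip.continuous hQ_symm hQ_pos hQ_bound x u hsolx hsolu
  have h1 := hLbound x x' u
  rw [map_sub, ← add_sub_add_comm] at h1
  exact h1
end

section
/- Under the same hypotheses as the main gradient-feedback stability theorem (plant f with Lyapunov function W and constants γ, ζ; steady-state map h; Φ continuously differentiable with u ↦ Φ(h(u),u) having compact sublevel sets and satisfying the L-bound ‖H(u)ᵀ(∇Φ(x',u) − ∇Φ(x,u))‖ ≤ L‖x'−x‖; metric Q with sup_u ‖Q(u)‖ < γ/(ζL)), every strict local minimizer (x*,u*) of min{Φ(x,u) : x = h(u)} — i.e. x* = h(u*) and u* is a strict local minimizer of u ↦ Φ(h(u),u) — is a Lyapunov-stable equilibrium of the interconnection ẋ = f(x,u), u̇ = −Q(u)H(u)ᵀ∇Φ(x,u): for every neighborhood 𝒱 of (x*,u*) there exists a neighborhood 𝒲 of (x*,u*) such that every complete solution starting in 𝒲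 remains in 𝒱 for all t ≥ 0. -/
open Filter Metric Real
open scoped RealInnerProductSpace Topology NNReal

theorem hasDerivAt_along {X U : Type*} [NormedAddCommGroup X] [InnerProductSpace ℝ X]
    [CompleteSpace X] [NormedAddCommGroup U] [InnerProductSpace ℝ U] [CompleteSpace U]
    (F : X → U → ℝ) (hF : Differentiable ℝ (Function.uncurry F))
    (x : ℝ → X) (u : ℝ → U) (x' : X) (u' : U) (t : ℝ)
    (hx : HasDerivAt x x' t) (hu : HasDerivAt u u' t) :
    HasDerivAt (fun τ => F (x τ) (u τ))
      (⟪gradient (fun y => F y (u t)) (x t), x'⟫ + ⟪gradient (fun v => F (x t) v) (u t), u'⟫) t := by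
  have hD := (hF (x t, u t)).hasFDerivAt
  have h1 : HasFDerivAt (fun y => F y (u t))
      ((fderiv ℝ (Function.uncurry F) (x t, u t)).comp (ContinuousLinearMap.inl ℝ X U)) (x t) :=
    HasFDerivAt.comp (g := Function.uncurry F) (f := fun y => (y, u t)) (x t) hD
      (hasFDerivAt_prodMk_left (𝕜 := ℝ) (x t) (u t))
  have h2 : HasFDerivAt (fun v => F (x t) v)
      ((fderiv ℝ (Function.uncurry F) (x t, u t)).comp (ContinuousLinearMap.inr ℝ X U)) (u t) :=
    HasFDerivAt.comp (g := Function.uncurry F) (f := fun v => (x t, v)) (u t) hD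
      (hasFDerivAt_prodMk_right (𝕜 := ℝ) (x t) (u t))
  have h3 : HasDerivAt (fun τ => F (x τ) (u τ))
      (fderiv ℝ (Function.uncurry F) (x t, u t) (x', u')) t :=
    HasFDerivAt.comp_hasDerivAt (l := Function.uncurry F) (f := fun τ => (x τ, u τ)) t hD
      (hx.prodMk hu)
  convert h3 using 1
  simp only [gradient, InnerProductSpace.toDual_symm_apply]
  rw [h1.fderiv, h2.fderiv]
  simp only [ContinuousLinearMap.comp_apply, ContinuousLinearMap.inl_apply,
    ContinuousLinearMap.inr_apply]
  rw [← map_add]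
  simp

theorem psd_bound {U : Type*} [NormedAddCommGroup U] [InnerProductSpace ℝ U]
    (Q : U →L[ℝ] U) (q : ℝ) (hq : 0 < q) (hb : ‖Q‖ ≤ q)
    (hs : ∀ v w, ⟪Q v, w⟫ = ⟪v, Q w⟫) (hp : ∀ v, v ≠ 0 → 0 < ⟪Q v, v⟫) (g : U) :
    ‖Q g‖ ^ 2 ≤ q * ⟪Q g, g⟫ := by
  have hp' : ∀ v, 0 ≤ ⟪Q v, v⟫ := by
    intro v
    by_cases hv : v = 0
    · simp [hv]
    · exact (hp v hv).le
  have h0 := hp' (q • g - Q g)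
  have h1 : ⟪Q (Q g), Q g⟫ ≤ q * ‖Q g‖ ^ 2 := by
    calc ⟪Q (Q g), Q g⟫ ≤ ‖Q (Q g)‖ * ‖Q g‖ := real_inner_le_norm _ _
      _ ≤ (q * ‖Q g‖) * ‖Q g‖ := by
        gcongr
        exact (Q.le_opNorm _).trans (by gcongr)
      _ = _ := by ring
  have h2 : ⟪Q (Q g), g⟫ = ‖Q g‖ ^ 2 := by
    rw [hs, real_inner_self_eq_norm_sq]
  rw [map_sub, map_smul, inner_sub_left, inner_sub_right, inner_sub_right, inner_smul_left,
    inner_smul_left, inner_smul_right, inner_smul_right, h2, real_inner_self_eq_norm_sq] at h0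
  simp only [conj_trivial] at h0
  have h3 : 0 ≤ q * (q * ⟪Q g, g⟫ - ‖Q g‖ ^ 2) := by nlinarith
  have := nonneg_of_mul_nonneg_right h3 hq
  linarith

theorem stable_of_antitone {E : Type*} [NormedAddCommGroup E] [ProperSpace E]
    (P : E → ℝ) (hP : Continuous P) (z0 : E)
    (hmin : ∃ s ∈ 𝓝 z0, ∀ z ∈ s, z ≠ z0 → P z0 < P z) :
    ∀ V ∈ 𝓝 z0, ∃ N ∈ 𝓝 z0, ∀ z : ℝ → E, ContinuousOn z (Set.Ici 0) →
      AntitoneOn (fun t => P (z t)) (Set.Ici 0) → z 0 ∈ N → ∀ t ≥ (0 : ℝ), z t ∈ V := by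
  intro V hV
  obtain ⟨s, hs, hmin⟩ := hmin
  obtain ⟨r, hr, hrs⟩ := Metric.nhds_basis_closedBall.mem_iff.1 (inter_mem hs hV)
  have hm : ∃ m, P z0 < m ∧ ∀ z ∈ sphere z0 r, m ≤ P z := by
    rcases (sphere z0 r).eq_empty_or_nonempty with he | hne
    · exact ⟨P z0 + 1, by linarith, by simp [he]⟩
    · obtain ⟨w, hw, hwm⟩ := (isCompact_sphere z0 r).exists_isMinOn hne hP.continuousOn
      refine ⟨P w, hmin w (hrs (sphere_subset_closedBall hw)).1 ?_, fun z hz => hwm hz⟩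
      rintro rfl
      simp at hw
      exact hr.ne hw
  obtain ⟨m, hm0, hm⟩ := hm
  refine ⟨ball z0 r ∩ {z | P z < m}, inter_mem (ball_mem_nhds _ hr)
    ((isOpen_lt hP continuous_const).mem_nhds hm0), ?_⟩
  intro z hz hanti hz0 t ht
  by_contra hcon
  have hd : r < dist (z t) z0 := by
    by_contra hle
    exact hcon (hrs (mem_closedBall.2 (not_lt.1 hle))).2
  have hc : ContinuousOn (fun τ => dist (z τ) z0) (Set.Icc 0 t) :=
    (continuous_id.dist continuous_const).comp_continuousOn (hz.mono Set.Icc_subset_Ici_self)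
  obtain ⟨τ, hτ, hτr⟩ := intermediate_value_Icc ht hc ⟨(mem_ball.1 hz0.1).le, hd.le⟩
  have h1 := hm (z τ) hτr
  have h2 : P (z τ) ≤ P (z 0) := hanti (Set.mem_Ici.2 le_rfl) hτ.1 hτ.1
  have h3 : P (z 0) < m := hz0.2
  linarith

/-- Strict local minimizers of `min {Φ(x,u) : x = h(u)}` are Lyapunov-stable
equilibria of the interconnection `ẋ = f(x,u)`, `u̇ = -Q(u)H(u)ᵀ∇Φ(x,u)`. -/
theorem stmt4 {n p : ℕ}
    (f : EuclideanSpace ℝ (Fin n) → EuclideanSpace ℝ (Fin p) → EuclideanSpace ℝ (Fin n))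
    (h : EuclideanSpace ℝ (Fin p) → EuclideanSpace ℝ (Fin n))
    (W : EuclideanSpace ℝ (Fin n) → EuclideanSpace ℝ (Fin p) → ℝ)
    (Φ : EuclideanSpace ℝ (Fin n) → EuclideanSpace ℝ (Fin p) → ℝ)
    (Q : EuclideanSpace ℝ (Fin p) → EuclideanSpace ℝ (Fin p) →L[ℝ] EuclideanSpace ℝ (Fin p))
    (ℓ : ℝ≥0) (α β γ ζ L : ℝ)
    (hα : 0 < α) (hβ : 0 < β) (hγ : 0 < γ) (hζ : 0 < ζ) (hL : 0 < L)
    -- plant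
    (hf_smooth : ContDiff ℝ 1 (Function.uncurry f))
    (hh_diff : Differentiable ℝ h)
    (hh_lip : LipschitzWith ℓ h)
    (hsteady : ∀ u, f (h u) u = 0)
    -- Lyapunov function for the plant
    (hW_diff : Differentiable ℝ (Function.uncurry W))
    (hW_lb : ∀ x u, α * ‖x - h u‖ ^ 2 ≤ W x u)
    (hW_ub : ∀ x u, W x u ≤ β * ‖x - h u‖ ^ 2)
    (hW_decay : ∀ x u, ⟪gradient (fun y => W y u) x, f x u⟫ ≤ -γ * ‖x - h u‖ ^ 2)
    (hW_gradu : ∀ x u, ‖gradient (fun v => W x v) u‖ ≤ ζ * ‖x - h u‖)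
    -- objective
    (hΦ_smooth : ContDiff ℝ 1 (Function.uncurry Φ))
    (hlevel : ∀ c : ℝ, IsCompact {u : EuclideanSpace ℝ (Fin p) | Φ (h u) u ≤ c})
    (hLbound : ∀ x x' u,
      ‖(ContinuousLinearMap.adjoint (fderiv ℝ h u)
            (gradient (fun y => Φ y u) x' - gradient (fun y => Φ y u) x) +
          (gradient (fun v => Φ x' v) u - gradient (fun v => Φ x v) u))‖ ≤ L * ‖x' - x‖)
    -- metric
    (hQ_lip : LocallyLipschitz Q)
    (hQ_symm : ∀ u v w, ⟪Q u v, w⟫ = ⟪v, Q u w⟫)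
    (hQ_pos : ∀ u v, v ≠ 0 → 0 < ⟪Q u v, v⟫)
    (hQ_bound : ∃ q : ℝ, (∀ u, ‖Q u‖ ≤ q) ∧ q < γ / (ζ * L))
    -- a strict local minimizer of min {Φ(x,u) : x = h(u)}
    (xs : EuclideanSpace ℝ (Fin n)) (us : EuclideanSpace ℝ (Fin p))
    (hxs : xs = h us)
    (hstrict : ∃ s ∈ 𝓝 us, ∀ v ∈ s, v ≠ us → Φ (h us) us < Φ (h v) v) :
    -- Lyapunov stability of (xs, us) for the interconnection
    ∀ V ∈ 𝓝 ((xs, us) : EuclideanSpace ℝ (Fin n) × EuclideanSpace ℝ (Fin p)),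
      ∃ N ∈ 𝓝 ((xs, us) : EuclideanSpace ℝ (Fin n) × EuclideanSpace ℝ (Fin p)),
        ∀ (x : ℝ → EuclideanSpace ℝ (Fin n)) (u : ℝ → EuclideanSpace ℝ (Fin p)),
          (∀ t ≥ (0 : ℝ), HasDerivAt x (f (x t) (u t)) t) →
          (∀ t ≥ (0 : ℝ), HasDerivAt u
            (-(Q (u t) (ContinuousLinearMap.adjoint (fderiv ℝ h (u t))
                (gradient (fun y => Φ y (u t)) (x t)) +
              gradient (fun v => Φ (x t) v) (u t)))) t) →
          (x 0, u 0) ∈ N → ∀ t ≥ (0 : ℝ), (x t, u t) ∈ V := by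
  obtain ⟨q', hq', hq'lt⟩ := hQ_bound
  obtain ⟨q, hqdef⟩ : ∃ q, q = γ / (ζ * L) := ⟨_, rfl⟩
  have hζL : 0 < ζ * L := mul_pos hζ hL
  have hq0 : 0 < q := hqdef ▸ div_pos hγ hζL
  have hqγ : q * (ζ * L) = γ := by rw [hqdef]; field_simp
  have hQq : ∀ u, ‖Q u‖ ≤ q := fun u => (hq' u).trans (hqdef ▸ hq'lt.le)
  have hΦd : Differentiable ℝ (Function.uncurry Φ) := hΦ_smooth.differentiable one_ne_zero
  let P : EuclideanSpace ℝ (Fin n) × EuclideanSpace ℝ (Fin p) → ℝ :=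
    fun z => ζ * Φ (h z.2) z.2 + L * W z.1 z.2
  have hP : Continuous P := by
    have h1 : Continuous (fun z : EuclideanSpace ℝ (Fin n) × EuclideanSpace ℝ (Fin p) =>
        Φ (h z.2) z.2) :=
      hΦd.continuous.comp ((hh_diff.continuous.comp continuous_snd).prodMk continuous_snd)
    have h2 : Continuous (fun z : EuclideanSpace ℝ (Fin n) × EuclideanSpace ℝ (Fin p) =>
        W z.1 z.2) := hW_diff.continuous
    exact (continuous_const.mul h1).add (continuous_const.mul h2)
  intro V hV
  have hmin : ∃ s ∈ 𝓝 ((xs, us) : EuclideanSpace ℝ (Fin n) × EuclideanSpace ℝ (Fin p)),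
      ∀ z ∈ s, z ≠ (xs, us) → P (xs, us) < P z := by
    obtain ⟨s, hs, hs'⟩ := hstrict
    refine ⟨Prod.snd ⁻¹' s, continuous_snd.continuousAt hs, ?_⟩
    rintro ⟨y, v⟩ hv hne
    have hW0 : W xs us ≤ 0 := by
      have := hW_ub xs us
      simpa [hxs] using this
    have hlb := hW_lb y v
    change ζ * Φ (h us) us + L * W xs us < ζ * Φ (h v) v + L * W y v
    have hLW : L * W xs us ≤ 0 := mul_nonpos_of_nonneg_of_nonpos hL.le hW0
    by_cases hvu : v = us
    · subst hvu
      have hy : y - h v ≠ 0 := by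
        intro h0
        apply hne
        rw [hxs, sub_eq_zero.1 h0]
      have : 0 < α * ‖y - h v‖ ^ 2 := mul_pos hα (pow_pos (norm_pos_iff.2 hy) 2)
      have : 0 < L * W y v := mul_pos hL (by linarith)
      linarith
    · have h1 := mul_lt_mul_of_pos_left (hs' v hv hvu) hζ
      have : 0 ≤ L * W y v := mul_nonneg hL.le (le_trans (by positivity) hlb)
      linarith
  obtain ⟨N, hN, hstab⟩ := stable_of_antitone P hP _ hmin V hV
  refine ⟨N, hN, ?_⟩
  intro x u hx hu h0
  have hder : ∀ t ≥ (0 : ℝ), ∃ d ≤ (0 : ℝ), HasDerivAt (fun τ => P (x τ, u τ)) d t := by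
    intro t ht
    have hut := hu t ht
    obtain ⟨g, hg⟩ : ∃ g, g = ContinuousLinearMap.adjoint (fderiv ℝ h (u t))
                (gradient (fun y => Φ y (u t)) (x t)) +
              gradient (fun v => Φ (x t) v) (u t) := ⟨_, rfl⟩
    rw [← hg] at hut
    have hhu : HasDerivAt (fun τ => h (u τ)) (fderiv ℝ h (u t) (-(Q (u t) g))) t :=
      (hh_diff (u t)).hasFDerivAt.comp_hasDerivAt t hut
    have d1 := hasDerivAt_along Φ hΦd _ u _ _ t hhu hut
    have d2 := hasDerivAt_along W hW_diff x u _ _ t (hx t ht) hut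
    refine ⟨_, ?_, (d1.const_mul ζ).add (d2.const_mul L)⟩
    rw [← ContinuousLinearMap.adjoint_inner_left, ← inner_add_left]
    have hLb := hLbound (h (u t)) (x t) (u t)
    rw [map_sub, sub_add_sub_comm, ← hg] at hLb
    generalize ContinuousLinearMap.adjoint (fderiv ℝ h (u t))
      (gradient (fun y => Φ y (u t)) (h (u t))) +
        gradient (fun v => Φ (h (u t)) v) (u t) = g0 at hLb ⊢
    have hdec := hW_decay (x t) (u t)
    have hgu := hW_gradu (x t) (u t)
    have hpsd := psd_bound (Q (u t)) q hq0 (hQq _) (hQ_symm _) (hQ_pos _) g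
    have e1 : ⟪g0, -(Q (u t) g)⟫ ≤ -⟪Q (u t) g, g⟫ + L * ‖x t - h (u t)‖ * ‖Q (u t) g‖ := by
      have a1 : ⟪g0, -(Q (u t) g)⟫ = -⟪Q (u t) g, g⟫ + ⟪g - g0, Q (u t) g⟫ := by
        rw [inner_neg_right, inner_sub_left, real_inner_comm g (Q (u t) g)]
        ring
      have a2 := real_inner_le_norm (g - g0) (Q (u t) g)
      have a3 := mul_le_mul_of_nonneg_right hLb (norm_nonneg (Q (u t) g))
      linarith
    have e2 : ⟪gradient (fun v => W (x t) v) (u t), -(Q (u t) g)⟫ ≤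
        ζ * ‖x t - h (u t)‖ * ‖Q (u t) g‖ := by
      have a2 := real_inner_le_norm (gradient (fun v => W (x t) v) (u t)) (-(Q (u t) g))
      rw [norm_neg] at a2
      exact a2.trans (mul_le_mul_of_nonneg_right hgu (norm_nonneg (Q (u t) g)))
    generalize ‖Q (u t) g‖ = v at *
    generalize ‖x t - h (u t)‖ = e at *
    generalize ⟪Q (u t) g, g⟫ = A at *
    have f1 := mul_le_mul_of_nonneg_left e1 hζ.le
    have f2 := mul_le_mul_of_nonneg_left (add_le_add hdec e2) hL.le
    refine (add_le_add f1 f2).trans ?_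
    have key : 0 ≤ q * (ζ * A - 2 * (ζ * L) * e * v + L * γ * e ^ 2) := by
      have b1 := mul_le_mul_of_nonneg_left hpsd hζ.le
      have b2 : 0 ≤ ζ * (v - q * L * e) ^ 2 := mul_nonneg hζ.le (sq_nonneg _)
      rw [← hqγ]
      nlinarith
    have := nonneg_of_mul_nonneg_right key hq0
    linarith
  refine hstab (fun t => (x t, u t)) ?_ ?_ h0
  · intro t ht
    exact ((hx t ht).continuousAt.prodMk (hu t ht).continuousAt).continuousWithinAt
  · apply antitoneOn_of_deriv_nonpos (convex_Ici 0)
    · intro t ht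
      obtain ⟨d, -, hd⟩ := hder t ht
      exact hd.continuousAt.continuousWithinAt
    · intro t ht
      obtain ⟨d, -, hd⟩ := hder t (interior_subset ht)
      exact hd.differentiableAt.differentiableWithinAt
    · intro t ht
      obtain ⟨d, hd0, hd⟩ := hder t (interior_subset ht)
      rw [hd.deriv]
      exact hd0
end

section
/- Under the hypotheses of the main gradient-feedback stability theorem (plant f with Lyapunov function W and constants γ, ζ; Φ continuously differentiable with u ↦ Φ(h(u),u) having compact sublevel sets and satisfying the L-bound; metric Q with sup_u ‖Q(u)‖ < γ/(ζL)), if in addition Φ : ℝⁿ × ℝᵖ → ℝ is convex and the steady-state map h is affine (h(u) = H₀u + r for a linear map H₀ and vector r), then every complete solution of ẋ = f(x,u), u̇ = −Q(u)H(u)ᵀ∇Φ(x,u) converges to the set of global minimizers of min{Φ(x,u) : x = h(u)}. -/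
open Filter Metric Real
open scoped RealInnerProductSpace Topology NNReal

/-- A mean-value inequality. -/
lemma aux_decr (v v' : ℝ → ℝ) (hv : ∀ t ≥ (0:ℝ), HasDerivAt v (v' t) t) (a b c : ℝ)
    (ha : 0 ≤ a) (hab : a ≤ b) (hc : ∀ t ∈ Set.Icc a b, v' t ≤ -c) :
    v b ≤ v a - c * (b - a) := by
  have hd : ∀ t ∈ Set.Icc a b, HasDerivAt v (v' t) t := fun t ht => hv t (ha.trans ht.1)
  have := Convex.image_sub_le_mul_sub_of_deriv_le (convex_Icc a b) (f := v) (C := -c)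
    (fun t ht => (hd t ht).continuousAt.continuousWithinAt)
    (fun t ht => (hd t (interior_subset ht)).differentiableAt.differentiableWithinAt)
    (fun t ht => by
      rw [(hd t (interior_subset ht)).deriv]; exact hc t (interior_subset ht))
    a (Set.left_mem_Icc.2 hab) b (Set.right_mem_Icc.2 hab) hab
  linarith

/-- LaSalle-type lemma. -/
lemma aux_lasalle {E : Type*} [NormedAddCommGroup E] [NormedSpace ℝ E]
    (K Z : Set E) (hK : IsCompact K) (z z' : ℝ → E)
    (hz : ∀ t ≥ (0:ℝ), HasDerivAt z (z' t) t) (hzK : ∀ t ≥ (0:ℝ), z t ∈ K)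
    (M : ℝ) (hM : ∀ t ≥ (0:ℝ), ‖z' t‖ ≤ M)
    (v v' : ℝ → ℝ) (hv : ∀ t ≥ (0:ℝ), HasDerivAt v (v' t) t)
    (D : E → ℝ) (hDc : ContinuousOn D K) (hD0 : ∀ k, 0 ≤ D k)
    (hvD : ∀ t ≥ (0:ℝ), v' t ≤ -D (z t)) (m : ℝ) (hm : ∀ t ≥ (0:ℝ), m ≤ v t)
    (hZ : ∀ k ∈ K, D k = 0 → k ∈ Z) :
    Tendsto (fun t => Metric.infDist (z t) Z) atTop (nhds 0) := by
  have hM0 : 0 ≤ M := (norm_nonneg _).trans (hM 0 le_rfl)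
  rw [Metric.tendsto_atTop]
  intro ε hε
  -- positive lower bound of D away from Z
  obtain ⟨c, hc, hcD⟩ : ∃ c > 0, ∀ k ∈ K, ε / 2 ≤ Metric.infDist k Z → c ≤ D k := by
    have hK' : IsCompact (K ∩ {k | ε / 2 ≤ Metric.infDist k Z}) :=
      hK.inter_right (isClosed_le continuous_const (Metric.continuous_infDist_pt Z))
    rcases (K ∩ {k | ε / 2 ≤ Metric.infDist k Z}).eq_empty_or_nonempty with he | hne
    · refine ⟨1, one_pos, fun k hk hk' => ?_⟩
      exact absurd (show k ∈ K ∩ {k | ε / 2 ≤ Metric.infDist k Z} from ⟨hk, hk'⟩) (by simp [he])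
    · obtain ⟨k0, hk0, hmin⟩ := hK'.exists_isMinOn hne (hDc.mono Set.inter_subset_left)
      refine ⟨D k0, lt_of_le_of_ne (hD0 k0) fun h0 => ?_, fun k hk hk' => hmin ⟨hk, hk'⟩⟩
      have h1 := Metric.infDist_zero_of_mem (hZ k0 hk0.1 h0.symm)
      have h2 : ε / 2 ≤ Metric.infDist k0 Z := hk0.2
      linarith
  set τ : ℝ := ε / (2 * (M + 1)) with hτ
  have hτ0 : 0 < τ := by positivity
  have hMτ : M * τ ≤ ε / 2 := by
    rw [hτ, ← mul_div_assoc, div_le_div_iff₀ (by positivity) (by norm_num)]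
    nlinarith
  have hanti : ∀ a b : ℝ, 0 ≤ a → a ≤ b → v b ≤ v a := fun a b ha hab => by
    have := aux_decr v v' hv a b 0 ha hab (fun t ht => by
      have := hvD t (ha.trans ht.1); have := hD0 (z t); linarith)
    linarith
  -- near-infimum
  have hbdd : BddBelow (v '' Set.Ici 0) := ⟨m, by rintro _ ⟨t, ht, rfl⟩; exact hm t ht⟩
  obtain ⟨_, ⟨T, hT, rfl⟩, hTlt⟩ := exists_lt_of_csInf_lt (s := v '' Set.Ici 0)
    ⟨v 0, 0, Set.self_mem_Ici, rfl⟩ (show sInf (v '' Set.Ici 0) < sInf (v '' Set.Ici 0) + c * τ by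
      have := mul_pos hc hτ0; linarith)
  refine ⟨T, fun t ht => ?_⟩
  rw [Real.dist_eq, sub_zero, abs_of_nonneg Metric.infDist_nonneg]
  by_contra! hcon
  have ht0 : 0 ≤ t := le_trans hT ht
  have hdist : ∀ s ∈ Set.Icc t (t + τ), ‖z s - z t‖ ≤ M * (s - t) :=
    norm_image_sub_le_of_norm_deriv_le_segment' (f' := z')
      (fun s hs => (hz s (ht0.trans hs.1)).hasDerivWithinAt) (fun s hs => hM s (ht0.trans hs.1))
  have h1 := aux_decr v v' hv t (t + τ) c ht0 (by linarith) (fun s hs => by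
    have hs0 := ht0.trans hs.1
    have h2 := hdist s hs
    have h3 : M * (s - t) ≤ M * τ := mul_le_mul_of_nonneg_left (by linarith [hs.2]) hM0
    have h4 := Metric.infDist_le_infDist_add_dist (s := Z) (x := z t) (y := z s)
    rw [dist_comm, dist_eq_norm] at h4
    have := hcD (z s) (hzK s hs0) (by linarith)
    have := hvD s hs0
    linarith)
  have h2 := hanti T t hT ht
  have h3 := csInf_le hbdd ⟨t + τ, show (0:ℝ) ≤ t + τ by linarith, rfl⟩
  have : c * (t + τ - t) = c * τ := by ring
  linarith

/-- A critical point of a convex function is a global minimizer. -/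
lemma aux_convex_min {F : Type*} [NormedAddCommGroup F] [NormedSpace ℝ F] (φ : F → ℝ)
    (hφ : ConvexOn ℝ Set.univ φ) (u : F) (hu : HasFDerivAt φ (0 : F →L[ℝ] ℝ) u) (y : F) :
    φ u ≤ φ y := by
  have hl : HasDerivAt (fun s : ℝ => u + s • (y - u)) (y - u) 0 := by
    simpa using ((hasDerivAt_id (0:ℝ)).smul_const (y - u)).const_add u
  have hk : HasDerivAt (fun s : ℝ => φ (u + s • (y - u))) 0 0 := by
    have hu' : HasFDerivAt φ (0 : F →L[ℝ] ℝ) (u + (0:ℝ) • (y - u)) := by simpa using hu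
    exact hu'.comp_hasDerivAt (0:ℝ) hl
  have ht := hk.tendsto_slope_zero_right
  have : (0:ℝ) ≤ φ y - φ u := by
    refine le_of_tendsto ht ?_
    filter_upwards [Ioo_mem_nhdsGT (show (0:ℝ) < 1 by norm_num)] with s hs
    have h1 := hφ.2 (Set.mem_univ u) (Set.mem_univ y) (show 0 ≤ 1 - s by linarith [hs.2])
      hs.1.le (by ring)
    have h2 : (1 - s) • u + s • y = u + s • (y - u) := by
      rw [sub_smul, smul_sub, one_smul]; abel
    rw [h2] at h1
    simp only [smul_eq_mul, zero_add, zero_smul, add_zero] at h1 ⊢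
    rw [inv_mul_le_iff₀ hs.1]
    linarith
  linarith

lemma aux_gradx {E F : Type*} [NormedAddCommGroup E] [InnerProductSpace ℝ E] [CompleteSpace E]
    [NormedAddCommGroup F] [InnerProductSpace ℝ F] (Ψ : E → F → ℝ) (x : E) (u : F)
    (hd : DifferentiableAt ℝ (Function.uncurry Ψ) (x, u)) (v : E) :
    ⟪gradient (fun y => Ψ y u) x, v⟫ = fderiv ℝ (Function.uncurry Ψ) (x, u) (v, 0) := by
  have h1 : HasFDerivAt (fun y : E => (y, u)) (ContinuousLinearMap.inl ℝ E F) x :=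
    hasFDerivAt_prodMk_left x u
  have h2 : HasFDerivAt (fun y => Ψ y u)
      ((fderiv ℝ (Function.uncurry Ψ) (x, u)).comp (ContinuousLinearMap.inl ℝ E F)) x :=
    HasFDerivAt.comp (g := Function.uncurry Ψ) x hd.hasFDerivAt h1
  rw [gradient, InnerProductSpace.toDual_symm_apply, h2.fderiv]
  simp

lemma aux_gradu {E F : Type*} [NormedAddCommGroup E] [InnerProductSpace ℝ E]
    [NormedAddCommGroup F] [InnerProductSpace ℝ F] [CompleteSpace F] (Ψ : E → F → ℝ) (x : E) (u : F)
    (hd : DifferentiableAt ℝ (Function.uncurry Ψ) (x, u)) (v : F) :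
    ⟪gradient (fun w => Ψ x w) u, v⟫ = fderiv ℝ (Function.uncurry Ψ) (x, u) (0, v) := by
  have h1 : HasFDerivAt (fun y : F => (x, y)) (ContinuousLinearMap.inr ℝ E F) u :=
    hasFDerivAt_prodMk_right x u
  have h2 : HasFDerivAt (fun y => Ψ x y)
      ((fderiv ℝ (Function.uncurry Ψ) (x, u)).comp (ContinuousLinearMap.inr ℝ E F)) u :=
    HasFDerivAt.comp (g := Function.uncurry Ψ) u hd.hasFDerivAt h1
  rw [gradient, InnerProductSpace.toDual_symm_apply, h2.fderiv]
  simp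

/-- the quadratic form estimate -/
lemma aux_quad (γ ζ L q : ℝ) (hγ : 0 < γ) (hζ : 0 < ζ) (hL : 0 < L) (hq : 0 < q)
    (hql : q < γ / (ζ * L)) : ∃ δ > 0, ∀ e w : ℝ,
      L / ζ * (-γ * e ^ 2 + ζ * e * w) + (-(w ^ 2 / q) + L * e * w) ≤ -(δ * (e ^ 2 + w ^ 2)) := by
  -- -(a e² - 2 L e w + b w²), a b > L²
  set a := L / ζ * γ with ha
  set b := 1 / q with hb
  have ha0 : 0 < a := by positivity
  have hb0 : 0 < b := by positivity
  have hab : L ^ 2 < a * b := by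
    rw [lt_div_iff₀ (by positivity)] at hql
    have : a * b = L * γ / (ζ * q) := by rw [ha, hb]; field_simp
    rw [this, lt_div_iff₀ (by positivity)]
    nlinarith
  refine ⟨(a * b - L ^ 2) / (a + b), div_pos (by linarith) (by linarith), fun e w => ?_⟩
  have h1 : L / ζ * (-γ * e ^ 2 + ζ * e * w) + (-(w ^ 2 / q) + L * e * w)
      = -(a * e ^ 2 - 2 * L * e * w + b * w ^ 2) := by
    rw [ha, hb]; field_simp; ring
  rw [h1, neg_le_neg_iff, div_mul_eq_mul_div, div_le_iff₀ (by positivity)]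
  nlinarith [sq_nonneg (a * e - L * w), sq_nonneg (L * e - b * w)]

set_option maxHeartbeats 400000 in
/-- Under convexity of `Φ` and affinity of `h`, all trajectories of the
gradient-feedback interconnection converge to the set of global minimizers
of `min {Φ(x,u) : x = h(u)}`. -/
theorem stmt5 {n p : ℕ}
    (f : EuclideanSpace ℝ (Fin n) → EuclideanSpace ℝ (Fin p) → EuclideanSpace ℝ (Fin n))
    (h : EuclideanSpace ℝ (Fin p) → EuclideanSpace ℝ (Fin n))
    (W : EuclideanSpace ℝ (Fin n) → EuclideanSpace ℝ (Fin p) → ℝ)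
    (Φ : EuclideanSpace ℝ (Fin n) → EuclideanSpace ℝ (Fin p) → ℝ)
    (Q : EuclideanSpace ℝ (Fin p) → EuclideanSpace ℝ (Fin p) →L[ℝ] EuclideanSpace ℝ (Fin p))
    (ℓ : ℝ≥0) (α β γ ζ L : ℝ)
    (hα : 0 < α) (hβ : 0 < β) (hγ : 0 < γ) (hζ : 0 < ζ) (hL : 0 < L)
    -- plant
    (hf_smooth : ContDiff ℝ 1 (Function.uncurry f))
    (hh_diff : Differentiable ℝ h)
    (hh_lip : LipschitzWith ℓ h)
    (hsteady : ∀ u, f (h u) u = 0)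
    -- Lyapunov function for the plant
    (hW_diff : Differentiable ℝ (Function.uncurry W))
    (hW_lb : ∀ x u, α * ‖x - h u‖ ^ 2 ≤ W x u)
    (hW_ub : ∀ x u, W x u ≤ β * ‖x - h u‖ ^ 2)
    (hW_decay : ∀ x u, ⟪gradient (fun y => W y u) x, f x u⟫ ≤ -γ * ‖x - h u‖ ^ 2)
    (hW_gradu : ∀ x u, ‖gradient (fun v => W x v) u‖ ≤ ζ * ‖x - h u‖)
    -- objective
    (hΦ_smooth : ContDiff ℝ 1 (Function.uncurry Φ))
    (hlevel : ∀ c : ℝ, IsCompact {u : EuclideanSpace ℝ (Fin p) | Φ (h u) u ≤ c})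
    (hLbound : ∀ x x' u,
      ‖(ContinuousLinearMap.adjoint (fderiv ℝ h u)
            (gradient (fun y => Φ y u) x' - gradient (fun y => Φ y u) x) +
          (gradient (fun v => Φ x' v) u - gradient (fun v => Φ x v) u))‖ ≤ L * ‖x' - x‖)
    -- metric
    (hQ_lip : LocallyLipschitz Q)
    (hQ_symm : ∀ u v w, ⟪Q u v, w⟫ = ⟪v, Q u w⟫)
    (hQ_pos : ∀ u v, v ≠ 0 → 0 < ⟪Q u v, v⟫)
    (hQ_bound : ∃ q : ℝ, (∀ u, ‖Q u‖ ≤ q) ∧ q < γ / (ζ * L))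
    -- convexity of Φ and affinity of h
    (hΦ_convex : ConvexOn ℝ Set.univ (Function.uncurry Φ))
    (hh_affine : ∃ (H₀ : EuclideanSpace ℝ (Fin p) →L[ℝ] EuclideanSpace ℝ (Fin n))
      (r : EuclideanSpace ℝ (Fin n)), ∀ u, h u = H₀ u + r)
    -- a complete solution of the interconnection
    (x : ℝ → EuclideanSpace ℝ (Fin n)) (u : ℝ → EuclideanSpace ℝ (Fin p))
    (hsolx : ∀ t ≥ (0 : ℝ), HasDerivAt x (f (x t) (u t)) t)
    (hsolu : ∀ t ≥ (0 : ℝ), HasDerivAt u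
      (-(Q (u t) (ContinuousLinearMap.adjoint (fderiv ℝ h (u t))
          (gradient (fun y => Φ y (u t)) (x t)) +
        gradient (fun v => Φ (x t) v) (u t)))) t) :
    Tendsto (fun t => Metric.infDist (x t, u t)
      {q : EuclideanSpace ℝ (Fin n) × EuclideanSpace ℝ (Fin p) |
        q.1 = h q.2 ∧
        ∀ q' : EuclideanSpace ℝ (Fin n) × EuclideanSpace ℝ (Fin p),
          q'.1 = h q'.2 → Φ q.1 q.2 ≤ Φ q'.1 q'.2})
      atTop (nhds 0) := by
  obtain ⟨H₀, r, hH⟩ := hh_affine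
  obtain ⟨q₀, hq₀, hq₀lt⟩ := hQ_bound
  have hDh : ∀ w, fderiv ℝ h w = H₀ := by
    intro w
    have : h = fun w => H₀ w + r := funext hH
    rw [this]
    exact (H₀.hasFDerivAt.add_const r).fderiv
  have hhc : Continuous h := hh_diff.continuous
  -- positive bound on Q
  have hq₀0 : 0 ≤ q₀ := (norm_nonneg _).trans (hq₀ 0)
  obtain ⟨q, hq1, hq2⟩ := exists_between hq₀lt
  have hq0 : 0 < q := lt_of_le_of_lt hq₀0 hq1
  have hQq : ∀ w, ‖Q w‖ ≤ q := fun w => (hq₀ w).trans hq1.le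
  have hQ_nonneg : ∀ w v, 0 ≤ ⟪Q w v, v⟫ := by
    intro w v
    by_cases hv : v = 0
    · simp [hv]
    · exact (hQ_pos w v hv).le
  have hQc : Continuous Q := hQ_lip.continuous
  obtain ⟨δ, hδ, hquad⟩ := aux_quad γ ζ L q hγ hζ hL hq0 hq2
  have hΦd : Differentiable ℝ (Function.uncurry Φ) := hΦ_smooth.differentiable (by norm_num)
  set G : EuclideanSpace ℝ (Fin n) → EuclideanSpace ℝ (Fin p) → EuclideanSpace ℝ (Fin p) :=
    fun y w => ContinuousLinearMap.adjoint (fderiv ℝ h w) (gradient (fun y => Φ y w) y) +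
      gradient (fun v => Φ y v) w with hG
  have hGin : ∀ y w v, ⟪G y w, v⟫ = fderiv ℝ (Function.uncurry Φ) (y, w) (H₀ v, v) := by
    intro y w v
    simp only [hG]
    rw [inner_add_left, ContinuousLinearMap.adjoint_inner_left, hDh, aux_gradx Φ y w (hΦd _),
      aux_gradu Φ y w (hΦd _), ← map_add]
    simp
  have hGc : Continuous (Function.uncurry G) := by
    have h1 : Function.uncurry G = fun z => (InnerProductSpace.toDual ℝ _).symm
        ((fderiv ℝ (Function.uncurry Φ) z).comp (H₀.prod (ContinuousLinearMap.id ℝ _))) := by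
      funext z
      refine ext_inner_right ℝ fun v => ?_
      rw [InnerProductSpace.toDual_symm_apply]
      exact hGin z.1 z.2 v
    rw [h1]
    have h2 : Continuous (fderiv ℝ (Function.uncurry Φ)) := hΦ_smooth.continuous_fderiv (by norm_num)
    exact (LinearIsometryEquiv.continuous _).comp (h2.clm_comp continuous_const)
  have hGL : ∀ y w, ‖G y w - G (h w) w‖ ≤ L * ‖y - h w‖ := by
    intro y w
    have := hLbound (h w) y w
    convert this using 2
    simp only [hG, map_sub]
    abel
  have hsolu' : ∀ t ≥ (0:ℝ), HasDerivAt u (-(Q (u t) (G (x t) (u t)))) t := hsolu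
  clear_value G
  clear hLbound hsolu
  -- reduced cost
  set φ : EuclideanSpace ℝ (Fin p) → ℝ := fun w => Φ (h w) w with hφ
  have hφd : ∀ w, HasFDerivAt φ ((fderiv ℝ (Function.uncurry Φ) (h w, w)).comp
      (H₀.prod (ContinuousLinearMap.id ℝ _))) w := by
    intro w
    have h1 : HasFDerivAt (fun w => (h w, w)) (H₀.prod (ContinuousLinearMap.id ℝ _)) w := by
      have := (hh_diff w).hasFDerivAt
      rw [hDh] at this
      exact this.prodMk (hasFDerivAt_id w)
    exact HasFDerivAt.comp (g := Function.uncurry Φ) w (hΦd _).hasFDerivAt h1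
  have hφc : Continuous φ := by
    rw [continuous_iff_continuousAt]; exact fun w => (hφd w).continuousAt
  have hφconv : ConvexOn ℝ Set.univ φ := by
    refine ⟨convex_univ, fun a _ b _ s t hs ht hst => ?_⟩
    have h1 := hΦ_convex.2 (Set.mem_univ (h a, a)) (Set.mem_univ (h b, b)) hs ht hst
    have h2 : s • (h a, a) + t • (h b, b) = (h (s • a + t • b), s • a + t • b) := by
      ext1
      · simp only [Prod.fst_add, Prod.smul_fst, hH, map_add, map_smul, smul_add]
        have : r = s • r + t • r := by rw [← add_smul, hst, one_smul]
        nth_rewrite 3 [this]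
        abel
      · simp
    rw [h2] at h1
    exact h1
  obtain ⟨m, hm⟩ : ∃ m, ∀ w, m ≤ φ w := by
    obtain ⟨w0, -, hw0⟩ := (hlevel (φ 0)).exists_isMinOn ⟨0, le_refl (φ 0)⟩ hφc.continuousOn
    refine ⟨φ w0, fun w => ?_⟩
    rcases le_total (φ w) (φ 0) with hw | hw
    · exact hw0 hw
    · exact (hw0 (le_refl (φ 0))).trans hw
  -- Lyapunov function along the trajectory
  set v : ℝ → ℝ := fun t => L / ζ * W (x t) (u t) + φ (u t) with hv
  set v' : ℝ → ℝ := fun t => L / ζ * (⟪gradient (fun y => W y (u t)) (x t), f (x t) (u t)⟫ +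
      ⟪gradient (fun w => W (x t) w) (u t), -(Q (u t) (G (x t) (u t)))⟫) +
      ⟪G (h (u t)) (u t), -(Q (u t) (G (x t) (u t)))⟫ with hv'
  have hz : ∀ t ≥ (0:ℝ), HasDerivAt (fun t => (x t, u t))
      (f (x t) (u t), -(Q (u t) (G (x t) (u t)))) t :=
    fun t ht => (hsolx t ht).prodMk (hsolu' t ht)
  have hvd : ∀ t ≥ (0:ℝ), HasDerivAt v (v' t) t := by
    intro t ht
    have h1 : HasDerivAt (fun t => W (x t) (u t)) (fderiv ℝ (Function.uncurry W) (x t, u t)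
        (f (x t) (u t), -(Q (u t) (G (x t) (u t))))) t :=
      HasFDerivAt.comp_hasDerivAt (l := Function.uncurry W) t (hW_diff _).hasFDerivAt (hz t ht)
    have h2 : HasDerivAt (fun t => φ (u t))
        (((fderiv ℝ (Function.uncurry Φ) (h (u t), u t)).comp
          (H₀.prod (ContinuousLinearMap.id ℝ _))) (-(Q (u t) (G (x t) (u t))))) t :=
      HasFDerivAt.comp_hasDerivAt (l := φ) t (hφd (u t)) (hsolu' t ht)
    have h3 := (h1.const_mul (L / ζ)).add h2
    have key : v' t = L / ζ * (fderiv ℝ (Function.uncurry W) (x t, u t)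
        (f (x t) (u t), -(Q (u t) (G (x t) (u t))))) +
        ((fderiv ℝ (Function.uncurry Φ) (h (u t), u t)).comp
          (H₀.prod (ContinuousLinearMap.id ℝ _))) (-(Q (u t) (G (x t) (u t)))) := by
      show L / ζ * (⟪gradient (fun y => W y (u t)) (x t), f (x t) (u t)⟫ +
        ⟪gradient (fun w => W (x t) w) (u t), -(Q (u t) (G (x t) (u t)))⟫) +
        ⟪G (h (u t)) (u t), -(Q (u t) (G (x t) (u t)))⟫ = _
      rw [aux_gradx W _ _ (hW_diff _), aux_gradu W _ _ (hW_diff _), ← map_add, hGin]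
      simp only [Prod.mk_add_mk, add_zero, zero_add]
      rfl
    rw [key]
    exact h3
  set D : EuclideanSpace ℝ (Fin n) × EuclideanSpace ℝ (Fin p) → ℝ := fun z =>
    δ * (‖z.1 - h z.2‖ ^ 2 + ‖Q z.2 (Function.uncurry G z)‖ ^ 2) with hD
  have hQG : Continuous (fun z : EuclideanSpace ℝ (Fin n) × EuclideanSpace ℝ (Fin p) =>
      Q z.2 (Function.uncurry G z)) := (hQc.comp continuous_snd).clm_apply hGc
  have hDc : Continuous D := by
    have h1 : Continuous (fun z : EuclideanSpace ℝ (Fin n) × EuclideanSpace ℝ (Fin p) =>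
      z.1 - h z.2) := continuous_fst.sub (hhc.comp continuous_snd)
    exact continuous_const.mul ((h1.norm.pow 2).add (hQG.norm.pow 2))
  have hD0 : ∀ k, 0 ≤ D k := fun k => by simp only [hD]; positivity
  have hvD : ∀ t ≥ (0:ℝ), v' t ≤ -D (x t, u t) := by
    intro t _
    have h0 := hquad ‖x t - h (u t)‖ ‖Q (u t) (G (x t) (u t))‖
    have h1 := hW_decay (x t) (u t)
    have h2 : ⟪gradient (fun w => W (x t) w) (u t), -(Q (u t) (G (x t) (u t)))⟫ ≤
        ζ * ‖x t - h (u t)‖ * ‖Q (u t) (G (x t) (u t))‖ := by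
      refine (real_inner_le_norm _ _).trans ?_
      rw [norm_neg]
      exact mul_le_mul_of_nonneg_right (hW_gradu _ _) (norm_nonneg _)
    have h3 : ⟪G (h (u t)) (u t), -(Q (u t) (G (x t) (u t)))⟫ ≤
        -(‖Q (u t) (G (x t) (u t))‖ ^ 2 / q) +
          L * ‖x t - h (u t)‖ * ‖Q (u t) (G (x t) (u t))‖ := by
      have e1 : ⟪G (h (u t)) (u t), -(Q (u t) (G (x t) (u t)))⟫ =
          -⟪Q (u t) (G (x t) (u t)), G (x t) (u t)⟫ +
          ⟪G (x t) (u t) - G (h (u t)) (u t), Q (u t) (G (x t) (u t))⟫ := by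
        rw [inner_neg_right, inner_sub_left, real_inner_comm (G (x t) (u t))]
        ring
      rw [e1]
      have e2 := aux_Q (Q (u t)) (hQ_symm _) (hQ_nonneg _) q hq0 (hQq _) (G (x t) (u t))
      have e3 := (real_inner_le_norm (G (x t) (u t) - G (h (u t)) (u t))
        (Q (u t) (G (x t) (u t)))).trans
        (mul_le_mul_of_nonneg_right (hGL (x t) (u t)) (norm_nonneg _))
      rw [← div_le_iff₀' hq0] at e2
      linarith
    have h4 : L / ζ * (⟪gradient (fun y => W y (u t)) (x t), f (x t) (u t)⟫ +
      ⟪gradient (fun w => W (x t) w) (u t), -(Q (u t) (G (x t) (u t)))⟫) ≤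
      L / ζ * (-γ * ‖x t - h (u t)‖ ^ 2 + ζ * ‖x t - h (u t)‖ * ‖Q (u t) (G (x t) (u t))‖) :=
      mul_le_mul_of_nonneg_left (by linarith) (by positivity)
    simp only [hv', hD, Function.uncurry_apply_pair]
    linarith
  have hW0 : ∀ y w, 0 ≤ W y w := fun y w => le_trans (by positivity) (hW_lb y w)
  have hLζ : 0 < L / ζ := by positivity
  have hvm : ∀ t ≥ (0:ℝ), m ≤ v t := fun t _ => by
    have h1 := hm (u t)
    have h2 := mul_nonneg hLζ.le (hW0 (x t) (u t))
    simp only [hv]; linarith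
  have hvle : ∀ t ≥ (0:ℝ), v t ≤ v 0 := fun t ht => by
    have := aux_decr v v' hvd 0 t 0 le_rfl ht (fun s hs => by
      have := hvD s hs.1; have := hD0 (x s, u s); linarith)
    linarith
  -- compact invariant set
  set C : ℝ := (v 0 - m) / (L / ζ * α) with hC
  set K : Set (EuclideanSpace ℝ (Fin n) × EuclideanSpace ℝ (Fin p)) :=
    (fun z : EuclideanSpace ℝ (Fin n) × EuclideanSpace ℝ (Fin p) => (h z.2 + z.1, z.2)) ''
      (Metric.closedBall 0 (√C) ×ˢ {w | Φ (h w) w ≤ v 0}) with hKdef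
  have hK : IsCompact K := by
    refine ((isCompact_closedBall _ _).prod (hlevel _)).image ?_
    exact ((hhc.comp continuous_snd).add continuous_fst).prodMk continuous_snd
  have hzK : ∀ t ≥ (0:ℝ), (x t, u t) ∈ K := by
    intro t ht
    have h1 : v t ≤ v 0 := hvle t ht
    have h2 := mul_nonneg hLζ.le (hW0 (x t) (u t))
    have h3 : L / ζ * W (x t) (u t) + φ (u t) ≤ v 0 := h1
    refine ⟨(x t - h (u t), u t), ⟨?_, ?_⟩, by simp⟩
    · rw [mem_closedBall_zero_iff]
      refine Real.le_sqrt_of_sq_le ?_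
      rw [hC, le_div_iff₀ (by positivity)]
      have h4 := mul_le_mul_of_nonneg_left (hW_lb (x t) (u t)) hLζ.le
      have h5 := hm (u t)
      calc _ = L / ζ * (α * ‖x t - h (u t)‖ ^ 2) := by ring
        _ ≤ _ := by linarith
    · show φ (u t) ≤ v 0
      linarith
  obtain ⟨M, hM⟩ := hK.exists_bound_of_continuousOn
    (f := fun z : EuclideanSpace ℝ (Fin n) × EuclideanSpace ℝ (Fin p) =>
      (Function.uncurry f z, -(Q z.2 (Function.uncurry G z))))
    (hf_smooth.continuous.prodMk hQG.neg).continuousOn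
  have hM' : ∀ t ≥ (0:ℝ), ‖(f (x t) (u t), -(Q (u t) (G (x t) (u t))))‖ ≤ M := by
    intro t ht
    exact hM (x t, u t) (hzK t ht)
  clear_value K v v' C
  have hDk' : ∀ y w, D (y, w) = 0 → ‖y - h w‖ ^ 2 + ‖Q w (G y w)‖ ^ 2 = 0 := by
    intro y w hDk
    exact (mul_eq_zero.1 hDk).resolve_left hδ.ne'
  clear_value D
  refine aux_lasalle K _ hK (fun t => (x t, u t))
    (fun t => (f (x t) (u t), -(Q (u t) (G (x t) (u t))))) hz hzK M hM' v v' hvd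
    D hDc.continuousOn hD0 hvD m hvm ?_
  rintro ⟨y, w⟩ - hDk
  have h1 : ‖y - h w‖ ^ 2 + ‖Q w (G y w)‖ ^ 2 = 0 := hDk' y w hDk
  have h2 : ‖y - h w‖ = 0 := by
    have : ‖y - h w‖ ^ 2 = 0 := by nlinarith [sq_nonneg ‖y - h w‖, sq_nonneg ‖Q w (G y w)‖]
    simpa using this
  have h3 : Q w (G y w) = 0 := by
    have : ‖Q w (G y w)‖ ^ 2 = 0 := by nlinarith [sq_nonneg ‖y - h w‖, sq_nonneg ‖Q w (G y w)‖]
    simpa using this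
  have hy : y = h w := by rwa [norm_eq_zero, sub_eq_zero] at h2
  have hG0 : G y w = 0 := by
    by_contra hne
    have := hQ_pos w _ hne
    simp [h3] at this
  subst hy
  refine ⟨rfl, ?_⟩
  rintro ⟨y', w'⟩ hy'
  simp only at hy'
  subst hy'
  refine aux_convex_min φ hφconv w ?_ w'
  have hzero : (fderiv ℝ (Function.uncurry Φ) (h w, w)).comp
      (H₀.prod (ContinuousLinearMap.id ℝ _)) = 0 := by
    refine ContinuousLinearMap.ext fun a => ?_
    have := hGin (h w) w a
    rw [hG0, inner_zero_left] at this
    exact this.symm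
  have hw := hφd w
  rw [hzero] at hw
  exact hw
end

section
/- Under the hypotheses of the main gradient-feedback stability theorem (plant f with Lyapunov function W and constants γ, ζ; steady-state map h; Φ satisfying the L-bound), suppose in addition that Φ̃(u) := Φ(h(u),u) is twice continuously differentiable and μ-strongly convex (so ∇²Φ̃(u) ⪰ μI for all u, Φ̃ has compact sublevel sets, and a unique global minimizer u* exists). If the metric is taken as the Newton metric Q(u) := ε(∇²Φ̃(u))⁻¹ with 0 < ε < γμ/(ζL), then every complete solution of ẋ = f(x,u), u̇ = −Q(u)H(u)ᵀ∇Φ(x,u) converges to the point (h(u*), u*), the unique global minimizer of min{Φ(x,u) : x = h(u)}. -/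
open Filter Metric Real
open scoped RealInnerProductSpace Topology NNReal


lemma aux_chain {n p : ℕ}
    (F : EuclideanSpace ℝ (Fin n) → EuclideanSpace ℝ (Fin p) → ℝ)
    (hF : Differentiable ℝ (Function.uncurry F))
    (x : ℝ → EuclideanSpace ℝ (Fin n)) (u : ℝ → EuclideanSpace ℝ (Fin p))
    (a : EuclideanSpace ℝ (Fin n)) (b : EuclideanSpace ℝ (Fin p)) (t : ℝ)
    (hx : HasDerivAt x a t) (hu : HasDerivAt u b t) :
    HasDerivAt (fun s => F (x s) (u s))
      (⟪gradient (fun y => F y (u t)) (x t), a⟫ + ⟪gradient (fun v => F (x t) v) (u t), b⟫) t := by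
  have hD := (hF (x t, u t)).hasFDerivAt
  have h1 : HasFDerivAt (fun y => F y (u t))
      ((fderiv ℝ (Function.uncurry F) (x t, u t)).comp
        (ContinuousLinearMap.inl ℝ (EuclideanSpace ℝ (Fin n)) (EuclideanSpace ℝ (Fin p)))) (x t) :=
    HasFDerivAt.comp (x t) (f := fun y => (y, u t)) hD (hasFDerivAt_prodMk_left (x t) (u t))
  have h2 : HasFDerivAt (fun v => F (x t) v)
      ((fderiv ℝ (Function.uncurry F) (x t, u t)).comp
        (ContinuousLinearMap.inr ℝ (EuclideanSpace ℝ (Fin n)) (EuclideanSpace ℝ (Fin p)))) (u t) :=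
    HasFDerivAt.comp (u t) (f := fun v => (x t, v)) hD (hasFDerivAt_prodMk_right (x t) (u t))
  have h3 : HasDerivAt (fun s => F (x s) (u s))
      (fderiv ℝ (Function.uncurry F) (x t, u t) (a, b)) t :=
    HasFDerivAt.comp_hasDerivAt (f := fun s => (x s, u s)) t hD (hx.prodMk hu)
  have e1 : ⟪gradient (fun y => F y (u t)) (x t), a⟫
      = fderiv ℝ (Function.uncurry F) (x t, u t) (a, 0) := by
    rw [gradient, InnerProductSpace.toDual_symm_apply, h1.fderiv]; simp
  have e2 : ⟪gradient (fun v => F (x t) v) (u t), b⟫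
      = fderiv ℝ (Function.uncurry F) (x t, u t) (0, b) := by
    rw [gradient, InnerProductSpace.toDual_symm_apply, h2.fderiv]; simp
  rw [e1, e2, ← map_add]
  simpa using h3

lemma aux_grad_s6 {p : ℕ} (φ : EuclideanSpace ℝ (Fin p) → ℝ) (hφ : Differentiable ℝ φ)
    (u : ℝ → EuclideanSpace ℝ (Fin p)) (b : EuclideanSpace ℝ (Fin p)) (t : ℝ)
    (hu : HasDerivAt u b t) :
    HasDerivAt (fun s => φ (u s)) ⟪gradient φ (u t), b⟫ t := by
  rw [gradient, InnerProductSpace.toDual_symm_apply]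
  exact HasFDerivAt.comp_hasDerivAt t (hφ (u t)).hasFDerivAt hu

lemma aux_line {p : ℕ} (u d : EuclideanSpace ℝ (Fin p)) (s : ℝ) :
    HasDerivAt (fun s : ℝ => u + s • d) d s := by
  simpa using ((hasDerivAt_id s).smul_const d).const_add u

/-- strong convexity inequality -/
lemma aux_key {p : ℕ} (φ : EuclideanSpace ℝ (Fin p) → ℝ) (hφ : Differentiable ℝ φ)
    (hg : Differentiable ℝ (gradient φ)) (μ : ℝ)
    (hs : ∀ u v, μ * ‖v‖ ^ 2 ≤ ⟪fderiv ℝ (gradient φ) u v, v⟫)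
    (u v : EuclideanSpace ℝ (Fin p)) :
    φ u + ⟪gradient φ u, v - u⟫ + μ / 2 * ‖v - u‖ ^ 2 ≤ φ v := by
  obtain ⟨d, rfl⟩ : ∃ d, v = u + d := ⟨v - u, by simp⟩
  simp only [add_sub_cancel_left]
  have hψ : ∀ s : ℝ, HasDerivAt
      (fun s : ℝ => ⟪gradient φ (u + s • d), d⟫ - ⟪gradient φ u, d⟫ - s * (μ * ‖d‖ ^ 2))
      (⟪fderiv ℝ (gradient φ) (u + s • d) d, d⟫ - μ * ‖d‖ ^ 2) s := by
    intro s
    have h1 : HasDerivAt (fun s : ℝ => gradient φ (u + s • d))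
        (fderiv ℝ (gradient φ) (u + s • d) d) s :=
      HasFDerivAt.comp_hasDerivAt (l := gradient φ) (f := fun s : ℝ => u + s • d) s
        (hg (u + s • d)).hasFDerivAt (aux_line u d s)
    have h2 := h1.inner ℝ (hasDerivAt_const s d)
    have h3 := (h2.sub_const ⟪gradient φ u, d⟫).sub ((hasDerivAt_id s).mul_const (μ * ‖d‖ ^ 2))
    rw [inner_zero_right, zero_add, one_mul] at h3
    exact h3
  have hmono : Monotone
      (fun s : ℝ => ⟪gradient φ (u + s • d), d⟫ - ⟪gradient φ u, d⟫ - s * (μ * ‖d‖ ^ 2)) := by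
    apply monotone_of_deriv_nonneg (fun s => (hψ s).differentiableAt)
    intro s
    rw [(hψ s).deriv]
    linarith [hs (u + s • d) d]
  have hχ : ∀ s : ℝ, HasDerivAt
      (fun s : ℝ => φ (u + s • d) - s * ⟪gradient φ u, d⟫ - s ^ 2 / 2 * (μ * ‖d‖ ^ 2))
      (⟪gradient φ (u + s • d), d⟫ - ⟪gradient φ u, d⟫ - s * (μ * ‖d‖ ^ 2)) s := by
    intro s
    have h1 := aux_grad_s6 φ hφ _ d s (aux_line u d s)
    have h2 := (h1.sub ((hasDerivAt_id s).mul_const ⟪gradient φ u, d⟫)).sub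
      (((hasDerivAt_pow 2 s).div_const 2).mul_const (μ * ‖d‖ ^ 2))
    have e : ⟪gradient φ (u + s • d), d⟫ - ⟪gradient φ u, d⟫ - s * (μ * ‖d‖ ^ 2)
        = ⟪gradient φ (u + s • d), d⟫ - 1 * ⟪gradient φ u, d⟫
          - ((2 : ℕ) * s ^ (2 - 1)) / 2 * (μ * ‖d‖ ^ 2) := by
      norm_num
    rw [e]
    exact h2
  have hm2 : MonotoneOn
      (fun s : ℝ => φ (u + s • d) - s * ⟪gradient φ u, d⟫ - s ^ 2 / 2 * (μ * ‖d‖ ^ 2))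
      (Set.Ici 0) := by
    apply monotoneOn_of_deriv_nonneg (convex_Ici 0)
    · exact fun s _ => (hχ s).continuousAt.continuousWithinAt
    · exact fun s _ => (hχ s).differentiableAt.differentiableWithinAt
    · intro s hs'
      rw [interior_Ici, Set.mem_Ioi] at hs'
      rw [(hχ s).deriv]
      have := hmono hs'.le
      simpa using this
  have := hm2 (Set.mem_Ici.2 le_rfl) (Set.mem_Ici.2 zero_le_one) (zero_le_one (α := ℝ))
  simp only [zero_smul, one_smul, add_zero] at this
  linarith

lemma aux_exists_min {p : ℕ} (φ : EuclideanSpace ℝ (Fin p) → ℝ) (hφ : Differentiable ℝ φ)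
    (μ : ℝ) (hμ : 0 < μ)
    (key : ∀ u v, φ u + ⟪gradient φ u, v - u⟫ + μ / 2 * ‖v - u‖ ^ 2 ≤ φ v) :
    ∃ us, (∀ v, φ us ≤ φ v) ∧ gradient φ us = 0 := by
  have hco : Tendsto φ (cocompact _) atTop := by
    have h1 : Tendsto (fun r : ℝ => φ 0 + r * (μ / 2 * r - ‖gradient φ 0‖)) atTop atTop := by
      apply tendsto_atTop_add_const_left
      apply tendsto_id.atTop_mul_atTop₀
      exact tendsto_atTop_add_const_right _ _ (tendsto_id.const_mul_atTop (by positivity))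
    refine tendsto_atTop_mono ?_ (h1.comp (tendsto_norm_cocompact_atTop (E := EuclideanSpace ℝ (Fin p))))
    intro v
    have h2 := key 0 v
    have h3 := abs_real_inner_le_norm (gradient φ 0) v
    have h4 := neg_le_of_abs_le h3
    simp only [sub_zero] at h2
    simp only [Function.comp]
    nlinarith
  obtain ⟨us, hus⟩ := hφ.continuous.exists_forall_le hco
  refine ⟨us, hus, ?_⟩
  have : IsLocalMin φ us := Filter.Eventually.of_forall hus
  rw [gradient, this.fderiv_eq_zero, map_zero]

lemma aux_quad_s6 (a b d e w : ℝ) (ha : 0 < a) (hd : 0 < d) (hdisc : b ^ 2 < a * d) :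
    (a * d - b ^ 2) / (a + d) * (e ^ 2 + w ^ 2) ≤ a * e ^ 2 - 2 * b * (e * w) + d * w ^ 2 := by
  rw [div_mul_eq_mul_div, div_le_iff₀ (by positivity)]
  nlinarith [sq_nonneg (a * e - b * w), sq_nonneg (d * w - b * e)]

lemma aux_decay (V V' : ℝ → ℝ) (c : ℝ) (hV : ∀ t ≥ (0 : ℝ), HasDerivAt V (V' t) t)
    (hle : ∀ t ≥ (0 : ℝ), V' t ≤ -c * V t) (t : ℝ) (ht : 0 ≤ t) :
    V t ≤ V 0 * Real.exp (-c * t) := by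
  have hd : ∀ t ≥ (0 : ℝ), HasDerivAt (fun s => V s * Real.exp (c * s))
      (V' t * Real.exp (c * t) + V t * (Real.exp (c * t) * c)) t := by
    intro t ht
    have h1 : HasDerivAt (fun s : ℝ => Real.exp (c * s)) (Real.exp (c * t) * c) t := by
      simpa using ((hasDerivAt_id t).const_mul c).exp
    exact (hV t ht).mul h1
  have hanti : AntitoneOn (fun s => V s * Real.exp (c * s)) (Set.Ici 0) := by
    apply antitoneOn_of_deriv_nonpos (convex_Ici 0)
    · exact fun s hs => (hd s hs).continuousAt.continuousWithinAt
    · intro s hs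
      rw [interior_Ici] at hs
      exact (hd s (le_of_lt hs)).differentiableAt.differentiableWithinAt
    · intro s hs
      rw [interior_Ici] at hs
      rw [(hd s (le_of_lt hs)).deriv]
      have := hle s (le_of_lt hs)
      nlinarith [Real.exp_pos (c * s)]
  have h := hanti (Set.mem_Ici.2 le_rfl) (Set.mem_Ici.2 ht) ht
  simp only [mul_zero, Real.exp_zero, mul_one] at h
  have h2 : Real.exp (c * t) * Real.exp (-c * t) = 1 := by
    rw [← Real.exp_add]; simp
  calc V t = (V t * Real.exp (c * t)) * Real.exp (-c * t) := by rw [mul_assoc, h2, mul_one]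
    _ ≤ _ := by gcongr

set_option maxHeartbeats 2000000 in
/-- Newton gradient flow in closed loop: with the Newton metric
`Q(u) = ε(∇²Φ̃(u))⁻¹` and `0 < ε < γμ/(ζL)`, the interconnection converges to
the unique global minimizer of `min {Φ(x,u) : x = h(u)}`. -/
theorem stmt6 {n p : ℕ}
    (f : EuclideanSpace ℝ (Fin n) → EuclideanSpace ℝ (Fin p) → EuclideanSpace ℝ (Fin n))
    (h : EuclideanSpace ℝ (Fin p) → EuclideanSpace ℝ (Fin n))
    (W : EuclideanSpace ℝ (Fin n) → EuclideanSpace ℝ (Fin p) → ℝ)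
    (Φ : EuclideanSpace ℝ (Fin n) → EuclideanSpace ℝ (Fin p) → ℝ)
    (Q : EuclideanSpace ℝ (Fin p) → EuclideanSpace ℝ (Fin p) →L[ℝ] EuclideanSpace ℝ (Fin p))
    (ℓ : ℝ≥0) (α β γ ζ L μ ε : ℝ)
    (hα : 0 < α) (hβ : 0 < β) (hγ : 0 < γ) (hζ : 0 < ζ) (hL : 0 < L) (hμ : 0 < μ)
    -- plant
    (hf_smooth : ContDiff ℝ 1 (Function.uncurry f))
    (hh_diff : Differentiable ℝ h)
    (hh_lip : LipschitzWith ℓ h)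
    (hsteady : ∀ u, f (h u) u = 0)
    -- Lyapunov function for the plant
    (hW_diff : Differentiable ℝ (Function.uncurry W))
    (hW_lb : ∀ x u, α * ‖x - h u‖ ^ 2 ≤ W x u)
    (hW_ub : ∀ x u, W x u ≤ β * ‖x - h u‖ ^ 2)
    (hW_decay : ∀ x u, ⟪gradient (fun y => W y u) x, f x u⟫ ≤ -γ * ‖x - h u‖ ^ 2)
    (hW_gradu : ∀ x u, ‖gradient (fun v => W x v) u‖ ≤ ζ * ‖x - h u‖)
    -- objective and the L-bound
    (hΦ_smooth : ContDiff ℝ 1 (Function.uncurry Φ))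
    (hLbound : ∀ x x' u,
      ‖(ContinuousLinearMap.adjoint (fderiv ℝ h u)
            (gradient (fun y => Φ y u) x' - gradient (fun y => Φ y u) x) +
          (gradient (fun v => Φ x' v) u - gradient (fun v => Φ x v) u))‖ ≤ L * ‖x' - x‖)
    -- the reduced cost Φ̃(u) = Φ(h(u),u) is C² and μ-strongly convex
    (hred_C2 : ContDiff ℝ 2 (fun u => Φ (h u) u))
    (hstrong : ∀ u v : EuclideanSpace ℝ (Fin p),
      μ * ‖v‖ ^ 2 ≤ ⟪fderiv ℝ (gradient (fun w => Φ (h w) w)) u v, v⟫)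
    -- Newton metric Q(u) = ε (∇²Φ̃(u))⁻¹
    (hQ_newton : ∀ u v : EuclideanSpace ℝ (Fin p),
      fderiv ℝ (gradient (fun w => Φ (h w) w)) u (Q u v) = ε • v ∧
      Q u (fderiv ℝ (gradient (fun w => Φ (h w) w)) u v) = ε • v)
    (hε : 0 < ε) (hεbound : ε < γ * μ / (ζ * L))
    -- a complete solution of the interconnection
    (x : ℝ → EuclideanSpace ℝ (Fin n)) (u : ℝ → EuclideanSpace ℝ (Fin p))
    (hsolx : ∀ t ≥ (0 : ℝ), HasDerivAt x (f (x t) (u t)) t)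
    (hsolu : ∀ t ≥ (0 : ℝ), HasDerivAt u
      (-(Q (u t) (ContinuousLinearMap.adjoint (fderiv ℝ h (u t))
          (gradient (fun y => Φ y (u t)) (x t)) +
        gradient (fun v => Φ (x t) v) (u t)))) t) :
    ∃ us : EuclideanSpace ℝ (Fin p),
      (∀ v, Φ (h us) us ≤ Φ (h v) v) ∧
      (∀ v, (∀ w, Φ (h v) v ≤ Φ (h w) w) → v = us) ∧
      Tendsto (fun t => (x t, u t)) atTop
        (nhds ((h us, us) : EuclideanSpace ℝ (Fin n) × EuclideanSpace ℝ (Fin p))) := by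
  set φ : EuclideanSpace ℝ (Fin p) → ℝ := fun w => Φ (h w) w with hφdef
  have hφ : Differentiable ℝ φ := hred_C2.differentiable (by norm_num)
  have hgC : ContDiff ℝ 1 (gradient φ) :=
    (InnerProductSpace.toDual ℝ (EuclideanSpace ℝ (Fin p))).symm.contDiff.comp
      (hred_C2.fderiv_right (m := 1) (by norm_num))
  have hg : Differentiable ℝ (gradient φ) := hgC.differentiable (by norm_num)
  have hAc : Continuous (fderiv ℝ (gradient φ)) := hgC.continuous_fderiv (by norm_num)
  have key := aux_key φ hφ hg μ hstrong
  obtain ⟨us, hmin, hgus⟩ := aux_exists_min φ hφ μ hμ key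
  have hgrow : ∀ v, μ / 2 * ‖v - us‖ ^ 2 ≤ φ v - φ us := by
    intro v
    have := key us v
    rw [hgus, inner_zero_left] at this
    linarith
  have hPL : ∀ v, φ v - φ us ≤ 1 / (2 * μ) * ‖gradient φ v‖ ^ 2 := by
    intro v
    have h1 := key v us
    have h2 := neg_le_of_abs_le (abs_real_inner_le_norm (gradient φ v) (us - v))
    rw [div_mul_eq_mul_div, one_mul, le_div_iff₀ (by positivity)]
    nlinarith [sq_nonneg (‖gradient φ v‖ - μ * ‖us - v‖)]
  refine ⟨us, hmin, ?_, ?_⟩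
  · intro v hv
    have h1 := hgrow v
    have h2 : φ v ≤ φ us := hv us
    have h3 : ‖v - us‖ ^ 2 ≤ 0 := by
      by_contra hc
      push Not at hc
      have : 0 < μ / 2 * ‖v - us‖ ^ 2 := by positivity
      linarith
    have h4 : ‖v - us‖ = 0 := by nlinarith [norm_nonneg (v - us)]
    exact sub_eq_zero.1 (norm_eq_zero.1 h4)
  -- gradient formula for the reduced cost
  have hgform : ∀ w, gradient φ w = ContinuousLinearMap.adjoint (fderiv ℝ h w)
      (gradient (fun y => Φ y w) (h w)) + gradient (fun v => Φ (h w) v) w := by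
    intro w
    refine ext_inner_right ℝ fun v => ?_
    have h1 := aux_grad_s6 φ hφ _ v 0 (aux_line w v 0)
    have hhl : HasDerivAt (fun s : ℝ => h (w + s • v)) (fderiv ℝ h (w + (0:ℝ) • v) v) 0 :=
      HasFDerivAt.comp_hasDerivAt (0:ℝ) (hh_diff (w + (0:ℝ) • v)).hasFDerivAt (aux_line w v 0)
    have h2 := aux_chain Φ (hΦ_smooth.differentiable (by norm_num)) _ _ _ _ 0 hhl (aux_line w v 0)
    have h3 := h1.unique h2
    simp only [zero_smul, add_zero] at h3
    rw [h3, inner_add_left, ContinuousLinearMap.adjoint_inner_left]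
  set w : ℝ → EuclideanSpace ℝ (Fin p) := fun t =>
    -(Q (u t) (ContinuousLinearMap.adjoint (fderiv ℝ h (u t))
          (gradient (fun y => Φ y (u t)) (x t)) +
        gradient (fun v => Φ (x t) v) (u t))) with hw
  have hdec : ∀ t, ∃ d : EuclideanSpace ℝ (Fin p), ‖d‖ ≤ L * ‖x t - h (u t)‖ ∧
      gradient φ (u t) = -(ε⁻¹ • fderiv ℝ (gradient φ) (u t) (w t)) - d := by
    intro t
    refine ⟨_, hLbound (h (u t)) (x t) (u t), ?_⟩
    simp only [hw]
    rw [map_neg, (hQ_newton (u t) _).1, smul_neg, smul_smul, inv_mul_cancel₀ hε.ne', one_smul,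
      hgform, map_sub]
    abel
  have hk : ζ * L < γ * (μ / ε) := by
    rw [lt_div_iff₀ (by positivity)] at hεbound
    rw [← mul_div_assoc, lt_div_iff₀ hε]
    linarith
  set V : ℝ → ℝ := fun t => L * W (x t) (u t) + ζ * (φ (u t) - φ us) with hV
  set V' : ℝ → ℝ := fun t => L * (⟪gradient (fun y => W y (u t)) (x t), f (x t) (u t)⟫ +
    ⟪gradient (fun v => W (x t) v) (u t), w t⟫) + ζ * ⟪gradient φ (u t), w t⟫ with hV'
  have hVd : ∀ t ≥ (0 : ℝ), HasDerivAt V (V' t) t := by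
    intro t ht
    have h1 := aux_chain W hW_diff x u _ _ t (hsolx t ht) (hsolu t ht)
    have h2 := aux_grad_s6 φ hφ u _ t (hsolu t ht)
    exact (h1.const_mul L).add ((h2.sub_const (φ us)).const_mul ζ)
  obtain ⟨c, hc, hVle⟩ : ∃ c > 0, ∀ t, V' t ≤ -c * (‖x t - h (u t)‖ ^ 2 + ‖w t‖ ^ 2) := by
    have hdisc : (ζ * L) ^ 2 < (L * γ) * (ζ * (μ / ε)) := by
      have : 0 < ζ * L := by positivity
      nlinarith
    refine ⟨((L * γ) * (ζ * (μ / ε)) - (ζ * L) ^ 2) / (L * γ + ζ * (μ / ε)),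
      div_pos (by linarith) (by positivity), ?_⟩
    intro t
    have hq := aux_quad_s6 (L * γ) (ζ * L) (ζ * (μ / ε)) ‖x t - h (u t)‖ ‖w t‖
      (by positivity) (by positivity) hdisc
    obtain ⟨d, hd, hgd⟩ := hdec t
    have h1 := hW_decay (x t) (u t)
    have h2 : ⟪gradient (fun v => W (x t) v) (u t), w t⟫ ≤ ζ * ‖x t - h (u t)‖ * ‖w t‖ :=
      (real_inner_le_norm _ _).trans (by gcongr; exact hW_gradu _ _)
    have h3 : ⟪gradient φ (u t), w t⟫ ≤ -(μ / ε * ‖w t‖ ^ 2) + L * ‖x t - h (u t)‖ * ‖w t‖ := by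
      rw [hgd, inner_sub_left, inner_neg_left, real_inner_smul_left]
      have h4 : -⟪d, w t⟫ ≤ L * ‖x t - h (u t)‖ * ‖w t‖ :=
        (neg_le_abs _).trans ((abs_real_inner_le_norm _ _).trans (by gcongr))
      have h5 : μ / ε * ‖w t‖ ^ 2 ≤ ε⁻¹ * ⟪fderiv ℝ (gradient φ) (u t) (w t), w t⟫ := by
        have := mul_le_mul_of_nonneg_left (hstrong (u t) (w t)) (inv_nonneg.2 hε.le)
        calc _ = ε⁻¹ * (μ * ‖w t‖ ^ 2) := by ring
          _ ≤ _ := this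
      linarith
    have h6 := mul_le_mul_of_nonneg_left (add_le_add h1 h2) hL.le
    have h7 := mul_le_mul_of_nonneg_left h3 hζ.le
    simp only [hV']
    nlinarith
  have hWnn : ∀ t, 0 ≤ W (x t) (u t) := fun t => le_trans (by positivity) (hW_lb _ _)
  have hφnn : ∀ t, 0 ≤ φ (u t) - φ us := fun t => sub_nonneg.2 (hmin _)
  have hVnn : ∀ t, 0 ≤ V t := fun t =>
    add_nonneg (mul_nonneg hL.le (hWnn t)) (mul_nonneg hζ.le (hφnn t))
  -- V is bounded by its initial value
  have hVb : ∀ t ≥ (0 : ℝ), V t ≤ V 0 := by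
    intro t ht
    have := aux_decay V V' 0 hVd (fun s _ => by
      have h1 := hVle s
      have : 0 ≤ c * (‖x s - h (u s)‖ ^ 2 + ‖w s‖ ^ 2) := by positivity
      linarith) t ht
    simpa using this
  have hub : ∀ t, ‖u t - us‖ ^ 2 ≤ 2 / (μ * ζ) * V t := by
    intro t
    have h1 := hgrow (u t)
    have h2 : ζ * (φ (u t) - φ us) ≤ V t := by
      have := mul_nonneg hL.le (hWnn t)
      simp only [hV]; linarith
    rw [div_mul_eq_mul_div, le_div_iff₀ (by positivity)]
    nlinarith
  have heb : ∀ t, ‖x t - h (u t)‖ ^ 2 ≤ 1 / (α * L) * V t := by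
    intro t
    have h1 := hW_lb (x t) (u t)
    have h2 : L * W (x t) (u t) ≤ V t := by
      have := mul_nonneg hζ.le (hφnn t)
      simp only [hV]; linarith
    rw [div_mul_eq_mul_div, le_div_iff₀ (by positivity)]
    nlinarith
  obtain ⟨M, hM⟩ := (isCompact_closedBall us (√(2 / (μ * ζ) * V 0))).exists_bound_of_continuousOn
    hAc.continuousOn
  have hMt : ∀ t ≥ (0 : ℝ), ‖fderiv ℝ (gradient φ) (u t)‖ ≤ |M| := by
    intro t ht
    refine (hM _ ?_).trans (le_abs_self M)
    rw [mem_closedBall, dist_eq_norm]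
    apply Real.le_sqrt_of_sq_le
    refine (hub t).trans ?_
    have := hVb t ht
    gcongr
  set K : ℝ := L * β + ζ * (1 / (2 * μ)) * (2 * ((ε⁻¹ * |M|) ^ 2 + L ^ 2)) with hK
  have hKpos : 0 < K := by positivity
  have hVK : ∀ t ≥ (0 : ℝ), V t ≤ K * (‖x t - h (u t)‖ ^ 2 + ‖w t‖ ^ 2) := by
    intro t ht
    obtain ⟨d, hd, hgd⟩ := hdec t
    have h1 : ‖gradient φ (u t)‖ ≤ ε⁻¹ * |M| * ‖w t‖ + L * ‖x t - h (u t)‖ := by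
      rw [hgd]
      refine (norm_sub_le _ _).trans (add_le_add ?_ hd)
      rw [norm_neg, norm_smul, Real.norm_of_nonneg (inv_nonneg.2 hε.le), mul_assoc]
      gcongr
      exact (ContinuousLinearMap.le_opNorm _ _).trans (by gcongr; exact hMt t ht)
    have h2 : ‖gradient φ (u t)‖ ^ 2 ≤
        2 * ((ε⁻¹ * |M|) ^ 2 + L ^ 2) * (‖x t - h (u t)‖ ^ 2 + ‖w t‖ ^ 2) := by
      refine (pow_le_pow_left₀ (norm_nonneg _) h1 2).trans ?_
      nlinarith [sq_nonneg (ε⁻¹ * |M| * ‖w t‖ - L * ‖x t - h (u t)‖),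
        sq_nonneg (ε⁻¹ * |M| * ‖x t - h (u t)‖), sq_nonneg (L * ‖w t‖)]
    have h3 : W (x t) (u t) ≤ β * (‖x t - h (u t)‖ ^ 2 + ‖w t‖ ^ 2) :=
      (hW_ub _ _).trans (by gcongr; nlinarith [sq_nonneg ‖w t‖])
    have h4 := (hPL (u t)).trans (mul_le_mul_of_nonneg_left h2 (by positivity))
    have h5 := add_le_add (mul_le_mul_of_nonneg_left h3 hL.le) (mul_le_mul_of_nonneg_left h4 hζ.le)
    refine h5.trans (le_of_eq ?_)
    rw [hK]; ring
  have hVdecay : ∀ t ≥ (0 : ℝ), V t ≤ V 0 * Real.exp (-(c / K) * t) := by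
    intro t ht
    refine aux_decay V V' (c / K) hVd (fun s hs => ?_) t ht
    refine (hVle s).trans ?_
    have h1 := mul_le_mul_of_nonneg_left (hVK s hs) (div_nonneg hc.le hKpos.le)
    have h2 : c / K * (K * (‖x s - h (u s)‖ ^ 2 + ‖w s‖ ^ 2))
        = c * (‖x s - h (u s)‖ ^ 2 + ‖w s‖ ^ 2) := by
      field_simp
    linarith
  have hVlim : Tendsto V atTop (𝓝 0) := by
    have h1 : Tendsto (fun t : ℝ => V 0 * Real.exp (-(c / K) * t)) atTop (𝓝 0) := by
      have h2 : Tendsto (fun t : ℝ => -(c / K) * t) atTop atBot :=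
        tendsto_id.const_mul_atTop_of_neg (neg_lt_zero.2 (by positivity))
      simpa using (Real.tendsto_exp_atBot.comp h2).const_mul (V 0)
    refine tendsto_of_tendsto_of_tendsto_of_le_of_le' tendsto_const_nhds h1
      (Eventually.of_forall hVnn) ?_
    filter_upwards [eventually_ge_atTop (0 : ℝ)] with t ht using hVdecay t ht
  have hsq : ∀ (C : ℝ) (r : ℝ → ℝ), (∀ t, 0 ≤ r t) → (∀ t, r t ^ 2 ≤ C * V t) →
      Tendsto r atTop (𝓝 0) := by
    intro C r hr hle
    have h1 : Tendsto (fun t => √(C * V t)) atTop (𝓝 0) := by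
      simpa using (hVlim.const_mul C).sqrt
    exact squeeze_zero hr (fun t => Real.le_sqrt_of_sq_le (hle t)) h1
  have hulim : Tendsto u atTop (𝓝 us) :=
    tendsto_iff_norm_sub_tendsto_zero.2 (hsq _ _ (fun t => norm_nonneg _) hub)
  have helim : Tendsto (fun t => x t - h (u t)) atTop (𝓝 0) :=
    tendsto_zero_iff_norm_tendsto_zero.2 (hsq _ _ (fun t => norm_nonneg _) heb)
  have hxlim : Tendsto x atTop (𝓝 (h us)) := by
    have := helim.add ((hh_diff us).continuousAt.tendsto.comp hulim)
    simpa [Function.comp_def] using this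
  exact hxlim.prodMk_nhds hulim
end

section
/- Let h : ℝᵖ → ℝⁿ and Φ : ℝⁿ × ℝᵖ → ℝ be differentiable, let L > 0 satisfy ‖H(u)ᵀ(∇Φ(x',u) − ∇Φ(x,u))‖ ≤ L‖x' − x‖ for all x, x', u, and let Q(u) : ℝᵖ → ℝᵖ be symmetric positive semidefinite with ‖Q(u)‖ ≤ κ² for some κ > 0. Define Φ̃(u) := Φ(h(u),u) and g(x,u) := −H(u)ᵀ∇Φ(x,u), and for v ∈ ℝᵖ write ‖v‖_{Q(u)} := √⟨Q(u)v, v⟩. Then for all x ∈ ℝⁿ and u ∈ ℝᵖ: ⟨∇Φ̃(u), Q(u)g(x,u)⟩ ≤ κL‖x − h(u)‖·‖g(x,u)‖_{Q(u)} − ‖g(x,u)‖²_{Q(u)}. -/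
open Filter Metric Real
open scoped RealInnerProductSpace Topology

theorem aux_cs {E : Type*} [NormedAddCommGroup E] [InnerProductSpace ℝ E]
    (T : E →L[ℝ] E) (κ : ℝ) (hκ : 0 < κ)
    (hs : ∀ v w, ⟪T v, w⟫ = ⟪v, T w⟫) (hp : ∀ v, 0 ≤ ⟪T v, v⟫)
    (hn : ‖T‖ ≤ κ ^ 2) (d g : E) :
    ⟪d, T g⟫ ≤ κ * ‖d‖ * Real.sqrt ⟪T g, g⟫ := by
  have h1 : ∀ t : ℝ, 0 ≤ ⟪T g, g⟫ * (t * t) + (2 * ⟪d, T g⟫) * t + ⟪T d, d⟫ := by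
    intro t
    have h2 := hp (t • g + d)
    have h3 : ⟪T g, d⟫ = ⟪d, T g⟫ := real_inner_comm _ _
    have h4 : ⟪T d, g⟫ = ⟪d, T g⟫ := hs d g
    simp only [map_add, map_smul, inner_add_left, inner_add_right, real_inner_smul_left,
      real_inner_smul_right, h3, h4] at h2
    linarith
  have h5 := discrim_le_zero h1
  unfold discrim at h5
  have h6 : ⟪T d, d⟫ ≤ κ ^ 2 * ‖d‖ ^ 2 := by
    calc ⟪T d, d⟫ ≤ ‖T d‖ * ‖d‖ := real_inner_le_norm _ _
      _ ≤ (κ ^ 2 * ‖d‖) * ‖d‖ := by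
        gcongr
        exact T.le_of_opNorm_le hn d
      _ = _ := by ring
  have h7 : ⟪T g, g⟫ * ⟪T d, d⟫ ≤ ⟪T g, g⟫ * (κ ^ 2 * ‖d‖ ^ 2) :=
    mul_le_mul_of_nonneg_left h6 (hp g)
  refine abs_le_of_sq_le_sq' ?_ (by positivity) |>.2
  rw [mul_pow, Real.sq_sqrt (hp g)]
  nlinarith

theorem aux_grad_s7 {E F : Type*} [NormedAddCommGroup E] [InnerProductSpace ℝ E] [CompleteSpace E]
    [NormedAddCommGroup F] [InnerProductSpace ℝ F] [CompleteSpace F]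
    (h : E → F) (Φ : F → E → ℝ) (hh : Differentiable ℝ h)
    (hΦ : Differentiable ℝ (Function.uncurry Φ)) (u : E) :
    gradient (fun w => Φ (h w) w) u =
      ContinuousLinearMap.adjoint (fderiv ℝ h u) (gradient (fun y => Φ y u) (h u)) +
        gradient (fun v => Φ (h u) v) u := by
  have hD := (hΦ (h u, u)).hasFDerivAt
  set D := fderiv ℝ (Function.uncurry Φ) (h u, u)
  have e1 : HasFDerivAt (fun w => Φ (h w) w)
      (D.comp ((fderiv ℝ h u).prod (ContinuousLinearMap.id ℝ E))) u :=
    HasFDerivAt.comp u (g := Function.uncurry Φ) (f := fun w => (h w, w)) hD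
      ((hh u).hasFDerivAt.prodMk (hasFDerivAt_id u))
  have e2 : HasFDerivAt (fun y => Φ y u)
      (D.comp (ContinuousLinearMap.inl ℝ F E)) (h u) :=
    HasFDerivAt.comp (h u) (g := Function.uncurry Φ) (f := fun y => (y, u)) hD
      (hasFDerivAt_prodMk_left (h u) u)
  have e3 : HasFDerivAt (fun v => Φ (h u) v)
      (D.comp (ContinuousLinearMap.inr ℝ F E)) u :=
    HasFDerivAt.comp u (g := Function.uncurry Φ) (f := fun v => (h u, v)) hD
      (hasFDerivAt_prodMk_right (h u) u)
  apply ext_inner_right ℝ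
  intro v
  rw [inner_add_left, ContinuousLinearMap.adjoint_inner_left]
  unfold gradient
  simp only [InnerProductSpace.toDual_symm_apply, e1.fderiv, e2.fderiv, e3.fderiv]
  simp [← map_add]

/-- Key descent estimate: for `g(x,u) = -H(u)ᵀ∇Φ(x,u)` and a positive
semidefinite metric `Q(u)` with `‖Q(u)‖ ≤ κ²`,
`⟨∇Φ̃(u), Q(u)g(x,u)⟩ ≤ κL‖x - h(u)‖·‖g(x,u)‖_{Q(u)} - ‖g(x,u)‖²_{Q(u)}`. -/
theorem stmt7 {n p : ℕ}
    (h : EuclideanSpace ℝ (Fin p) → EuclideanSpace ℝ (Fin n))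
    (Φ : EuclideanSpace ℝ (Fin n) → EuclideanSpace ℝ (Fin p) → ℝ)
    (Q : EuclideanSpace ℝ (Fin p) → EuclideanSpace ℝ (Fin p) →L[ℝ] EuclideanSpace ℝ (Fin p))
    (L κ : ℝ) (hL : 0 < L) (hκ : 0 < κ)
    (hh_diff : Differentiable ℝ h)
    (hΦ_diff : Differentiable ℝ (Function.uncurry Φ))
    (hLbound : ∀ x x' u,
      ‖(ContinuousLinearMap.adjoint (fderiv ℝ h u)
            (gradient (fun y => Φ y u) x' - gradient (fun y => Φ y u) x) +
          (gradient (fun v => Φ x' v) u - gradient (fun v => Φ x v) u))‖ ≤ L * ‖x' - x‖)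
    (hQ_symm : ∀ u v w, ⟪Q u v, w⟫ = ⟪v, Q u w⟫)
    (hQ_psd : ∀ u v, 0 ≤ ⟪Q u v, v⟫)
    (hQ_norm : ∀ u, ‖Q u‖ ≤ κ ^ 2) :
    ∀ (x : EuclideanSpace ℝ (Fin n)) (u : EuclideanSpace ℝ (Fin p)),
      ⟪gradient (fun w => Φ (h w) w) u,
          Q u (-(ContinuousLinearMap.adjoint (fderiv ℝ h u) (gradient (fun y => Φ y u) x) +
            gradient (fun v => Φ x v) u))⟫ ≤
        κ * L * ‖x - h u‖ *
          Real.sqrt ⟪Q u (-(ContinuousLinearMap.adjoint (fderiv ℝ h u)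
              (gradient (fun y => Φ y u) x) + gradient (fun v => Φ x v) u)),
            -(ContinuousLinearMap.adjoint (fderiv ℝ h u) (gradient (fun y => Φ y u) x) +
              gradient (fun v => Φ x v) u)⟫ -
        ⟪Q u (-(ContinuousLinearMap.adjoint (fderiv ℝ h u) (gradient (fun y => Φ y u) x) +
            gradient (fun v => Φ x v) u)),
          -(ContinuousLinearMap.adjoint (fderiv ℝ h u) (gradient (fun y => Φ y u) x) +
            gradient (fun v => Φ x v) u)⟫ := by
  intro x u
  have hG := aux_grad_s7 h Φ hh_diff hΦ_diff u
  have hb := hLbound x (h u) u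
  rw [map_sub] at hb
  rw [hG]
  generalize ContinuousLinearMap.adjoint (fderiv ℝ h u) (gradient (fun y => Φ y u) (h u)) = a at *
  generalize ContinuousLinearMap.adjoint (fderiv ℝ h u) (gradient (fun y => Φ y u) x) = b at *
  generalize gradient (fun v => Φ (h u) v) u = c at *
  generalize gradient (fun v => Φ x v) u = e at *
  have hd : ‖a + c + -(b + e)‖ ≤ L * ‖x - h u‖ := by
    rw [norm_sub_rev x]
    convert hb using 2
    abel
  generalize -(b + e) = g at *
  have hc := aux_cs (Q u) κ hκ (hQ_symm u) (hQ_psd u) (hQ_norm u) (a + c + g) g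
  rw [inner_add_left, ← hQ_symm u g g] at hc
  have hm : κ * ‖a + c + g‖ * Real.sqrt ⟪Q u g, g⟫ ≤
      κ * (L * ‖x - h u‖) * Real.sqrt ⟪Q u g, g⟫ := by gcongr
  linarith
end

section
/- Let Φ̃ : ℝᵖ → ℝ be continuously differentiable with locally Lipschitz gradient and compact sublevel sets, and let Q, D be locally Lipschitz maps assigning to each u ∈ ℝᵖ symmetric positive definite linear maps Q(u), D(u) : ℝᵖ → ℝᵖ. Consider the heavy-ball dynamics u̇ = Q(u)z, ż = −D(u)z − Q(u)∇Φ̃(u) on ℝᵖ × ℝᵖ. Then along every complete solution (u,z) : [0,∞) → ℝᵖ × ℝᵖ, the function V(u,z) := Φ̃(u) + ½‖z‖² satisfies d/dt V(u(t),z(t)) = −⟨D(u(t))z(t), z(t)⟩ ≤ 0, and the solution converges to the set {(u,z) : z = 0 and ∇Φ̃(u) = 0}, i.e. dist((u(t),z(t)), this set) → 0 as t → ∞. -/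
open Filter Metric Real
open scoped RealInnerProductSpace Topology


theorem barbalat_aux {E : Type*} [NormedAddCommGroup E] [NormedSpace ℝ E] (F g : ℝ → E) (l : E)
    (hF : Tendsto F atTop (𝓝 l)) (hd : ∀ t ≥ (0 : ℝ), HasDerivAt F (g t) t)
    (hg : UniformContinuousOn g (Set.Ici 0)) : Tendsto g atTop (𝓝 0) := by
  rw [Metric.tendsto_nhds]
  intro ε hε
  obtain ⟨δ, hδ, H⟩ := Metric.uniformContinuousOn_iff.1 hg (ε / 2) (by positivity)
  have hdiff : Tendsto (fun t => F (t + δ / 2) - F t) atTop (𝓝 0) := by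
    have h1 : Tendsto (fun t => F (t + δ / 2)) atTop (𝓝 l) :=
      hF.comp (tendsto_atTop_add_const_right _ _ tendsto_id)
    simpa using h1.sub hF
  have hev := (Metric.tendsto_nhds.1 hdiff) (ε / 2 * (δ / 2)) (by positivity)
  filter_upwards [hev, eventually_ge_atTop (0 : ℝ)] with t ht ht0
  rw [dist_zero_right] at ht ⊢
  have key : ‖(F (t + δ / 2) - (t + δ / 2) • g t) - (F t - t • g t)‖
      ≤ ε / 2 * ‖(t + δ / 2) - t‖ := by
    refine Convex.norm_image_sub_le_of_norm_hasDerivWithin_le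
      (f := fun s => F s - s • g t) (f' := fun s => g s - (1 : ℝ) • g t)
      (s := Set.Icc t (t + δ / 2)) ?_ ?_ (convex_Icc _ _) ?_ ?_
    · intro s hs
      exact ((hd s (ht0.trans hs.1)).sub ((hasDerivAt_id s).smul_const (g t))).hasDerivWithinAt
    · intro s hs
      have := H s (ht0.trans hs.1) t ht0 (by
        rw [Real.dist_eq, abs_of_nonneg (by linarith [hs.1])]; linarith [hs.2])
      rw [one_smul, ← dist_eq_norm]
      exact this.le
    · constructor <;> linarith
    · constructor <;> linarith
  have e1 : (F (t + δ / 2) - (t + δ / 2) • g t) - (F t - t • g t)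
      = (F (t + δ / 2) - F t) - (δ / 2) • g t := by
    rw [add_smul]; abel
  rw [e1, add_sub_cancel_left, Real.norm_of_nonneg (by positivity)] at key
  have h2 : ‖(δ / 2) • g t‖ ≤ ‖F (t + δ / 2) - F t‖
      + ‖(F (t + δ / 2) - F t) - (δ / 2) • g t‖ := by
    have := norm_sub_le (F (t + δ / 2) - F t) ((F (t + δ / 2) - F t) - (δ / 2) • g t)
    rwa [sub_sub_cancel] at this
  rw [norm_smul, Real.norm_of_nonneg (by positivity)] at h2
  have h3 : (δ / 2) * ‖g t‖ < (δ / 2) * ε := by linarith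
  exact lt_of_mul_lt_mul_left h3 (by positivity)

theorem compact_zero_aux {X : Type*} [TopologicalSpace X] (C : Set X) (hC : IsCompact C)
    (g h : X → ℝ) (hg : Continuous g) (hh : Continuous h) (x : ℝ → X)
    (hx : ∀ t ≥ (0 : ℝ), x t ∈ C) (h0 : ∀ q ∈ C, h q = 0 → g q = 0)
    (hlim : Tendsto (fun t => h (x t)) atTop (𝓝 0)) :
    Tendsto (fun t => g (x t)) atTop (𝓝 0) := by
  rw [Metric.tendsto_nhds]
  intro ε hε
  have hK : IsCompact (C ∩ {q | ε ≤ |g q|}) :=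
    hC.inter_right (isClosed_le continuous_const hg.abs)
  rcases (C ∩ {q | ε ≤ |g q|}).eq_empty_or_nonempty with he | hne
  · filter_upwards [eventually_ge_atTop (0 : ℝ)] with t ht
    by_contra hcon
    have : x t ∈ C ∩ {q | ε ≤ |g q|} := ⟨hx t ht, by simpa using hcon⟩
    rw [he] at this
    exact this
  · obtain ⟨m, hm, hmin⟩ := hK.exists_isMinOn hne hh.abs.continuousOn
    have hpos : 0 < |h m| := by
      rw [abs_pos]
      intro hz
      have h1 : ε ≤ |g m| := hm.2
      rw [h0 m hm.1 hz, abs_zero] at h1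
      linarith
    filter_upwards [Metric.tendsto_nhds.1 hlim _ hpos, eventually_ge_atTop (0 : ℝ)] with t ht ht0
    by_contra hcon
    have h1 : |h m| ≤ |h (x t)| := hmin ⟨hx t ht0, by simpa using hcon⟩
    rw [Real.dist_eq, sub_zero] at ht
    linarith

set_option maxHeartbeats 1600000 in
/-- Heavy-ball dynamics `u̇ = Q(u)z`, `ż = -D(u)z - Q(u)∇Φ̃(u)`: the energy
`V(u,z) = Φ̃(u) + ½‖z‖²` decays with `V̇ = -⟨D(u)z, z⟩ ≤ 0` and trajectories
converge to `{(u,z) : z = 0 ∧ ∇Φ̃(u) = 0}`. -/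
theorem stmt9 {p : ℕ}
    (Φ : EuclideanSpace ℝ (Fin p) → ℝ)
    (hΦ : ContDiff ℝ 1 Φ)
    (hgrad_lip : LocallyLipschitz (gradient Φ))
    (hlevel : ∀ c : ℝ, IsCompact {w : EuclideanSpace ℝ (Fin p) | Φ w ≤ c})
    (Q D : EuclideanSpace ℝ (Fin p) → EuclideanSpace ℝ (Fin p) →L[ℝ] EuclideanSpace ℝ (Fin p))
    (hQ_lip : LocallyLipschitz Q) (hD_lip : LocallyLipschitz D)
    (hQ_symm : ∀ u v w, ⟪Q u v, w⟫ = ⟪v, Q u w⟫)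
    (hQ_pos : ∀ u v, v ≠ 0 → 0 < ⟪Q u v, v⟫)
    (hD_symm : ∀ u v w, ⟪D u v, w⟫ = ⟪v, D u w⟫)
    (hD_pos : ∀ u v, v ≠ 0 → 0 < ⟪D u v, v⟫)
    -- a complete solution of the heavy-ball dynamics
    (u z : ℝ → EuclideanSpace ℝ (Fin p))
    (hsolu : ∀ t ≥ (0 : ℝ), HasDerivAt u (Q (u t) (z t)) t)
    (hsolz : ∀ t ≥ (0 : ℝ), HasDerivAt z (-(D (u t) (z t)) - Q (u t) (gradient Φ (u t))) t) :
    (∀ t ≥ (0 : ℝ),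
      HasDerivAt (fun s => Φ (u s) + (1 / 2) * ‖z s‖ ^ 2) (-⟪D (u t) (z t), z t⟫) t ∧
      -⟪D (u t) (z t), z t⟫ ≤ 0) ∧
    Tendsto (fun t => Metric.infDist (u t, z t)
      {q : EuclideanSpace ℝ (Fin p) × EuclideanSpace ℝ (Fin p) |
        q.2 = 0 ∧ gradient Φ q.1 = 0})
      atTop (nhds 0) := by
  have hQc := hQ_lip.continuous
  have hDc := hD_lip.continuous
  have hGc := hgrad_lip.continuous
  have hΦc := hΦ.continuous
  have hDnn : ∀ a v, 0 ≤ ⟪D a v, v⟫ := by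
    intro a v
    by_cases hv : v = 0
    · simp [hv]
    · exact (hD_pos a v hv).le
  have hV : ∀ t ≥ (0 : ℝ),
      HasDerivAt (fun s => Φ (u s) + (1 / 2) * ‖z s‖ ^ 2) (-⟪D (u t) (z t), z t⟫) t := by
    intro t ht
    have h1 : HasFDerivAt Φ (fderiv ℝ Φ (u t)) (u t) :=
      ((hΦ.differentiable (by norm_num)) (u t)).hasFDerivAt
    have h2 := h1.comp_hasDerivAt t (hsolu t ht)
    have h3 := ((hsolz t ht).norm_sq).const_mul (1 / 2 : ℝ)
    have h4 : fderiv ℝ Φ (u t) (Q (u t) (z t)) = ⟪gradient Φ (u t), Q (u t) (z t)⟫ := by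
      simp [gradient]
    refine (h2.add h3).congr_deriv ?_
    rw [h4, inner_sub_right, inner_neg_right, ← hQ_symm, real_inner_comm (z t) (D (u t) (z t)),
      real_inner_comm (z t) (Q (u t) (gradient Φ (u t)))]
    ring
  refine ⟨fun t ht => ⟨hV t ht, neg_nonpos.2 (hDnn _ _)⟩, ?_⟩
  set V : ℝ → ℝ := fun s => Φ (u s) + (1 / 2) * ‖z s‖ ^ 2 with hVdef
  have hanti : AntitoneOn V (Set.Ici 0) := by
    refine antitoneOn_of_hasDerivWithinAt_nonpos (convex_Ici 0)
      (f' := fun t => -⟪D (u t) (z t), z t⟫) ?_ ?_ ?_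
    · intro t ht
      exact (hV t ht).continuousAt.continuousWithinAt
    · intro t ht
      exact (hV t (interior_subset ht)).hasDerivWithinAt
    · intro t _
      exact neg_nonpos.2 (hDnn _ _)
  have hVle : ∀ t ≥ (0 : ℝ), V t ≤ V 0 := fun t ht => hanti (Set.self_mem_Ici) ht ht
  have hK := hlevel (V 0)
  have huK : ∀ t ≥ (0 : ℝ), u t ∈ {w | Φ w ≤ V 0} := by
    intro t ht
    have h1 := hVle t ht
    have h2 : 0 ≤ (1 / 2) * ‖z t‖ ^ 2 := by positivity
    show Φ (u t) ≤ V 0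
    have h3 : V t = Φ (u t) + (1 / 2) * ‖z t‖ ^ 2 := rfl
    linarith
  obtain ⟨m, hm⟩ := hK.bddBelow_image hΦc.continuousOn
  have hΦm : ∀ t ≥ (0 : ℝ), m ≤ Φ (u t) := fun t ht => hm ⟨u t, huK t ht, rfl⟩
  have hzb : ∀ t ≥ (0 : ℝ), ‖z t‖ ≤ 1 + 2 * (V 0 - m) := by
    intro t ht
    have h1 := hVle t ht
    have h2 := hΦm t ht
    have h3 : V t = Φ (u t) + (1 / 2) * ‖z t‖ ^ 2 := rfl
    nlinarith [sq_nonneg (‖z t‖ - 1)]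
  set C : Set (EuclideanSpace ℝ (Fin p) × EuclideanSpace ℝ (Fin p)) :=
    {w | Φ w ≤ V 0} ×ˢ Metric.closedBall 0 (1 + 2 * (V 0 - m)) with hCdef
  have hC : IsCompact C := hK.prod (isCompact_closedBall _ _)
  have hxC : ∀ t ≥ (0 : ℝ), (u t, z t) ∈ C := fun t ht =>
    ⟨huK t ht, by simpa using hzb t ht⟩
  have hWc1 : Continuous
      (fun q : EuclideanSpace ℝ (Fin p) × EuclideanSpace ℝ (Fin p) => Q q.1 q.2) :=
    (hQc.comp continuous_fst).clm_apply continuous_snd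
  have hDz : Continuous
      (fun q : EuclideanSpace ℝ (Fin p) × EuclideanSpace ℝ (Fin p) => D q.1 q.2) :=
    (hDc.comp continuous_fst).clm_apply continuous_snd
  have hQG : Continuous
      (fun q : EuclideanSpace ℝ (Fin p) × EuclideanSpace ℝ (Fin p) => Q q.1 (gradient Φ q.1)) :=
    (hQc.comp continuous_fst).clm_apply (hGc.comp continuous_fst)
  have hWc2 : Continuous
      (fun q : EuclideanSpace ℝ (Fin p) × EuclideanSpace ℝ (Fin p) =>
        -(D q.1 q.2) - Q q.1 (gradient Φ q.1)) := hDz.neg.sub hQG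
  obtain ⟨M, hM⟩ := hC.exists_bound_of_continuousOn (hWc1.prodMk hWc2).continuousOn
  have hLip : LipschitzOnWith M.toNNReal (fun t => (u t, z t)) (Set.Ici 0) := by
    refine Convex.lipschitzOnWith_of_nnnorm_hasDerivWithin_le (convex_Ici 0)
      (f' := fun t => (Q (u t) (z t), -(D (u t) (z t)) - Q (u t) (gradient Φ (u t)))) ?_ ?_
    · intro t ht
      exact ((hsolu t ht).prodMk (hsolz t ht)).hasDerivWithinAt
    · intro t ht
      have hb := hM (u t, z t) (hxC t ht)
      rw [← NNReal.coe_le_coe, coe_nnnorm]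
      exact hb.trans (Real.le_coe_toNNReal M)
  have hUC : ∀ {Y : Type} [PseudoMetricSpace Y]
      (G : EuclideanSpace ℝ (Fin p) × EuclideanSpace ℝ (Fin p) → Y), Continuous G →
      UniformContinuousOn (fun t => G (u t, z t)) (Set.Ici 0) := by
    intro Y _ G hG
    exact (hC.uniformContinuousOn_of_continuous hG.continuousOn).comp
      hLip.uniformContinuousOn (fun t ht => hxC t ht)
  have hVlim : ∃ l, Tendsto V atTop (𝓝 l) := by
    have hA : Antitone (fun t => V (max t 0)) := fun a b hab =>
      hanti (Set.mem_Ici.2 (le_max_right a 0)) (Set.mem_Ici.2 (le_max_right b 0)) (max_le_max_right 0 hab)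
    have hB : BddBelow (Set.range (fun t => V (max t 0))) := by
      refine ⟨m, ?_⟩
      rintro _ ⟨t, rfl⟩
      have h1 := hΦm (max t 0) (le_max_right _ _)
      have h2 : 0 ≤ (1 / 2) * ‖z (max t 0)‖ ^ 2 := by positivity
      show m ≤ Φ (u (max t 0)) + (1 / 2) * ‖z (max t 0)‖ ^ 2
      linarith
    refine ⟨_, (tendsto_atTop_ciInf hA hB).congr' ?_⟩
    filter_upwards [eventually_ge_atTop (0 : ℝ)] with t ht
    rw [max_eq_left ht]
  obtain ⟨l, hl⟩ := hVlim
  have hdiss := barbalat_aux V _ l hl hV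
    (hUC (fun q => -⟪D q.1 q.2, q.2⟫) (hDz.inner continuous_snd).neg)
  have hz0 : Tendsto z atTop (𝓝 0) := by
    rw [tendsto_zero_iff_norm_tendsto_zero]
    refine compact_zero_aux C hC (fun q => ‖q.2‖) (fun q => -⟪D q.1 q.2, q.2⟫)
      continuous_snd.norm (hDz.inner continuous_snd).neg (fun t => (u t, z t)) hxC ?_ hdiss
    intro q _ hq
    by_contra hne
    have := hD_pos q.1 q.2 (by simpa using hne)
    have hq' : -⟪D q.1 q.2, q.2⟫ = 0 := hq
    linarith
  have hdz := barbalat_aux z _ 0 hz0 hsolz (hUC _ hWc2)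
  have hh : Tendsto (fun t => ‖z t‖ + ‖-(D (u t) (z t)) - Q (u t) (gradient Φ (u t))‖)
      atTop (𝓝 0) := by
    simpa using hz0.norm.add hdz.norm
  refine compact_zero_aux C hC (fun q => Metric.infDist q _)
    (fun q => ‖q.2‖ + ‖-(D q.1 q.2) - Q q.1 (gradient Φ q.1)‖)
    (Metric.continuous_infDist_pt _) (continuous_snd.norm.add hWc2.norm)
    (fun t => (u t, z t)) hxC ?_ hh
  intro q _ hq
  have hq1 : ‖q.2‖ + ‖-(D q.1 q.2) - Q q.1 (gradient Φ q.1)‖ = 0 := hq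
  have ha := norm_nonneg q.2
  have hb := norm_nonneg (-(D q.1 q.2) - Q q.1 (gradient Φ q.1))
  have hz : q.2 = 0 := norm_eq_zero.1 (by linarith)
  have hw : -(D q.1 q.2) - Q q.1 (gradient Φ q.1) = 0 := norm_eq_zero.1 (by linarith)
  apply Metric.infDist_zero_of_mem
  refine ⟨hz, ?_⟩
  by_contra hne
  have h1 := hQ_pos q.1 _ hne
  rw [hz, map_zero, neg_zero, zero_sub, neg_eq_zero] at hw
  rw [hw, inner_zero_left] at h1
  exact lt_irrefl _ h1
end
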